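/- arXiv:2407.11932 — 3 statements merged into one kernel-verified Lean document; each statement's English description precedes it below -/
import Mathlib

section
/- For every constant c > 0 there is a constant D = D(c) > 0 with the following property. Let n, d be positive integers and p ∈ (0, 1). On a probability space, let Z be a random n×d real matrix with i.i.d. N(0, 1/d) entries, let X := Z Zᵀ, let U be a random variable independent of Z, let A := F(Z, U) be a measurable function of (Z, U) taking values in symmetric {0,1}-valued n×n matrices with zero diagonal (the adjacency matrix of a graph on n vertices) such that the average edge density satisfies Σ_{1 ≤ i < j ≤ n} E[A_{ij}] = (n choose 2)·p, and let X̂ := f(A) for a measurable function f valued in n×n real matrices. If d ≥ c · n · h(p), then E[L(X, X̂)] ≥ D. -/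
open MeasureTheory ProbabilityTheory Matrix

noncomputable section

/-- Matrices form a measurable space via the product σ-algebra on functions. -/
instance matrixMeasurableSpace {m n α : Type*} [MeasurableSpace α] :
    MeasurableSpace (Matrix m n α) :=
  inferInstanceAs (MeasurableSpace (m → n → α))

open Classical in
/-- Kullback–Leibler divergence `KL(μ ‖ ν)`, valued in extended reals:
`∫ log (dμ/dν) dμ` when `μ ≪ ν` and the log-likelihood ratio is integrable, `⊤` otherwise. -/
def klDiv {α : Type*} [MeasurableSpace α] (μ ν : Measure α) : EReal :=
  if μ ≪ ν ∧ Integrable (llr μ ν) μ then ((∫ x, llr μ ν x ∂μ : ℝ) : EReal) else ⊤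

/-- Mutual information of a coupling: KL divergence to the product of its marginals. -/
def mutualInfo {α β : Type*} [MeasurableSpace α] [MeasurableSpace β]
    (ρ : Measure (α × β)) : EReal :=
  klDiv ρ (ρ.fst.prod ρ.snd)

/-- Law of an `n × d` random matrix with i.i.d. `N(0, 1/d)` entries. -/
def gaussianMatrix (n d : ℕ) : Measure (Matrix (Fin n) (Fin d) ℝ) :=
  Measure.pi fun _ : Fin n => Measure.pi fun _ : Fin d => gaussianReal 0 (d : NNReal)⁻¹

/-- Law of the normalized Wishart matrix `X = Z Zᵀ` with `Z` an i.i.d. `N(0,1/d)` matrix. -/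
def wishartLaw (n d : ℕ) : Measure (Matrix (Fin n) (Fin n) ℝ) :=
  (gaussianMatrix n d).map fun Z => Z * Zᵀ

/-- Squared Frobenius distance `‖A − B‖_F²`. -/
def frobSq {n m : ℕ} (A B : Matrix (Fin n) (Fin m) ℝ) : ℝ :=
  ∑ i, ∑ j, (A i j - B i j) ^ 2

/-- The loss `L(X, X̂) = (d/(n(n+1))) ‖X − X̂‖_F²`. -/
def lossL (n d : ℕ) (X Y : Matrix (Fin n) (Fin n) ℝ) : ℝ :=
  (d / (n * (n + 1))) * frobSq X Y

/-- The loss `ℓ(Z, Ẑ) = (1/n) inf_{O ∈ O(d)} ‖Z − Ẑ O‖_F²`. -/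
def lossEll (n d : ℕ) (A B : Matrix (Fin n) (Fin d) ℝ) : ℝ :=
  (1 / n) * ⨅ O ∈ Matrix.orthogonalGroup (Fin d) ℝ, frobSq A (B * O)

/-- Standard Gaussian on `ℝ^d`. -/
def stdGaussianPi (d : ℕ) : Measure (Fin d → ℝ) :=
  Measure.pi fun _ : Fin d => gaussianReal 0 1

/-- The uniform (normalized rotation-invariant) probability measure on the unit sphere
`S^{d-1} ⊆ ℝ^d`, realized as the pushforward of the standard Gaussian under
radial normalization `x ↦ x / ‖x‖₂`. -/
def sphereUniform (d : ℕ) : Measure (Fin d → ℝ) :=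
  (stdGaussianPi d).map fun x => (Real.sqrt (∑ j, x j ^ 2))⁻¹ • x

/-- Law of an `n × d` random matrix with i.i.d. rows uniform on the unit sphere. -/
def sphereMatrix (n d : ℕ) : Measure (Matrix (Fin n) (Fin d) ℝ) :=
  Measure.pi fun _ : Fin n => sphereUniform d

/-- Law of `X = Z Zᵀ` with the rows of `Z` i.i.d. uniform on the unit sphere. -/
def sphereWishartLaw (n d : ℕ) : Measure (Matrix (Fin n) (Fin n) ℝ) :=
  (sphereMatrix n d).map fun Z => Z * Zᵀ

lemma gauss_moment4 (v : NNReal) : ∫ x, x ^ 4 ∂(gaussianReal 0 v) = 3 * (v:ℝ) ^ 2 := by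
  have h := iteratedDeriv_mgf_zero (X := id) (μ := gaussianReal 0 v) (by simp) 4
  simp only [id, Pi.pow_apply] at h
  have h' : ∫ x, x ^ 4 ∂(gaussianReal 0 v) = iteratedDeriv 4 (mgf id (gaussianReal 0 v)) 0 := by
    rw [h]
  rw [h', mgf_id_gaussianReal]
  generalize (v : ℝ) = w
  have hp : ∀ α β γ δ t : ℝ, HasDerivAt (fun t : ℝ => α + β * t + γ * t ^ 2 + δ * t ^ 3)
      (β + 2 * γ * t + 3 * δ * t ^ 2) t := by
    intro α β γ δ t
    have h1 : HasDerivAt (fun t : ℝ => β * t) (β * 1) t := (hasDerivAt_id' t).const_mul β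
    have h2 : HasDerivAt (fun t : ℝ => γ * t ^ 2) (γ * (2 * t)) t := by
      simpa using (hasDerivAt_pow 2 t).const_mul γ
    have h3 : HasDerivAt (fun t : ℝ => δ * t ^ 3) (δ * (3 * t ^ 2)) t := by
      simpa using (hasDerivAt_pow 3 t).const_mul δ
    have := ((h1.const_add α).fun_add h2).fun_add h3
    exact this.congr_deriv (by ring)
  have hb : ∀ t : ℝ, HasDerivAt (fun t : ℝ => Real.exp (0 * t + w * t ^ 2 / 2)) (w * t * Real.exp (0 * t + w * t ^ 2 / 2)) t := by
    intro t
    have h0 : HasDerivAt (fun t : ℝ => 0 * t + w * t ^ 2 / 2) (w * t) t := by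
      have h1 := hp 0 0 (w/2) 0 t
      have e : (fun t : ℝ => 0 * t + w * t ^ 2 / 2) = (fun t : ℝ => 0 + 0 * t + (w/2) * t ^ 2 + 0 * t ^ 3) := by
        funext t; ring
      rw [e]
      exact h1.congr_deriv (by ring)
    exact h0.exp.congr_deriv (by ring)
  have key : ∀ (α β γ δ : ℝ),
      deriv (fun t => (α + β * t + γ * t ^ 2 + δ * t ^ 3) * Real.exp (0 * t + w * t ^ 2 / 2)) = fun t => ((β + 2 * γ * t + 3 * δ * t ^ 2) + (α + β * t + γ * t ^ 2 + δ * t ^ 3) * (w * t)) * Real.exp (0 * t + w * t ^ 2 / 2) := by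
    intro α β γ δ
    funext t
    rw [((hp α β γ δ t).fun_mul (hb t)).deriv]
    ring
  rw [iteratedDeriv_succ', iteratedDeriv_succ', iteratedDeriv_succ', iteratedDeriv_succ', iteratedDeriv_zero]
  have d1 : deriv (fun t : ℝ => Real.exp (0 * t + w * t ^ 2 / 2)) = fun t => (0 + w * t + 0 * t ^ 2 + 0 * t ^ 3) * Real.exp (0 * t + w * t ^ 2 / 2) := by
    funext t; rw [(hb t).deriv]; ring
  have d2 : deriv (fun t : ℝ => (0 + w * t + 0 * t ^ 2 + 0 * t ^ 3) * Real.exp (0 * t + w * t ^ 2 / 2)) = fun t => (w + 0 * t + w ^ 2 * t ^ 2 + 0 * t ^ 3) * Real.exp (0 * t + w * t ^ 2 / 2) := by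
    rw [key]; funext t; ring
  have d3 : deriv (fun t : ℝ => (w + 0 * t + w ^ 2 * t ^ 2 + 0 * t ^ 3) * Real.exp (0 * t + w * t ^ 2 / 2)) = fun t => (0 + 3 * w ^ 2 * t + 0 * t ^ 2 + w ^ 3 * t ^ 3) * Real.exp (0 * t + w * t ^ 2 / 2) := by
    rw [key]; funext t; ring
  rw [d1, d2, d3, key]
  simp

lemma gauss_moment2 (v : NNReal) : ∫ x, x ^ 2 ∂(gaussianReal 0 v) = (v:ℝ) := by
  have := variance_id_gaussianReal (μ := 0) (v := v)
  rw [variance_eq_sub (memLp_id_gaussianReal' 2 (by simp))] at this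
  simpa using this

lemma gauss_int_pow (v : NNReal) (k : ℕ) : Integrable (fun x => x ^ k) (gaussianReal 0 v) :=
  (memLp_id_gaussianReal' (k : ENNReal) (by simp)).integrable_norm_pow' |>.mono (by fun_prop) (by simp)

lemma pi_gauss_withDensity (d : ℕ) (v : NNReal) (hv : v ≠ 0) :
    (Measure.pi fun _ : Fin d => gaussianReal 0 v) =
      (volume : Measure (Fin d → ℝ)).withDensity
        (fun x => ENNReal.ofReal (∏ i, gaussianPDFReal 0 v (x i))) := by
  symm
  have hIntg : Integrable (fun x : Fin d → ℝ => ∏ i, gaussianPDFReal 0 v (x i)) :=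
    Integrable.fintype_prod (μ := fun _ => volume) (fun _ => integrable_gaussianPDFReal 0 v)
  refine (Measure.pi_eq ?_).symm
  intro s hs
  rw [withDensity_apply _ (MeasurableSet.univ_pi hs), ← ofReal_integral_eq_lintegral_ofReal
    hIntg.integrableOn (ae_of_all _ fun x => Finset.prod_nonneg fun i _ => gaussianPDFReal_nonneg _ _ _)]
  rw [← integral_indicator (MeasurableSet.univ_pi hs)]
  have : ∀ x : Fin d → ℝ, (Set.univ.pi s).indicator (fun x : Fin d → ℝ => ∏ i, gaussianPDFReal 0 v (x i)) x
      = ∏ i, (s i).indicator (gaussianPDFReal 0 v) (x i) := by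
    intro x
    by_cases hx : x ∈ Set.univ.pi s
    · rw [Set.indicator_of_mem hx]
      exact Finset.prod_congr rfl fun i _ => by rw [Set.indicator_of_mem (hx i (Set.mem_univ i))]
    · rw [Set.indicator_of_notMem hx]
      simp only [Set.mem_univ_pi, not_forall] at hx
      obtain ⟨i, hi⟩ := hx
      exact (Finset.prod_eq_zero (Finset.mem_univ i) (by rw [Set.indicator_of_notMem hi])).symm
  simp_rw [this]
  rw [integral_fintype_prod_volume_eq_prod, ENNReal.ofReal_prod_of_nonneg]
  · refine Finset.prod_congr rfl fun i _ => ?_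
    rw [integral_indicator (hs i), gaussianReal_apply_eq_integral _ hv]
  · intro i _
    exact integral_nonneg fun x => Set.indicator_nonneg (fun y _ => gaussianPDFReal_nonneg _ _ _) _
open Matrix in
lemma logdet_aux {K : Type*} [Fintype K] [DecidableEq K] (G : Matrix K K ℝ) (hG : G.PosSemidef)
    (a τ : ℝ) (ha : 0 < a) (hτ : 0 < τ) :
    Real.exp (Real.log (1 + a * τ) * (G.trace / τ - (G * G).trace / (4 * τ ^ 2)))
      ≤ (1 + a • G).det := by
  set g := hG.isHermitian.eigenvalues with hg
  have hg0 : ∀ i, 0 ≤ g i := fun i => hG.eigenvalues_nonneg i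
  have hsp := hG.isHermitian.spectral_theorem
  set φ := Unitary.conjStarAlgAut ℝ (Matrix K K ℝ) hG.isHermitian.eigenvectorUnitary with hφ
  have hsp' : G = φ (diagonal g) := hsp
  have hu : star (hG.isHermitian.eigenvectorUnitary : Matrix K K ℝ) * (hG.isHermitian.eigenvectorUnitary : Matrix K K ℝ) = 1 :=
    Unitary.coe_star_mul_self _
  have htr : ∀ X : Matrix K K ℝ, (φ X).trace = X.trace := by
    intro X
    rw [hφ, Unitary.conjStarAlgAut_apply, Matrix.trace_mul_comm, ← mul_assoc, hu, one_mul]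
  have hdet : ∀ X : Matrix K K ℝ, (φ X).det = X.det := by
    intro X
    rw [hφ, Unitary.conjStarAlgAut_apply, Matrix.det_mul_comm, ← mul_assoc, hu, one_mul]
  have h1 : G.trace = ∑ i, g i := by
    conv_lhs => rw [hsp', htr, Matrix.trace_diagonal]
  have h2 : (G * G).trace = ∑ i, g i ^ 2 := by
    conv_lhs => rw [hsp', ← map_mul, htr, Matrix.diagonal_mul_diagonal, Matrix.trace_diagonal]
    simp [pow_two]
  have h3 : (1 + a • G).det = ∏ i, (1 + a * g i) := by
    have : 1 + a • G = φ (1 + a • diagonal g) := by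
      conv_lhs => rw [hsp']
      simp [map_add, map_smul]
    rw [this, hdet, ← Matrix.diagonal_one, ← Matrix.diagonal_smul, Matrix.diagonal_add,
      Matrix.det_diagonal]
    simp
  rw [h1, h2, h3, Finset.sum_div, Finset.sum_div, ← Finset.sum_sub_distrib, Finset.mul_sum,
    Real.exp_sum]
  apply Finset.prod_le_prod
  · intro i _; positivity
  intro i _
  have hpos : 0 < 1 + a * g i := by have := hg0 i; positivity
  rw [← Real.le_log_iff_exp_le hpos]
  set x := g i
  have hx : 0 ≤ x := hg0 i
  have hl : 0 ≤ Real.log (1 + a * τ) := Real.log_nonneg (by nlinarith [mul_pos ha hτ])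
  obtain ⟨u, hu⟩ : ∃ u, u = x / τ := ⟨_, rfl⟩
  have hxu : x = u * τ := by rw [hu]; field_simp
  have hu0 : 0 ≤ u := by rw [hu]; positivity
  have e : x / τ - x ^ 2 / (4 * τ ^ 2) = u - u ^ 2 / 4 := by rw [hxu]; field_simp
  rw [e]
  rcases le_total u 1 with h | h
  · have hc := strictConcaveOn_log_Ioi.concaveOn.2 (show (1:ℝ) ∈ Set.Ioi 0 by simp)
      (show 1 + a * τ ∈ Set.Ioi 0 from Set.mem_Ioi.2 (by positivity)) (show 0 ≤ 1 - u by linarith) hu0 (by ring)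
    simp only [smul_eq_mul, Real.log_one, mul_zero, zero_add, mul_one] at hc
    have : 1 - u + u * (1 + a * τ) = 1 + a * x := by rw [hxu]; ring
    rw [this] at hc
    nlinarith [mul_nonneg hl (sq_nonneg u)]
  · have : Real.log (1 + a * τ) ≤ Real.log (1 + a * x) := by
      apply Real.log_le_log (by positivity)
      rw [hxu]
      nlinarith [mul_pos ha hτ, mul_nonneg (mul_pos ha hτ).le (sub_nonneg.2 h)]
    nlinarith [mul_nonneg hl (sq_nonneg (u - 2))]

open Matrix in
open scoped MatrixOrder Matrix.Norms.L2Operator in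
lemma quad_aux {J K : Type*} [Fintype J] [Fintype K] [DecidableEq K] (B : Matrix J K ℝ) (m : J → ℝ)
    (a : ℝ) (ha : 0 < a) :
    ∃ (R : Matrix K K ℝ) (z0 : K → ℝ), R.det ^ 2 = (1 + a • (Bᵀ * B)).det ∧ 0 < (1 + a • (Bᵀ * B)).det ∧
      ∀ z, (R *ᵥ (z - z0)) ⬝ᵥ (R *ᵥ (z - z0)) ≤ z ⬝ᵥ z + a * ((B *ᵥ z - m) ⬝ᵥ (B *ᵥ z - m)) := by
  have hBB : (Bᵀ * B).PosSemidef := by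
    simpa using Matrix.posSemidef_conjTranspose_mul_self B
  have hS : (1 + a • (Bᵀ * B)).PosDef := Matrix.PosDef.one.add_posSemidef (hBB.smul ha.le)
  have hdet := hS.det_pos
  obtain ⟨R, hR⟩ := CStarAlgebra.nonneg_iff_eq_star_mul_self.mp hS.posSemidef.nonneg
  rw [Matrix.star_eq_conjTranspose, Matrix.conjTranspose_eq_transpose_of_trivial] at hR
  set S := 1 + a • (Bᵀ * B) with hSdef
  refine ⟨R, S⁻¹ *ᵥ (a • (Bᵀ *ᵥ m)), ?_, hdet, ?_⟩
  · rw [hR, Matrix.det_mul, Matrix.det_transpose]; ring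
  intro z
  set z0 := S⁻¹ *ᵥ (a • (Bᵀ *ᵥ m)) with hz0
  have hSz0 : S *ᵥ z0 = a • (Bᵀ *ᵥ m) := by
    rw [hz0, Matrix.mulVec_mulVec, Matrix.mul_nonsing_inv _ (isUnit_iff_ne_zero.2 hdet.ne'), Matrix.one_mulVec]
  clear_value z0
  have hT : ∀ (x : K → ℝ) (y : J → ℝ), x ⬝ᵥ (Bᵀ *ᵥ y) = (B *ᵥ x) ⬝ᵥ y := by
    intro x y
    rw [Matrix.dotProduct_mulVec, Matrix.vecMul_transpose]
  obtain ⟨w, rfl⟩ : ∃ w, z = w + z0 := ⟨z - z0, by simp⟩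
  rw [add_sub_cancel_right]
  have e1 : (R *ᵥ w) ⬝ᵥ (R *ᵥ w) = w ⬝ᵥ w + a * ((B *ᵥ w) ⬝ᵥ (B *ᵥ w)) := by
    have h1 : (R *ᵥ w) ⬝ᵥ (R *ᵥ w) = w ⬝ᵥ (S *ᵥ w) := by
      rw [hR, ← Matrix.mulVec_mulVec, Matrix.dotProduct_mulVec w, Matrix.vecMul_transpose]
    rw [h1, hSdef, Matrix.add_mulVec, Matrix.one_mulVec, dotProduct_add, Matrix.smul_mulVec,
      dotProduct_smul, ← Matrix.mulVec_mulVec, Matrix.dotProduct_mulVec w, Matrix.vecMul_transpose, smul_eq_mul]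
  have e2 : w ⬝ᵥ z0 + a * ((B *ᵥ w) ⬝ᵥ (B *ᵥ z0 - m)) = 0 := by
    have : w ⬝ᵥ (S *ᵥ z0) = w ⬝ᵥ (a • (Bᵀ *ᵥ m)) := by rw [hSz0]
    rw [hSdef, Matrix.add_mulVec, Matrix.one_mulVec, dotProduct_add, Matrix.smul_mulVec,
      dotProduct_smul, ← Matrix.mulVec_mulVec, hT, smul_eq_mul,
      dotProduct_smul, hT, smul_eq_mul] at this
    rw [dotProduct_sub]; linarith
  have e3 : B *ᵥ (w + z0) - m = B *ᵥ w + (B *ᵥ z0 - m) := by rw [Matrix.mulVec_add]; abel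
  rw [e1, e3]
  set r := B *ᵥ z0 - m
  set s := B *ᵥ w
  simp only [add_dotProduct, dotProduct_add]
  rw [dotProduct_comm z0 w, dotProduct_comm r s]
  have p1 : 0 ≤ z0 ⬝ᵥ z0 := by simpa using dotProduct_star_self_nonneg z0
  have p2 : 0 ≤ r ⬝ᵥ r := by simpa using dotProduct_star_self_nonneg r
  nlinarith [mul_nonneg ha.le p2]

open Matrix in
lemma row_aux {J : Type*} [Fintype J] (d : ℕ) (v : NNReal) (hv : v ≠ 0) (B : Matrix J (Fin d) ℝ)
    (m : J → ℝ) (lam : ℝ) (hlam : 0 < lam) :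
    ∫ z, Real.exp (-(lam * ∑ j, (∑ k, B j k * z k - m j) ^ 2)) ∂(Measure.pi fun _ : Fin d => gaussianReal 0 v)
      ≤ (Real.sqrt (1 + (2 * lam * v) • (Bᵀ * B)).det)⁻¹ := by
  have hvr : (0:ℝ) < v := by positivity
  have ha : 0 < 2 * lam * v := by positivity
  obtain ⟨R, z0, hR, hpos, hq⟩ := quad_aux B m (2 * lam * v) ha
  have hsq : Real.sqrt (1 + (2 * lam * v) • (Bᵀ * B)).det = |R.det| := by
    rw [← hR, Real.sqrt_sq_eq_abs]
  have hRdet : R.det ≠ 0 := by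
    intro h; rw [h] at hR; simp at hR; exact hpos.ne hR
  rw [hsq]
  set g : (Fin d → ℝ) → ℝ := fun x => ∏ i, gaussianPDFReal 0 v (x i) with hg
  have hgm : Measurable g := by
    apply Finset.measurable_fun_prod
    intro i _
    exact (measurable_gaussianPDFReal 0 v).comp (measurable_pi_apply i)
  have hg0 : ∀ x, 0 ≤ g x := fun x => Finset.prod_nonneg fun i _ => gaussianPDFReal_nonneg _ _ _
  have hgint : Integrable g :=
    Integrable.fintype_prod (μ := fun _ => volume) (fun _ => integrable_gaussianPDFReal 0 v)
  have hgone : ∫ x, g x = 1 := by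
    rw [hg, integral_fintype_prod_volume_eq_prod]
    simp [integral_gaussianPDFReal_eq_one 0 hv]
  have hmap := Real.map_matrix_volume_pi_eq_smul_volume_pi hRdet
  have hLm : Measurable (toLin' R : (Fin d → ℝ) → (Fin d → ℝ)) := by
    exact (toLin' R).continuous_of_finiteDimensional.measurable
  have hgi2 : Integrable (fun z => g (toLin' R z)) := by
    have : Integrable g (Measure.map (toLin' R) volume) := by
      rw [hmap]; exact hgint.smul_measure (by simp)
    exact this.comp_measurable hLm
  have hgI : ∫ z, g (toLin' R z) = |R.det|⁻¹ := by
    rw [← integral_map hLm.aemeasurable hgm.aestronglyMeasurable, hmap, integral_smul_measure, hgone]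
    simp [abs_inv]
  rw [pi_gauss_withDensity d v hv, integral_withDensity_eq_integral_toReal_smul
    (hgm.ennreal_ofReal) (by simp)]
  have hgform : ∀ x, g x = (√(2 * Real.pi * v))⁻¹ ^ d * Real.exp (-(x ⬝ᵥ x) / (2 * v)) := by
    intro x
    simp only [hg, gaussianPDFReal, Finset.prod_mul_distrib, Finset.prod_const, Finset.card_univ, Fintype.card_fin,
      ← Real.exp_sum, sub_zero]
    congr 2
    simp only [dotProduct, ← Finset.sum_neg_distrib, Finset.sum_div]
    exact Finset.sum_congr rfl fun i _ => by ring
  calc _ = ∫ z, g z * Real.exp (-(lam * ∑ j, (∑ k, B j k * z k - m j) ^ 2)) := by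
        refine integral_congr_ae (ae_of_all _ fun z => ?_)
        simp only [smul_eq_mul]
        rw [ENNReal.toReal_ofReal (hg0 z)]
    _ ≤ ∫ z, g (toLin' R (z - z0)) := by
        apply integral_mono_of_nonneg
        · exact ae_of_all _ fun z => mul_nonneg (hg0 z) (Real.exp_pos _).le
        · exact hgi2.comp_sub_right z0
        · refine ae_of_all _ fun z => ?_
          simp only
          rw [hgform, hgform, mul_assoc, ← Real.exp_add]
          apply mul_le_mul_of_nonneg_left _ (by positivity)
          apply Real.exp_le_exp.2
          have := hq z
          rw [toLin'_apply]
          have e : (B *ᵥ z - m) ⬝ᵥ (B *ᵥ z - m) = ∑ j, (∑ k, B j k * z k - m j) ^ 2 := by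
            simp [dotProduct, mulVec, pow_two]
          rw [e] at this
          rw [div_add' _ _ _ (by positivity), div_le_div_iff_of_pos_right (by positivity)]
          nlinarith
    _ = _ := by rw [integral_sub_right_eq_self (fun z => g (toLin' R z)) z0, hgI]

/-- sum of squares -/
noncomputable def trS {J : Type*} [Fintype J] {d : ℕ} (B : J → Fin d → ℝ) : ℝ := ∑ j, ∑ k, B j k ^ 2
/-- squared Frobenius norm of the Gram matrix -/
noncomputable def frS {J : Type*} [Fintype J] {d : ℕ} (B : J → Fin d → ℝ) : ℝ :=
  ∑ j, ∑ j', (∑ k, B j k * B j' k) ^ 2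
/-- the rank proxy -/
noncomputable def Vf {J : Type*} [Fintype J] {d : ℕ} (τ : ℝ) (B : J → Fin d → ℝ) : ℝ :=
  trS B / τ - frS B / (4 * τ ^ 2)

lemma frS_swap {J : Type*} [Fintype J] {d : ℕ} (B : J → Fin d → ℝ) :
    frS B = ∑ k, ∑ l, (∑ j, B j k * B j l) ^ 2 := by
  unfold frS
  have h1 : ∀ j j', (∑ k, B j k * B j' k) ^ 2 = ∑ k, ∑ l, B j k * B j' k * (B j l * B j' l) := by
    intro j j'; rw [pow_two, Finset.sum_mul_sum]
  have h2 : ∀ k l, (∑ j, B j k * B j l) ^ 2 = ∑ j, ∑ j', B j k * B j l * (B j' k * B j' l) := by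
    intro j j'; rw [pow_two, Finset.sum_mul_sum]
  simp_rw [h1, h2]
  have : ∀ j : J, ∑ j', ∑ k, ∑ l, B j k * B j' k * (B j l * B j' l) = ∑ k, ∑ l, ∑ j', B j k * B j l * (B j' k * B j' l) := by
    intro j
    rw [Finset.sum_comm]
    refine Finset.sum_congr rfl fun k _ => ?_
    rw [Finset.sum_comm]
    exact Finset.sum_congr rfl fun l _ => Finset.sum_congr rfl fun j' _ => by ring
  simp_rw [this]
  rw [Finset.sum_comm]
  refine Finset.sum_congr rfl fun k _ => ?_
  rw [Finset.sum_comm]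

lemma diag_le {K J : Type*} [Fintype K] [Fintype J] (B : J → K → ℝ) :
    (∑ j, ∑ k, B j k ^ 2) ^ 2 ≤ Fintype.card J * ∑ j, ∑ j', (∑ k, B j k * B j' k) ^ 2 := by
  have h := sq_sum_le_card_mul_sum_sq (s := (Finset.univ : Finset J)) (f := fun j => ∑ k, B j k ^ 2)
  refine h.trans ?_
  apply mul_le_mul_of_nonneg_left _ (by positivity)
  refine Finset.sum_le_sum fun j _ => ?_
  have : (∑ k, B j k ^ 2) ^ 2 = (∑ k, B j k * B j k) ^ 2 := by simp_rw [pow_two]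
  rw [this]
  exact Finset.single_le_sum (f := fun j' => (∑ k, B j k * B j' k) ^ 2) (fun _ _ => sq_nonneg _) (Finset.mem_univ j)

lemma Vf_le_of {J : Type*} [Fintype J] {d : ℕ} (τ κ : ℝ) (hτ : 0 < τ) (B : J → Fin d → ℝ) (hκ : 0 < κ)
    (h : trS B ^ 2 ≤ κ * frS B) : Vf τ B ≤ κ := by
  unfold Vf
  obtain ⟨x, hx⟩ : ∃ x, x = trS B / τ := ⟨_, rfl⟩
  have h1 : x ^ 2 / (4 * κ) ≤ frS B / (4 * τ ^ 2) := by
    rw [hx, div_pow, div_div, div_le_div_iff₀ (by positivity) (by positivity)]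
    nlinarith [mul_le_mul_of_nonneg_right h (sq_nonneg τ)]
  rw [← hx]
  have h2 : x ≤ κ + x ^ 2 / (4 * κ) := by
    rw [← sub_nonneg]
    have : κ + x ^ 2 / (4 * κ) - x = (2 * κ - x) ^ 2 / (4 * κ) := by field_simp; ring
    rw [this]; positivity
  linarith

lemma Vf_le_card {J : Type*} [Fintype J] [Nonempty J] {d : ℕ} (τ : ℝ) (hτ : 0 < τ) (B : J → Fin d → ℝ) :
    Vf τ B ≤ Fintype.card J :=
  Vf_le_of τ _ hτ B (by exact_mod_cast Fintype.card_pos) (diag_le B)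

lemma Vf_le_d {J : Type*} [Fintype J] {d : ℕ} (hd : 0 < d) (τ : ℝ) (hτ : 0 < τ) (B : J → Fin d → ℝ) :
    Vf τ B ≤ d := by
  apply Vf_le_of τ _ hτ B (by exact_mod_cast hd)
  have := diag_le (fun k j => B j k)
  rw [frS_swap]
  rw [Fintype.card_fin] at this
  refine le_trans (le_of_eq ?_) this
  rw [trS, Finset.sum_comm]

open Matrix in
lemma row_V {J : Type*} [Fintype J] (d : ℕ) (v : NNReal) (hv : v ≠ 0) (B : J → Fin d → ℝ)
    (m : J → ℝ) (lam τ : ℝ) (hlam : 0 < lam) (hτ : 0 < τ) :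
    ∫ z, Real.exp (-(lam * ∑ j, (∑ k, B j k * z k - m j) ^ 2)) ∂(Measure.pi fun _ : Fin d => gaussianReal 0 v)
      ≤ Real.exp (-(Real.log (1 + 2 * lam * v * τ) * Vf τ B / 2)) := by
  have hvr : (0:ℝ) < v := by positivity
  refine (row_aux d v hv B m lam hlam).trans ?_
  have hBB : ((of B)ᵀ * (of B)).PosSemidef := by
    simpa using Matrix.posSemidef_conjTranspose_mul_self (of B)
  have h := logdet_aux ((of B)ᵀ * (of B)) hBB (2 * lam * v) τ (by positivity) hτ
  have e1 : ((of B)ᵀ * (of B)).trace = trS B := by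
    rw [trS, Finset.sum_comm]
    simp [trace, Matrix.mul_apply, pow_two]
  have e2 : ((of B)ᵀ * (of B) * ((of B)ᵀ * (of B))).trace = frS B := by
    rw [frS_swap]
    simp only [trace, Matrix.diag_apply, Matrix.mul_apply, transpose_apply, of_apply]
    refine Finset.sum_congr rfl fun k _ => Finset.sum_congr rfl fun l _ => ?_
    rw [pow_two]
    congr 1
    exact Finset.sum_congr rfl fun j _ => mul_comm _ _
  rw [e1, e2] at h
  change Real.exp (_ * Vf τ B) ≤ _ at h
  rw [Real.exp_neg]
  apply inv_anti₀ (Real.exp_pos _)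
  apply Real.le_sqrt_of_sq_le
  rw [← Real.exp_nat_mul]
  refine le_trans (le_of_eq ?_) h
  congr 1
  push_cast; ring

lemma measurable_frS {J : Type*} [Fintype J] {d : ℕ} : Measurable (frS : (J → Fin d → ℝ) → ℝ) := by
  unfold frS; fun_prop
lemma measurable_trS {J : Type*} [Fintype J] {d : ℕ} : Measurable (trS : (J → Fin d → ℝ) → ℝ) := by
  unfold trS; fun_prop
lemma measurable_Vf {J : Type*} [Fintype J] {d : ℕ} (τ : ℝ) : Measurable (Vf τ : (J → Fin d → ℝ) → ℝ) :=
  (measurable_trS.div_const _).sub (measurable_frS.div_const _)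

lemma block_aux {I J : Type*} [Fintype I] [Fintype J] [Nonempty J] (d : ℕ) (v : NNReal) (hv : v ≠ 0)
    (M : I → J → ℝ) (lam τ : ℝ) (hlam : 0 < lam) (hτ : 0 < τ) :
    let Φ : (I → Fin d → ℝ) × (J → Fin d → ℝ) → ℝ := fun q =>
      Real.exp (-(lam * ∑ i, ∑ j, (∑ k, q.2 j k * q.1 i k - M i j) ^ 2)) *
        Real.exp (Fintype.card I * (Real.log (1 + 2 * lam * v * τ) * Vf τ q.2 / 2))
    let P := ((Measure.pi fun _ : I => Measure.pi fun _ : Fin d => gaussianReal 0 v).prod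
        (Measure.pi fun _ : J => Measure.pi fun _ : Fin d => gaussianReal 0 v))
    Integrable Φ P ∧ ∫ q, Φ q ∂P ≤ 1 := by
  intro Φ P
  have hvr : (0:ℝ) < v := by positivity
  have hl : 0 ≤ Real.log (1 + 2 * lam * v * τ) := by
    apply Real.log_nonneg
    have : 0 < 2 * lam * v * τ := by positivity
    linarith
  set ℓ := Real.log (1 + 2 * lam * v * τ) with hℓ
  have hm : Measurable Φ := by
    have h1 : Measurable (fun q : (I → Fin d → ℝ) × (J → Fin d → ℝ) =>
      (∑ i, ∑ j, (∑ k, q.2 j k * q.1 i k - M i j) ^ 2)) := by fun_prop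
    have h2 : Measurable (fun q : (I → Fin d → ℝ) × (J → Fin d → ℝ) => Vf τ q.2) :=
      (measurable_Vf τ).comp measurable_snd
    exact (h1.const_mul lam).neg.exp.mul (((h2.const_mul ℓ).div_const 2).const_mul _).exp
  have hIntg : Integrable Φ P := by
    apply Integrable.of_bound hm.aestronglyMeasurable (Real.exp (Fintype.card I * (ℓ * Fintype.card J / 2)))
    refine ae_of_all _ fun q => ?_
    rw [Real.norm_eq_abs, abs_of_nonneg (by positivity)]
    calc _ ≤ 1 * Real.exp (Fintype.card I * (ℓ * Fintype.card J / 2)) := by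
          apply mul_le_mul _ _ (by positivity) (by norm_num)
          · apply Real.exp_le_one_iff.2
            have : 0 ≤ ∑ i, ∑ j, (∑ k, q.2 j k * q.1 i k - M i j) ^ 2 := by positivity
            nlinarith
          · apply Real.exp_le_exp.2
            have := Vf_le_card τ hτ q.2
            gcongr
      _ = _ := one_mul _
  refine ⟨hIntg, ?_⟩
  rw [integral_prod_symm _ hIntg]
  have hin : ∀ B : J → Fin d → ℝ, ∫ W, Φ (W, B) ∂(Measure.pi fun _ : I => Measure.pi fun _ : Fin d => gaussianReal 0 v) ≤ 1 := by
    intro B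
    simp only [Φ]
    rw [integral_mul_const]
    have : ∀ W : I → Fin d → ℝ, Real.exp (-(lam * ∑ i, ∑ j, (∑ k, B j k * W i k - M i j) ^ 2))
        = ∏ i, Real.exp (-(lam * ∑ j, (∑ k, B j k * W i k - M i j) ^ 2)) := by
      intro W
      rw [← Real.exp_sum, Finset.mul_sum, Finset.sum_neg_distrib]
    simp_rw [this]
    rw [integral_fintype_prod_eq_prod (fun i (z : Fin d → ℝ) => Real.exp (-(lam * ∑ j, (∑ k, B j k * z k - M i j) ^ 2)))]
    calc _ ≤ (∏ i : I, Real.exp (-(ℓ * Vf τ B / 2))) * Real.exp (Fintype.card I * (ℓ * Vf τ B / 2)) := by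
          apply mul_le_mul_of_nonneg_right _ (Real.exp_pos _).le
          apply Finset.prod_le_prod
          · intro i _; exact integral_nonneg fun z => (Real.exp_pos _).le
          · intro i _; exact row_V d v hv B (M i) lam τ hlam hτ
      _ = 1 := by
          rw [Finset.prod_const, ← Real.exp_nat_mul, ← Real.exp_add, Finset.card_univ]
          simp
  calc _ ≤ ∫ B, (1:ℝ) ∂(Measure.pi fun _ : J => Measure.pi fun _ : Fin d => gaussianReal 0 v) := by
        apply integral_mono_of_nonneg
        · exact ae_of_all _ fun B => integral_nonneg fun W => by positivity
        · exact integrable_const _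
        · exact ae_of_all _ hin
    _ = 1 := by simp

section moments
variable {J : Type*} [Fintype J] (d : ℕ) (v : NNReal)

lemma mp_entry (j : J) (k : Fin d) :
    MeasurePreserving (fun Z : J → Fin d → ℝ => Z j k)
      (Measure.pi fun _ : J => Measure.pi fun _ : Fin d => gaussianReal 0 v) (gaussianReal 0 v) :=
  (measurePreserving_eval (fun _ : Fin d => gaussianReal 0 v) k).comp
    (measurePreserving_eval (fun _ : J => Measure.pi fun _ : Fin d => gaussianReal 0 v) j)

lemma entry_int (j : J) (k : Fin d) (r : ℕ) :
    Integrable (fun Z : J → Fin d → ℝ => Z j k ^ r)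
      (Measure.pi fun _ : J => Measure.pi fun _ : Fin d => gaussianReal 0 v) :=
  (mp_entry d v j k).integrable_comp_of_integrable (gauss_int_pow v r)

lemma entry_integral (j : J) (k : Fin d) (r : ℕ) :
    ∫ Z : J → Fin d → ℝ, Z j k ^ r ∂(Measure.pi fun _ : J => Measure.pi fun _ : Fin d => gaussianReal 0 v)
      = ∫ x, x ^ r ∂(gaussianReal 0 v) := by
  conv_rhs => rw [← (mp_entry d v j k).map_eq, integral_map (mp_entry d v j k).measurable.aemeasurable
    (by fun_prop)]

lemma four_int (j j' : J) (k l : Fin d) :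
    Integrable (fun Z : J → Fin d → ℝ => Z j k * Z j' k * (Z j l * Z j' l))
      (Measure.pi fun _ : J => Measure.pi fun _ : Fin d => gaussianReal 0 v) := by
  refine Integrable.mono' ((((entry_int d v j k 4).add (entry_int d v j' k 4)).add (entry_int d v j l 4)).add
    (entry_int d v j' l 4)) (by fun_prop) (ae_of_all _ fun Z => ?_)
  simp only [Pi.add_apply, Real.norm_eq_abs]
  rw [abs_le]
  constructor <;>
  nlinarith [sq_nonneg (Z j k * Z j' k + Z j l * Z j' l), sq_nonneg (Z j k * Z j' k - Z j l * Z j' l),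
    sq_nonneg (Z j k ^ 2 - Z j' k ^ 2), sq_nonneg (Z j l ^ 2 - Z j' l ^ 2), sq_nonneg (Z j k ^ 2 ),
    sq_nonneg (Z j' k ^ 2 ), sq_nonneg (Z j l ^ 2 ), sq_nonneg (Z j' l ^ 2 )]

lemma sq_sq_le (j j' : J) (k l : Fin d) :
    ∫ Z : J → Fin d → ℝ, Z j k ^ 2 * Z j' l ^ 2 ∂(Measure.pi fun _ : J => Measure.pi fun _ : Fin d => gaussianReal 0 v)
      ≤ 3 * (v:ℝ) ^ 2 := by
  calc _ ≤ ∫ Z : J → Fin d → ℝ, (Z j k ^ 4 + Z j' l ^ 4) / 2 ∂(Measure.pi fun _ : J => Measure.pi fun _ : Fin d => gaussianReal 0 v) := by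
        apply integral_mono_of_nonneg
        · exact ae_of_all _ fun Z => by positivity
        · exact ((entry_int d v j k 4).add (entry_int d v j' l 4)).div_const 2
        · exact ae_of_all _ fun Z => by
            simp only
            nlinarith [sq_nonneg (Z j k ^ 2 - Z j' l ^ 2)]
    _ = _ := by
        rw [integral_div, integral_add (entry_int d v j k 4) (entry_int d v j' l 4), entry_integral, entry_integral,
          gauss_moment4]
        ring

lemma four_zero (j j' : J) (k l : Fin d) (hj : j ≠ j') (hk : k ≠ l) :
    ∫ Z : J → Fin d → ℝ, Z j k * Z j' k * (Z j l * Z j' l)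
      ∂(Measure.pi fun _ : J => Measure.pi fun _ : Fin d => gaussianReal 0 v) = 0 := by
  classical
  have hflip : ∀ (i : J) (r : Fin d), MeasurePreserving (fun x : ℝ => if i = j ∧ r = k then -x else x)
      (gaussianReal 0 v) (gaussianReal 0 v) := by
    intro i r
    by_cases h : i = j ∧ r = k
    · simp only [h, and_self, if_true]
      exact ⟨measurable_neg, by simpa using gaussianReal_map_neg (μ := 0) (v := v)⟩
    · simp only [h, if_false]
      exact MeasurePreserving.id _
  have hmp := measurePreserving_pi (fun _ : J => Measure.pi fun _ : Fin d => gaussianReal 0 v)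
    (fun _ : J => Measure.pi fun _ : Fin d => gaussianReal 0 v)
    (f := fun i (b : Fin d → ℝ) r => if i = j ∧ r = k then - b r else b r)
    (fun i => measurePreserving_pi (fun _ : Fin d => gaussianReal 0 v) (fun _ : Fin d => gaussianReal 0 v) (hflip i))
  have h := integral_map (μ := Measure.pi fun _ : J => Measure.pi fun _ : Fin d => gaussianReal 0 v)
    hmp.measurable.aemeasurable
    (f := fun Z : J → Fin d → ℝ => Z j k * Z j' k * (Z j l * Z j' l)) (by fun_prop)
  rw [hmp.map_eq] at h
  simp only [hj.symm, hk.symm, and_self, and_false, false_and, if_true, if_false] at h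
  have h2 : ∀ Z : J → Fin d → ℝ, -Z j k * Z j' k * (Z j l * Z j' l) = -(Z j k * Z j' k * (Z j l * Z j' l)) := by
    intro Z; ring
  simp_rw [h2] at h
  rw [integral_neg] at h
  linarith

lemma trS_integral : Integrable (trS : (J → Fin d → ℝ) → ℝ) (Measure.pi fun _ : J => Measure.pi fun _ : Fin d => gaussianReal 0 v)
    ∧ ∫ Z : J → Fin d → ℝ, trS Z ∂(Measure.pi fun _ : J => Measure.pi fun _ : Fin d => gaussianReal 0 v)
      = Fintype.card J * d * v := by
  unfold trS
  constructor
  · exact integrable_finsetSum _ fun j _ => integrable_finsetSum _ fun k _ => entry_int d v j k 2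
  · rw [integral_finsetSum _ fun j _ => integrable_finsetSum _ fun k _ => entry_int d v j k 2]
    simp_rw [integral_finsetSum _ fun k _ => entry_int d v _ k 2, entry_integral, gauss_moment2]
    simp; ring

lemma frS_integral : Integrable (frS : (J → Fin d → ℝ) → ℝ) (Measure.pi fun _ : J => Measure.pi fun _ : Fin d => gaussianReal 0 v)
    ∧ ∫ Z : J → Fin d → ℝ, frS Z ∂(Measure.pi fun _ : J => Measure.pi fun _ : Fin d => gaussianReal 0 v)
      ≤ 3 * (v:ℝ) ^ 2 * (Fintype.card J * d ^ 2 + (Fintype.card J : ℝ) ^ 2 * d) := by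
  classical
  have e : (frS : (J → Fin d → ℝ) → ℝ) = fun B => ∑ j, ∑ j', ∑ k, ∑ l, B j k * B j' k * (B j l * B j' l) := by
    funext B
    unfold frS
    refine Finset.sum_congr rfl fun j _ => Finset.sum_congr rfl fun j' _ => ?_
    rw [pow_two, Finset.sum_mul_sum]
  rw [e]
  have i1 := fun j j' k l => four_int (J := J) d v j j' k l
  have i2 := fun j j' k => integrable_finsetSum Finset.univ (fun l _ => i1 j j' k l)
  have i3 := fun j j' => integrable_finsetSum Finset.univ (fun k _ => i2 j j' k)
  have i4 := fun j => integrable_finsetSum Finset.univ (fun j' _ => i3 j j')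
  have i5 := integrable_finsetSum Finset.univ (fun j _ => i4 j)
  refine ⟨i5, ?_⟩
  rw [integral_finsetSum _ (fun j _ => i4 j)]
  simp_rw [integral_finsetSum _ (fun j' _ => i3 _ j'), integral_finsetSum _ (fun k _ => i2 _ _ k),
    integral_finsetSum _ (fun l _ => i1 _ _ _ l)]
  calc _ ≤ ∑ j : J, ∑ j' : J, ∑ k : Fin d, ∑ l : Fin d, 3 * (v:ℝ) ^ 2 * ((if j = j' then 1 else 0) + (if k = l then 1 else 0)) := by
        refine Finset.sum_le_sum fun j _ => Finset.sum_le_sum fun j' _ => Finset.sum_le_sum fun k _ =>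
          Finset.sum_le_sum fun l _ => ?_
        by_cases hj : j = j'
        · subst hj
          have h1 := sq_sq_le d v j j k l
          have h2 : ∀ Z : J → Fin d → ℝ, Z j k * Z j k * (Z j l * Z j l) = Z j k ^ 2 * Z j l ^ 2 := by intro Z; ring
          simp_rw [h2]
          refine h1.trans ?_
          apply le_mul_of_one_le_right (by positivity)
          split_ifs <;> norm_num
        · by_cases hk : k = l
          · subst hk
            have h1 := sq_sq_le d v j j' k k
            have h2 : ∀ Z : J → Fin d → ℝ, Z j k * Z j' k * (Z j k * Z j' k) = Z j k ^ 2 * Z j' k ^ 2 := by intro Z; ring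
            simp_rw [h2]
            refine h1.trans ?_
            apply le_mul_of_one_le_right (by positivity)
            split_ifs <;> norm_num
          · rw [four_zero d v j j' k l hj hk]
            simp [hj, hk]
    _ = _ := by
        simp_rw [← Finset.mul_sum, Finset.sum_add_distrib]
        simp
        left
        ring
end moments

lemma V_integral {J : Type*} [Fintype J] [Nonempty J] (d : ℕ) (hd : 0 < d) (κ : ℝ)
    (hκ : κ = min (Fintype.card J : ℝ) d) :
    Integrable (Vf (3 * Fintype.card J / κ) : (J → Fin d → ℝ) → ℝ)
      (Measure.pi fun _ : J => Measure.pi fun _ : Fin d => gaussianReal 0 (d : NNReal)⁻¹) ∧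
    κ / 6 ≤ ∫ B : J → Fin d → ℝ, Vf (3 * Fintype.card J / κ) B
      ∂(Measure.pi fun _ : J => Measure.pi fun _ : Fin d => gaussianReal 0 (d : NNReal)⁻¹) := by
  obtain ⟨t1, t2⟩ := trS_integral (J := J) d (d : NNReal)⁻¹
  obtain ⟨f1, f2⟩ := frS_integral (J := J) d (d : NNReal)⁻¹
  have hd' : (0:ℝ) < d := by exact_mod_cast hd
  have hm : (0:ℝ) < Fintype.card J := by exact_mod_cast Fintype.card_pos
  set m : ℝ := (Fintype.card J : ℝ) with hmdef
  have hκ0 : 0 < κ := by rw [hκ]; exact lt_min hm hd'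
  have hκm : κ ≤ m := by rw [hκ]; exact min_le_left _ _
  have hκd : κ ≤ d := by rw [hκ]; exact min_le_right _ _
  have hτ : 0 < 3 * m / κ := by positivity
  refine ⟨(t1.div_const _).sub (f1.div_const _), ?_⟩
  have : ∫ B : J → Fin d → ℝ, Vf (3 * m / κ) B
      ∂(Measure.pi fun _ : J => Measure.pi fun _ : Fin d => gaussianReal 0 (d : NNReal)⁻¹) = _ :=
    integral_sub (t1.div_const (3 * m / κ)) (f1.div_const (4 * (3 * m / κ) ^ 2))
  rw [this, integral_div, integral_div, t2]
  have hv : (((d : NNReal)⁻¹ : NNReal) : ℝ) = (d:ℝ)⁻¹ := by simp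
  rw [hv] at f2 ⊢
  have h1 : m * d * (d:ℝ)⁻¹ / (3 * m / κ) = κ / 3 := by field_simp
  have h2 : 3 * (d:ℝ)⁻¹ ^ 2 * (m * d ^ 2 + m ^ 2 * d) ≤ 6 * m ^ 2 / κ := by
    have e : 3 * (d:ℝ)⁻¹ ^ 2 * (m * d ^ 2 + m ^ 2 * d) = 3 * m + 3 * m ^ 2 / d := by field_simp
    rw [e]
    have a1 : 3 * m ≤ 3 * m ^ 2 / κ := by
      rw [le_div_iff₀ hκ0]; nlinarith
    have a2 : 3 * m ^ 2 / d ≤ 3 * m ^ 2 / κ := by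
      apply div_le_div_of_nonneg_left (by positivity) hκ0 hκd
    have : 6 * m ^ 2 / κ = 3 * m ^ 2 / κ + 3 * m ^ 2 / κ := by ring
    linarith
  have h3 := div_le_div_of_nonneg_right (f2.trans h2) (show 0 ≤ 4 * (3 * m / κ) ^ 2 by positivity)
  have h4 : 6 * m ^ 2 / κ / (4 * (3 * m / κ) ^ 2) = κ / 6 := by field_simp; norm_num
  rw [h1]
  linarith

lemma card_pairs (n : ℕ) : (Finset.univ.filter (fun e : Fin n × Fin n => e.1 < e.2)).card = n.choose 2 := by
  rw [Finset.card_filter, Fintype.sum_prod_type_right]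
  have : ∀ y : Fin n, ∑ x : Fin n, (if x < y then 1 else 0) = (y : ℕ) := by
    intro y
    rw [← Finset.card_filter]
    have := Fin.card_Iio y
    rw [← this]; congr 1; ext; simp
  simp only [this]
  rw [Fin.sum_univ_eq_sum_range (fun i => i) n, Finset.sum_range_id, Nat.choose_two_right]

/-- edges of a 0/1 matrix -/
noncomputable def edg {n : ℕ} (A : Fin n → Fin n → ℝ) : Finset (Fin n × Fin n) :=
  (Finset.univ.filter (fun e : Fin n × Fin n => e.1 < e.2)).filter (fun e => A e.1 e.2 = 1)

open Classical in
/-- adjacency matrix of an edge set -/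
noncomputable def adjm {n : ℕ} (S : Finset (Fin n × Fin n)) : Fin n → Fin n → ℝ :=
  fun i j => if (i, j) ∈ S ∨ (j, i) ∈ S then 1 else 0

lemma adjm_edg {n : ℕ} (A : Fin n → Fin n → ℝ) (h01 : ∀ i j, A i j = 0 ∨ A i j = 1)
    (hs : ∀ i j, A i j = A j i) (h0 : ∀ i, A i i = 0) : adjm (edg A) = A := by
  funext i j
  unfold adjm edg
  simp only [Finset.mem_filter, Finset.mem_univ, true_and]
  rcases lt_trichotomy i j with h | h | h
  · simp only [h, true_and, h.not_gt, false_and, or_false]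
    rcases h01 i j with e | e <;> simp [e]
  · subst h; simp [h0]
  · simp only [h, true_and, h.not_gt, false_and, false_or]
    rw [hs i j]
    rcases h01 j i with e | e <;> simp [e]

/-- negative log-likelihood -/
noncomputable def nll {n : ℕ} (p : ℝ) (A : Fin n → Fin n → ℝ) : ℝ :=
  ∑ e ∈ Finset.univ.filter (fun e : Fin n × Fin n => e.1 < e.2),
    (A e.1 e.2 * (-Real.log p) + (1 - A e.1 e.2) * (-Real.log (1 - p)))

lemma nll_nonneg {n : ℕ} (p : ℝ) (hp0 : 0 < p) (hp1 : p < 1) (A : Fin n → Fin n → ℝ)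
    (h01 : ∀ i j, A i j = 0 ∨ A i j = 1) : 0 ≤ nll p A := by
  apply Finset.sum_nonneg
  intro e _
  have h1 : Real.log p < 0 := Real.log_neg hp0 hp1
  have h2 : Real.log (1 - p) < 0 := Real.log_neg (by linarith) (by linarith)
  rcases h01 e.1 e.2 with h | h <;> rw [h] <;> nlinarith

/-- Bernoulli weight of an edge set -/
noncomputable def wgt (n : ℕ) (p : ℝ) (S : Finset (Fin n × Fin n)) : ℝ :=
  p ^ S.card * (1 - p) ^ ((Finset.univ.filter (fun e : Fin n × Fin n => e.1 < e.2)).card - S.card)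

lemma wgt_edg {n : ℕ} (p : ℝ) (hp0 : 0 < p) (hp1 : p < 1) (A : Fin n → Fin n → ℝ)
    (h01 : ∀ i j, A i j = 0 ∨ A i j = 1) : wgt n p (edg A) = Real.exp (- nll p A) := by
  unfold wgt nll
  rw [← Finset.sum_neg_distrib, Real.exp_sum]
  have : ∀ e : Fin n × Fin n, Real.exp (-(A e.1 e.2 * (-Real.log p) + (1 - A e.1 e.2) * (-Real.log (1 - p))))
      = if A e.1 e.2 = 1 then p else 1 - p := by
    intro e
    rcases h01 e.1 e.2 with h | h
    · simp [h, Real.exp_log (show 0 < 1 - p by linarith)]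
    · simp [h, Real.exp_log hp0]
  simp_rw [this]
  rw [Finset.prod_ite, Finset.prod_const, Finset.prod_const]
  unfold edg
  congr 2
  have := Finset.card_filter_add_card_filter_not (s := Finset.univ.filter (fun e : Fin n × Fin n => e.1 < e.2))
    (fun e => A e.1 e.2 = 1)
  omega

lemma wgt_sum (n : ℕ) (p : ℝ) :
    ∑ S ∈ (Finset.univ.filter (fun e : Fin n × Fin n => e.1 < e.2)).powerset, wgt n p S = 1 := by
  unfold wgt
  rw [Finset.sum_pow_mul_eq_add_pow]; simp

lemma wgt_nonneg (n : ℕ) (p : ℝ) (hp0 : 0 < p) (hp1 : p < 1) (S) : 0 ≤ wgt n p S := by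
  have : 0 < 1 - p := by linarith
  unfold wgt; positivity

/-- loss on plain functions -/
noncomputable def frobF {n d : ℕ} (Z : Fin n → Fin d → ℝ) (Y : Fin n → Fin n → ℝ) : ℝ :=
  ∑ i, ∑ j, (∑ k, Z i k * Z j k - Y i j) ^ 2

/-- the function in the small ball estimate -/
noncomputable def Phi (n d : ℕ) (lam τ ℓ : ℝ) (M : Fin n → Fin n → ℝ) (Z : Fin n → Fin d → ℝ) : ℝ :=
  Real.exp (-(lam * ∑ i : {i : Fin n // i.val < n / 2}, ∑ j : {i : Fin n // ¬ i.val < n / 2},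
    (∑ k, Z j k * Z i k - M i j) ^ 2)) *
  Real.exp (Fintype.card {i : Fin n // i.val < n / 2} * (ℓ * Vf τ (fun j : {i : Fin n // ¬ i.val < n / 2} => Z j) / 2))

lemma block_le_frob {n d : ℕ} (Z : Fin n → Fin d → ℝ) (M : Fin n → Fin n → ℝ) :
    ∑ i : {i : Fin n // i.val < n / 2}, ∑ j : {i : Fin n // ¬ i.val < n / 2},
      (∑ k, Z j k * Z i k - M i j) ^ 2 ≤ frobF Z M := by
  unfold frobF
  have h1 : ∀ g : Fin n → ℝ, (∀ i, 0 ≤ g i) → ∀ (P : Fin n → Prop) [DecidablePred P], ∑ i : {i : Fin n // P i}, g i ≤ ∑ i, g i := by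
    intro g hg P _
    rw [← Finset.sum_subtype (Finset.univ.filter P) (by simp) g]
    exact Finset.sum_le_sum_of_subset_of_nonneg (Finset.filter_subset _ _) fun i _ _ => hg i
  refine le_trans ?_ (h1 (fun i => ∑ j, (∑ k, Z i k * Z j k - M i j) ^ 2) (fun i => by positivity) (fun i => i.val < n / 2))
  refine Finset.sum_le_sum fun i _ => ?_
  refine le_trans (le_of_eq ?_) (h1 (fun j => (∑ k, Z i k * Z j k - M i j) ^ 2) (fun i => by positivity) (fun i => ¬ i.val < n / 2))
  refine Finset.sum_congr rfl fun j _ => ?_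
  congr 2
  exact Finset.sum_congr rfl fun k _ => mul_comm _ _

lemma Phi_integral (n d : ℕ) (hn : 0 < n) (hd : 0 < d) (lam τ : ℝ) (hlam : 0 < lam) (hτ : 0 < τ)
    (M : Fin n → Fin n → ℝ) :
    Integrable (Phi n d lam τ (Real.log (1 + 2 * lam * ((d : NNReal)⁻¹ : NNReal) * τ)) M)
      (Measure.pi fun _ : Fin n => Measure.pi fun _ : Fin d => gaussianReal 0 (d : NNReal)⁻¹) ∧
    ∫ Z, Phi n d lam τ (Real.log (1 + 2 * lam * ((d : NNReal)⁻¹ : NNReal) * τ)) M Z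
      ∂(Measure.pi fun _ : Fin n => Measure.pi fun _ : Fin d => gaussianReal 0 (d : NNReal)⁻¹) ≤ 1 := by
  have hv : (d : NNReal)⁻¹ ≠ 0 := by simp; omega
  haveI : Nonempty {i : Fin n // ¬ i.val < n / 2} := ⟨⟨⟨n - 1, by omega⟩, by simp; omega⟩⟩
  obtain ⟨h1, h2⟩ := block_aux (I := {i : Fin n // i.val < n / 2}) (J := {i : Fin n // ¬ i.val < n / 2})
    d (d : NNReal)⁻¹ hv (fun i j => M i j) lam τ hlam hτ
  have hmp := measurePreserving_piEquivPiSubtypeProd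
    (fun _ : Fin n => Measure.pi fun _ : Fin d => gaussianReal 0 (d : NNReal)⁻¹) (fun i : Fin n => i.val < n / 2)
  have h3 := hmp.integrable_comp_of_integrable h1
  have h4 := hmp.integral_comp' (g := fun q : ({i : Fin n // i.val < n / 2} → Fin d → ℝ) × ({i : Fin n // ¬ i.val < n / 2} → Fin d → ℝ) =>
      Real.exp (-(lam * ∑ i, ∑ j, (∑ k, q.2 j k * q.1 i k - M i j) ^ 2)) *
        Real.exp (Fintype.card {i : Fin n // i.val < n / 2} * (Real.log (1 + 2 * lam * ((d : NNReal)⁻¹ : NNReal) * τ) * Vf τ q.2 / 2)))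
  refine ⟨h3, ?_⟩
  rw [← h4] at h2
  exact h2

lemma VZ_integral (n d : ℕ) (hn : 0 < n) (hd : 0 < d) (κ : ℝ)
    (hκ : κ = min (Fintype.card {i : Fin n // ¬ i.val < n / 2} : ℝ) d) :
    Integrable (fun Z : Fin n → Fin d → ℝ => Vf (3 * Fintype.card {i : Fin n // ¬ i.val < n / 2} / κ) (fun j : {i : Fin n // ¬ i.val < n / 2} => Z j))
      (Measure.pi fun _ : Fin n => Measure.pi fun _ : Fin d => gaussianReal 0 (d : NNReal)⁻¹) ∧
    κ / 6 ≤ ∫ Z : Fin n → Fin d → ℝ, Vf (3 * Fintype.card {i : Fin n // ¬ i.val < n / 2} / κ) (fun j : {i : Fin n // ¬ i.val < n / 2} => Z j)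
      ∂(Measure.pi fun _ : Fin n => Measure.pi fun _ : Fin d => gaussianReal 0 (d : NNReal)⁻¹) := by
  haveI : Nonempty {i : Fin n // ¬ i.val < n / 2} := ⟨⟨⟨n - 1, by omega⟩, by simp; omega⟩⟩
  obtain ⟨h1, h2⟩ := V_integral (J := {i : Fin n // ¬ i.val < n / 2}) d hd κ hκ
  have hmp := measurePreserving_piEquivPiSubtypeProd
    (fun _ : Fin n => Measure.pi fun _ : Fin d => gaussianReal 0 (d : NNReal)⁻¹) (fun i : Fin n => i.val < n / 2)
  have hmp2 := (measurePreserving_snd (μ := (Measure.pi fun _ : {i : Fin n // i.val < n / 2} => Measure.pi fun _ : Fin d => gaussianReal 0 (d : NNReal)⁻¹))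
    (ν := (Measure.pi fun _ : {i : Fin n // ¬ i.val < n / 2} => Measure.pi fun _ : Fin d => gaussianReal 0 (d : NNReal)⁻¹))).comp hmp
  refine ⟨hmp2.integrable_comp_of_integrable h1, ?_⟩
  rw [← hmp2.map_eq, integral_map hmp2.measurable.aemeasurable (measurable_Vf _).aestronglyMeasurable] at h2
  exact h2

lemma ptwise (n d : ℕ) (p : ℝ) (hp0 : 0 < p) (hp1 : p < 1)
    (Z : Fin n → Fin d → ℝ) (A : Fin n → Fin n → ℝ) (f : (Fin n → Fin n → ℝ) → (Fin n → Fin n → ℝ))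
    (h01 : ∀ i j, A i j = 0 ∨ A i j = 1)
    (hs : ∀ i j, A i j = A j i) (h0 : ∀ i, A i i = 0)
    (lam τ ℓ T s κ : ℝ) (hlam : 0 < lam) (hT : 0 < T) (hs0 : 0 < s) (hκ : 0 < κ) (hℓ : 0 ≤ ℓ)
    (hV : Vf τ (fun j : {i : Fin n // ¬ i.val < n / 2} => Z j) ≤ κ) :
    Vf τ (fun j : {i : Fin n // ¬ i.val < n / 2} => Z j) / κ - 1 / 12 ≤
      frobF Z (f A) / s + nll p A / T +
      ∑ S ∈ (Finset.univ.filter (fun e : Fin n × Fin n => e.1 < e.2)).powerset,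
        wgt n p S * (Real.exp (T + lam * s - Fintype.card {i : Fin n // i.val < n / 2} * (ℓ * (κ / 12) / 2))
          * Phi n d lam τ ℓ (f (adjm S)) Z) := by
  set V := Vf τ (fun j : {i : Fin n // ¬ i.val < n / 2} => Z j) with hVd
  have hPn : ∀ M, 0 ≤ Phi n d lam τ ℓ M Z := fun M => by unfold Phi; positivity
  have hterm : ∀ S, 0 ≤ wgt n p S * (Real.exp (T + lam * s - Fintype.card {i : Fin n // i.val < n / 2} * (ℓ * (κ / 12) / 2))
          * Phi n d lam τ ℓ (f (adjm S)) Z) := fun S =>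
    mul_nonneg (wgt_nonneg n p hp0 hp1 S) (mul_nonneg (Real.exp_pos _).le (hPn _))
  have hsum := Finset.sum_nonneg (s := (Finset.univ.filter (fun e : Fin n × Fin n => e.1 < e.2)).powerset) (fun S _ => hterm S)
  have hfn : 0 ≤ frobF Z (f A) := by unfold frobF; positivity
  have h1 : 0 ≤ frobF Z (f A) / s := by positivity
  have hnn := nll_nonneg p hp0 hp1 A h01
  have h2 : 0 ≤ nll p A / T := by positivity
  have hV1 : V / κ ≤ 1 := by rw [div_le_one hκ]; exact hV
  by_cases c1 : V < κ / 12
  · have : V / κ < 1 / 12 := by rw [div_lt_iff₀ hκ]; linarith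
    linarith
  by_cases c2 : s ≤ frobF Z (f A)
  · have : 1 ≤ frobF Z (f A) / s := by rwa [one_le_div hs0]
    linarith
  by_cases c3 : T ≤ nll p A
  · have : 1 ≤ nll p A / T := by rwa [one_le_div hT]
    linarith
  push Not at c1 c2 c3
  have hmem : edg A ∈ (Finset.univ.filter (fun e : Fin n × Fin n => e.1 < e.2)).powerset := by
    rw [Finset.mem_powerset]; exact Finset.filter_subset _ _
  have hle := Finset.single_le_sum (fun S _ => hterm S) hmem
  rw [wgt_edg p hp0 hp1 A h01, adjm_edg A h01 hs h0] at hle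
  unfold Phi at hle
  rw [← Real.exp_add, ← Real.exp_add, ← Real.exp_add] at hle
  have hb := block_le_frob Z (f A)
  have h3 := mul_le_mul_of_nonneg_left (hb.trans c2.le) hlam.le
  have h4 : (Fintype.card {i : Fin n // i.val < n / 2} : ℝ) * (ℓ * (κ / 12) / 2) ≤
     (Fintype.card {i : Fin n // i.val < n / 2} : ℝ) * (ℓ * V / 2) := by gcongr
  rw [← hVd] at hle
  have h5 := (Real.add_one_le_exp _).trans hle
  unfold Phi
  rw [← hVd]
  linarith

lemma frob_int {Ω : Type*} [MeasurableSpace Ω] (μ : Measure Ω) [IsProbabilityMeasure μ] (n d : ℕ) 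
    (Z : Ω → Fin n → Fin d → ℝ) (A : Ω → Fin n → Fin n → ℝ) (f : (Fin n → Fin n → ℝ) → (Fin n → Fin n → ℝ))
    (hZ : Measurable Z) (hA : Measurable A) (hf : Measurable f)
    (hlaw : μ.map Z = Measure.pi fun _ : Fin n => Measure.pi fun _ : Fin d => gaussianReal 0 (d : NNReal)⁻¹)
    (h01 : ∀ ω i j, A ω i j = 0 ∨ A ω i j = 1)
    (hs : ∀ ω i j, A ω i j = A ω j i) (h0 : ∀ ω i, A ω i i = 0) :
    Integrable (fun ω => frobF (Z ω) (f (A ω))) μ := by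
  have hfr := (frS_integral (J := Fin n) d (d : NNReal)⁻¹).1
  rw [← hlaw] at hfr
  have hfr2 : Integrable (fun ω => frS (Z ω)) μ := hfr.comp_measurable hZ
  set C : ℝ := ∑ S ∈ (Finset.univ.filter (fun e : Fin n × Fin n => e.1 < e.2)).powerset, ∑ i, ∑ j, (f (adjm S) i j) ^ 2
  refine Integrable.mono' ((hfr2.const_mul 2).add (integrable_const (2 * C))) ?_ ?_
  · have h1 : Measurable fun ω => f (A ω) := hf.comp hA
    have h2 : ∀ i j, Measurable fun ω => f (A ω) i j := fun i j => (measurable_pi_apply j).comp ((measurable_pi_apply i).comp h1)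
    have h3 : ∀ i j, Measurable fun ω => Z ω i j := fun i j => (measurable_pi_apply j).comp ((measurable_pi_apply i).comp hZ)
    unfold frobF
    apply Measurable.aestronglyMeasurable
    refine Finset.measurable_fun_sum _ fun i _ => Finset.measurable_fun_sum _ fun j _ => Measurable.pow_const (Measurable.sub ?_ (h2 i j)) 2
    exact Finset.measurable_fun_sum _ fun k _ => (h3 i k).mul (h3 j k)
  · refine Filter.Eventually.of_forall fun ω => ?_
    have hfn : 0 ≤ frobF (Z ω) (f (A ω)) := by unfold frobF; positivity
    rw [Real.norm_of_nonneg hfn]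
    have hmem : edg (A ω) ∈ (Finset.univ.filter (fun e : Fin n × Fin n => e.1 < e.2)).powerset := by
      rw [Finset.mem_powerset]; exact Finset.filter_subset _ _
    have hle := Finset.single_le_sum (f := fun S => ∑ i, ∑ j, (f (adjm S) i j) ^ 2) (fun S _ => by positivity) hmem
    rw [adjm_edg (A ω) (h01 ω) (hs ω) (h0 ω)] at hle
    have h4 : frobF (Z ω) (f (A ω)) ≤ 2 * frS (Z ω) + 2 * ∑ i, ∑ j, (f (A ω) i j) ^ 2 := by
      unfold frobF frS
      simp only [Finset.mul_sum, ← Finset.sum_add_distrib]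
      refine Finset.sum_le_sum fun i _ => Finset.sum_le_sum fun j _ => ?_
      nlinarith [sq_nonneg (∑ k, Z ω i k * Z ω j k + f (A ω) i j)]
    simp only [Pi.add_apply]
    linarith

lemma nll_integral {Ω : Type*} [MeasurableSpace Ω] (μ : Measure Ω) [IsProbabilityMeasure μ] (n : ℕ) (p : ℝ)
    (A : Ω → Fin n → Fin n → ℝ) (hA : Measurable A)
    (h01 : ∀ ω i j, A ω i j = 0 ∨ A ω i j = 1)
    (hden : (∑ i : Fin n, ∑ j : Fin n, if i < j then ∫ ω, A ω i j ∂μ else 0)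
              = (n.choose 2 : ℝ) * p) :
    Integrable (fun ω => nll p (A ω)) μ ∧ ∫ ω, nll p (A ω) ∂μ = n.choose 2 * Real.binEntropy p := by
  have h1 : ∀ i j, Integrable (fun ω => A ω i j) μ := fun i j => by
    have h3 : Measurable fun ω => A ω i j := (measurable_pi_apply j).comp ((measurable_pi_apply i).comp hA)
    refine Integrable.mono' (integrable_const (1:ℝ)) h3.aestronglyMeasurable (Filter.Eventually.of_forall fun ω => ?_)
    rcases h01 ω i j with h | h <;> simp [h]
  have h2 : ∀ e : Fin n × Fin n, Integrable (fun ω => A ω e.1 e.2 * (-Real.log p) + (1 - A ω e.1 e.2) * (-Real.log (1 - p))) μ :=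
    fun e => ((h1 _ _).mul_const _).add (((integrable_const _).sub (h1 _ _)).mul_const _)
  have h3 : ∀ e : Fin n × Fin n, ∫ ω, (A ω e.1 e.2 * (-Real.log p) + (1 - A ω e.1 e.2) * (-Real.log (1 - p))) ∂μ
    = (∫ ω, A ω e.1 e.2 ∂μ) * (Real.log (1 - p) - Real.log p) + (-Real.log (1 - p)) := by
    intro e
    have e1 : ∀ ω, A ω e.1 e.2 * (-Real.log p) + (1 - A ω e.1 e.2) * (-Real.log (1 - p)) =
      A ω e.1 e.2 * (Real.log (1 - p) - Real.log p) + (-Real.log (1 - p)) := fun ω => by ring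
    simp_rw [e1]
    rw [integral_add ((h1 _ _).mul_const _) (integrable_const _), integral_mul_const, integral_const]
    simp
  refine ⟨integrable_finsetSum _ fun e _ => h2 e, ?_⟩
  unfold nll
  rw [integral_finsetSum _ fun e _ => h2 e]
  simp_rw [h3]
  rw [Finset.sum_add_distrib, ← Finset.sum_mul, Finset.sum_const, card_pairs, Finset.sum_filter, Fintype.sum_prod_type, hden]
  simp only [Real.binEntropy, Real.log_inv, nsmul_eq_mul]
  ring

lemma card_lo (n : ℕ) : Fintype.card {i : Fin n // i.val < n / 2} = n / 2 := by
  rw [Fintype.card_subtype]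
  rw [Fin.card_filter_val_lt]; omega

lemma card_hi (n : ℕ) : Fintype.card {i : Fin n // ¬ i.val < n / 2} = n - n / 2 := by
  rw [Fintype.card_subtype_compl, card_lo, Fintype.card_fin]

lemma num_aux (n d c h m q ℓ N : ℝ) (hn : 1 ≤ n) (hd : 1 ≤ d) (hc : 0 < c) (h0 : 0 ≤ h) (h1 : h ≤ 1)
    (hcd : c * n * h ≤ d) (hm1 : 1 ≤ m) (hm : n ≤ 2 * m) (hq : n ≤ 3 * q)
    (hℓ : 72 * (12 * (2 + 1 / c) + 5) ≤ ℓ) (hN : N ≤ n ^ 2 / 2) :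
    24 * N * h + n * min m d - q * (ℓ * (min m d / 12) / 2) ≤ -4 := by
  set κ := min m d with hκ
  have hκ1 : 1 ≤ κ := le_min hm1 hd
  have hic : 0 < 1 / c := by positivity
  have a1 : n * h ≤ (2 + 1 / c) * κ := by
    rcases min_choice m d with e | e
    · rw [hκ, e]; nlinarith [mul_pos hic (by linarith : 0 < m)]
    · rw [hκ, e]
      have : n * h ≤ 1 / c * d := by rw [one_div, inv_mul_eq_div, le_div_iff₀ hc]; linarith
      linarith
  have a2 : 24 * N * h ≤ 12 * n * ((2 + 1 / c) * κ) := by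
    calc 24 * N * h ≤ 24 * (n ^ 2 / 2) * h := by gcongr
      _ = 12 * n * (n * h) := by ring
      _ ≤ _ := by gcongr
  have a3 : n * κ * (12 * (2 + 1 / c) + 5) ≤ q * (ℓ * (κ / 12) / 2) := by
    calc n * κ * (12 * (2 + 1 / c) + 5) = (n / 3) * ((72 * (12 * (2 + 1 / c) + 5)) * (κ / 12) / 2) := by ring
      _ ≤ q * (ℓ * (κ / 12) / 2) := by
        gcongr <;> linarith
  have a4 : 1 ≤ n * κ := by nlinarith
  nlinarith

lemma core_ge_two (c : ℝ) (hc : 0 < c) {Ω : Type*} [MeasurableSpace Ω] (μ : Measure Ω) [IsProbabilityMeasure μ] (n d : ℕ)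
    (hn : 2 ≤ n) (hd : 0 < d) (p : ℝ) (hp0 : 0 < p) (hp1 : p < 1)
    (Z : Ω → Fin n → Fin d → ℝ) (A : Ω → Fin n → Fin n → ℝ) (f : (Fin n → Fin n → ℝ) → (Fin n → Fin n → ℝ))
    (hZ : Measurable Z) (hA : Measurable A) (hf : Measurable f)
    (hlaw : μ.map Z = Measure.pi fun _ : Fin n => Measure.pi fun _ : Fin d => gaussianReal 0 (d : NNReal)⁻¹)
    (h01 : ∀ ω i j, A ω i j = 0 ∨ A ω i j = 1)
    (hs : ∀ ω i j, A ω i j = A ω j i) (h0 : ∀ ω i, A ω i i = 0)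
    (hden : (∑ i : Fin n, ∑ j : Fin n, if i < j then ∫ ω, A ω i j ∂μ else 0)
              = (n.choose 2 : ℝ) * p)
    (hcd : (d : ℝ) ≥ c * n * Real.binEntropy p) :
    Real.exp (-(72 * (12 * (2 + 1 / c) + 5))) / 48 ≤ ∫ ω, d / (n * (n + 1)) * frobF (Z ω) (f (A ω)) ∂μ := by
  have hFint := frob_int μ n d Z A f hZ hA hf hlaw h01 hs h0
  obtain ⟨hNint, hNval⟩ := nll_integral μ n p A hA h01 hden
  set h := Real.binEntropy p with hh
  have hhpos : 0 < h := Real.binEntropy_pos hp0 hp1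
  have hh1 : h ≤ 1 := (Real.binEntropy_le_log_two).trans (by linarith [Real.log_two_lt_d9])
  set K := 72 * (12 * (2 + 1 / c) + 5) with hK
  set ε := Real.exp (-K) with hε
  have hεpos : 0 < ε := Real.exp_pos _
  set m : ℝ := (Fintype.card {i : Fin n // ¬ i.val < n / 2} : ℝ) with hm
  set q : ℝ := (Fintype.card {i : Fin n // i.val < n / 2} : ℝ) with hq
  have hnR : (2:ℝ) ≤ n := by exact_mod_cast hn
  have hdR : (1:ℝ) ≤ d := by exact_mod_cast hd
  have hm1 : 1 ≤ m := by
    rw [hm, card_hi]; exact_mod_cast (by omega : 1 ≤ n - n / 2)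
  have hm2 : (n:ℝ) ≤ 2 * m := by
    rw [hm, card_hi]; exact_mod_cast (by omega : n ≤ 2 * (n - n / 2))
  have hq2 : (n:ℝ) ≤ 3 * q := by
    rw [hq, card_lo]; exact_mod_cast (by omega : n ≤ 3 * (n / 2))
  set κ : ℝ := min m d with hκ
  have hκ1 : 1 ≤ κ := le_min hm1 hdR
  have hκ0 : 0 < κ := by linarith
  set τ := 3 * m / κ with hτ
  have hτ0 : 0 < τ := by positivity
  have hN1 : (1:ℝ) ≤ (n.choose 2 : ℝ) := by exact_mod_cast Nat.choose_pos hn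
  have hN2 : (n.choose 2 : ℝ) ≤ (n:ℝ) ^ 2 / 2 := by
    rw [Nat.cast_choose_two]; nlinarith
  set N : ℝ := (n.choose 2 : ℝ) with hN
  set T := 24 * N * h with hT
  have hT0 : 0 < T := by positivity
  set s := ε * (n * (n + 1)) / d with hs'
  have hs0 : 0 < s := by positivity
  set lam := n * κ / s with hlam
  have hlam0 : 0 < lam := by positivity
  have hls : lam * s = n * κ := by rw [hlam]; field_simp
  have hdcast : (((d : NNReal)⁻¹ : NNReal) : ℝ) = (d:ℝ)⁻¹ := by simp
  set ℓ := Real.log (1 + 2 * lam * ((d : NNReal)⁻¹ : NNReal) * τ) with hℓ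
  have hℓK : K ≤ ℓ := by
    rw [hℓ, Real.le_log_iff_exp_le (by positivity), hdcast]
    have e1 : 2 * lam * (d:ℝ)⁻¹ * τ = 6 * m / (n + 1) * ε⁻¹ := by
      rw [hlam, hs', hτ]; field_simp; ring
    have e2 : Real.exp K = ε⁻¹ := by rw [hε, Real.exp_neg, inv_inv]
    rw [e1, e2]
    have e3 : 1 ≤ 6 * m / (n + 1) := by rw [one_le_div (by linarith)]; linarith
    have e4 : 0 < ε⁻¹ := by positivity
    nlinarith
  have hK0 : 0 < K := by positivity
  have hℓ0 : 0 ≤ ℓ := by linarith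
  have hexp : T + lam * s - q * (ℓ * (κ / 12) / 2) ≤ -4 := by
    rw [hls]
    exact num_aux n d c h m q ℓ N (by linarith) hdR hc hhpos.le hh1 hcd hm1 hm2 hq2 hℓK hN2
  set E := Real.exp (T + lam * s - q * (ℓ * (κ / 12) / 2)) with hE
  have hE48 : E ≤ 1 / 48 := by
    have : E ≤ Real.exp (-4) := Real.exp_le_exp.mpr hexp
    have h4 : (48:ℝ) ≤ Real.exp 4 := by
      have := Real.exp_one_gt_d9
      have e : Real.exp 4 = Real.exp 1 ^ 4 := by rw [← Real.exp_nat_mul]; norm_num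
      rw [e]
      calc (48:ℝ) ≤ 2.7 ^ 4 := by norm_num
        _ ≤ _ := by gcongr; linarith
    rw [Real.exp_neg] at this
    refine this.trans ?_
    rw [one_div]
    exact inv_anti₀ (by norm_num) h4
  obtain ⟨hVint, hVval⟩ := VZ_integral n d (by omega) hd κ hκ
  have : Nonempty {i : Fin n // ¬ i.val < n / 2} := ⟨⟨⟨n - 1, by omega⟩, by simp; omega⟩⟩
  have hVle : ∀ Z : Fin n → Fin d → ℝ, Vf τ (fun j : {i : Fin n // ¬ i.val < n / 2} => Z j) ≤ κ := fun Z =>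
    le_min (Vf_le_card τ hτ0 _) (Vf_le_d hd τ hτ0 _)
  rw [← hlaw] at hVint hVval
  rw [integral_map hZ.aemeasurable hVint.aestronglyMeasurable] at hVval
  replace hVint : Integrable (fun ω => Vf τ (fun j : {i : Fin n // ¬ i.val < n / 2} => Z ω j)) μ := hVint.comp_measurable hZ
  have hP : ∀ M : Fin n → Fin n → ℝ, Integrable (fun ω => Phi n d lam τ ℓ M (Z ω)) μ ∧ ∫ ω, Phi n d lam τ ℓ M (Z ω) ∂μ ≤ 1 := by
    intro M
    obtain ⟨a, b⟩ := Phi_integral n d (by omega) hd lam τ hlam0 hτ0 M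
    rw [← hlaw] at a b
    rw [integral_map hZ.aemeasurable a.aestronglyMeasurable] at b
    exact ⟨a.comp_measurable hZ, b⟩
  have hpt := fun ω => ptwise n d p hp0 hp1 (Z ω) (A ω) f (h01 ω) (hs ω) (h0 ω) lam τ ℓ T s κ hlam0 hT0 hs0 hκ0 hℓ0 (hVle _)
  have hi3 : ∀ S : Finset (Fin n × Fin n), Integrable (fun ω => wgt n p S * (E * Phi n d lam τ ℓ (f (adjm S)) (Z ω))) μ :=
    fun S => ((hP _).1.const_mul E).const_mul _
  have hi12 : Integrable (fun ω => frobF (Z ω) (f (A ω)) / s + nll p (A ω) / T) μ := (hFint.div_const s).add (hNint.div_const T)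
  have hiS := integrable_finsetSum (Finset.univ.filter (fun e : Fin n × Fin n => e.1 < e.2)).powerset fun S _ => hi3 S
  have hfin := integral_mono ((hVint.div_const κ).sub (integrable_const (1/12:ℝ))) (hi12.add hiS) hpt
  have hL : ∫ ω, (Vf τ (fun j : {i : Fin n // ¬ i.val < n / 2} => Z ω j) / κ - 1 / 12) ∂μ =
     (∫ ω, Vf τ (fun j : {i : Fin n // ¬ i.val < n / 2} => Z ω j) ∂μ) / κ - 1 / 12 := by
    rw [integral_sub (hVint.div_const κ) (integrable_const (1/12:ℝ))]
    simp [integral_div]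
  have hR : ∫ ω, (frobF (Z ω) (f (A ω)) / s + nll p (A ω) / T + ∑ S ∈ (Finset.univ.filter (fun e : Fin n × Fin n => e.1 < e.2)).powerset,
        wgt n p S * (E * Phi n d lam τ ℓ (f (adjm S)) (Z ω))) ∂μ ≤ (∫ ω, frobF (Z ω) (f (A ω)) ∂μ) / s + 1 / 24 + E := by
    rw [integral_add hi12 hiS, integral_add (hFint.div_const s) (hNint.div_const T), integral_div, integral_div, hNval,
      integral_finsetSum _ fun S _ => hi3 S]
    have b1 : N * h / T = 1 / 24 := by rw [hT]; field_simp
    rw [b1]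
    have b2 : ∑ S ∈ (Finset.univ.filter (fun e : Fin n × Fin n => e.1 < e.2)).powerset,
        ∫ ω, wgt n p S * (E * Phi n d lam τ ℓ (f (adjm S)) (Z ω)) ∂μ ≤ E := by
      calc _ ≤ ∑ S ∈ (Finset.univ.filter (fun e : Fin n × Fin n => e.1 < e.2)).powerset, wgt n p S * E := by
            refine Finset.sum_le_sum fun S _ => ?_
            rw [integral_const_mul, integral_const_mul]
            refine mul_le_mul_of_nonneg_left ?_ (wgt_nonneg n p hp0 hp1 S)
            exact mul_le_of_le_one_right (Real.exp_pos _).le (hP _).2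
        _ = E := by rw [← Finset.sum_mul, wgt_sum, one_mul]
    linarith
  have hV6 : 1 / 6 ≤ (∫ ω, Vf τ (fun j : {i : Fin n // ¬ i.val < n / 2} => Z ω j) ∂μ) / κ := by
    rw [le_div_iff₀ hκ0]; linarith
  have hfin2 : 1 / 48 ≤ (∫ ω, frobF (Z ω) (f (A ω)) ∂μ) / s := by
    have := (hL.symm.le.trans hfin).trans hR
    linarith
  rw [integral_const_mul]
  rw [le_div_iff₀ hs0, hs'] at hfin2
  have hd0 : (0:ℝ) < d := by linarith
  have hnn : (0:ℝ) < n * (n + 1) := by positivity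
  calc ε / 48 = d / (n * (n + 1)) * (1 / 48 * (ε * (n * (n + 1)) / d)) := by field_simp
    _ ≤ _ := by gcongr

lemma core_one (d : ℕ) (hd : 0 < d) (M : ℝ) :
    (1:ℝ) ≤ ∫ z : Fin d → ℝ, d / 2 * (∑ k, z k * z k - M) ^ 2 ∂(Measure.pi fun _ : Fin d => gaussianReal 0 (d : NNReal)⁻¹) := by
  set v := (d : NNReal)⁻¹ with hv
  set P := Measure.pi fun _ : Fin d => gaussianReal 0 v with hP
  have hmem : MemLp (fun x : ℝ => x ^ 2) 2 (gaussianReal 0 v) := by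
    rw [memLp_two_iff_integrable_sq (by fun_prop)]
    simpa [← pow_mul] using gauss_int_pow v 4
  have hvar : Var[fun x : ℝ => x ^ 2; gaussianReal 0 v] = 2 * (v:ℝ) ^ 2 := by
    rw [variance_eq_sub hmem]
    have : ∀ x : ℝ, (x ^ 2) ^ 2 = x ^ 4 := fun x => by ring
    simp only [Pi.pow_apply, this, gauss_moment4, gauss_moment2]
    ring
  have hvs := variance_sum_pi (μ := fun _ : Fin d => gaussianReal 0 v) (X := fun _ x => x ^ 2) (fun _ => hmem)
  have hmeas : Measurable (∑ i : Fin d, fun z : Fin d → ℝ => z i ^ 2) := by fun_prop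
  have h1 := variance_le_expectation_sq (μ := P) (X := fun z => (∑ i : Fin d, fun z : Fin d → ℝ => z i ^ 2) z - M)
    (hmeas.sub_const M).aestronglyMeasurable
  rw [variance_sub_const hmeas.aestronglyMeasurable, hvs] at h1
  simp only [hvar, Finset.sum_const, Finset.card_univ, Fintype.card_fin, Finset.sum_apply, Pi.pow_apply, nsmul_eq_mul] at h1
  rw [integral_const_mul]
  simp_rw [← pow_two]
  have hd0 : (0:ℝ) < d := by exact_mod_cast hd
  calc (1:ℝ) = d / 2 * (d * (2 * (v:ℝ) ^ 2)) := by rw [hv]; push_cast; field_simp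
    _ ≤ _ := by gcongr

lemma core_n_one {Ω : Type*} [MeasurableSpace Ω] (μ : Measure Ω) (d : ℕ) (hd : 0 < d)
    (Z : Ω → Fin 1 → Fin d → ℝ) (A : Ω → Fin 1 → Fin 1 → ℝ) (f : (Fin 1 → Fin 1 → ℝ) → (Fin 1 → Fin 1 → ℝ))
    (hZ : Measurable Z) 
    (hlaw : μ.map Z = Measure.pi fun _ : Fin 1 => Measure.pi fun _ : Fin d => gaussianReal 0 (d : NNReal)⁻¹)
    (h0 : ∀ ω i, A ω i i = 0) :
    1 ≤ ∫ ω, (d:ℝ) / (((1:ℕ):ℝ) * (((1:ℕ):ℝ) + 1)) * frobF (Z ω) (f (A ω)) ∂μ := by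
  have hA : ∀ ω, A ω = fun _ _ => 0 := fun ω => by
    funext i j
    rw [Subsingleton.elim j i]; exact h0 ω i
  have h := core_one d hd (f (fun _ _ => 0) 0 0)
  have hmp := measurePreserving_eval (fun _ : Fin 1 => Measure.pi fun _ : Fin d => gaussianReal 0 (d : NNReal)⁻¹) 0
  have hm : Measurable fun z : Fin d → ℝ => (d:ℝ) / 2 * (∑ k, z k * z k - (f (fun _ _ => 0) 0 0)) ^ 2 := by fun_prop
  have hm2 : Measurable fun z : Fin 1 → Fin d → ℝ => (d:ℝ) / 2 * (∑ k, Function.eval 0 z k * Function.eval 0 z k - (f (fun _ _ => 0) 0 0)) ^ 2 :=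
    hm.comp hmp.measurable
  rw [← hmp.map_eq, integral_map hmp.measurable.aemeasurable hm.aestronglyMeasurable, ← hlaw,
    integral_map hZ.aemeasurable hm2.aestronglyMeasurable] at h
  refine h.trans (le_of_eq ?_)
  refine integral_congr_ae (Filter.Eventually.of_forall fun ω => ?_)
  simp only [hA, frobF, Function.eval]
  norm_num

/-- **Impossibility of inner product recovery in a random geometric graph /
latent space model (Gaussian latent locations).**
For every `c > 0` there is `D = D(c) > 0` such that: for all positive `n, d`,
`p ∈ (0,1)`, any probability space `(Ω, μ)`, any latent matrix `Z : Ω → ℝ^{n×d}`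
with law `gaussianMatrix n d` (i.i.d. `N(0,1/d)` entries), any randomness `U`
independent of `Z`, any graph `A = F(Z, U)` with values in symmetric `{0,1}`
matrices with zero diagonal and average edge density
`Σ_{i<j} E[A_{ij}] = (n choose 2) p`, and any estimator `X̂ = f(A)`:
if `d ≥ c · n · h(p)` then `E[L(X, X̂)] ≥ D` where `X = Z Zᵀ`. -/
theorem random_geometric_graph_recovery_impossible_gaussian :
    ∀ c : ℝ, 0 < c → ∃ D : ℝ, 0 < D ∧
      ∀ (n d : ℕ), 0 < n → 0 < d → ∀ p : ℝ, 0 < p → p < 1 →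
        ∀ (Ω : Type) (_ : MeasurableSpace Ω) (μ : Measure Ω), IsProbabilityMeasure μ →
          ∀ (β : Type) (_ : MeasurableSpace β)
            (Z : Ω → Matrix (Fin n) (Fin d) ℝ) (U : Ω → β)
            (F : Matrix (Fin n) (Fin d) ℝ → β → Matrix (Fin n) (Fin n) ℝ)
            (f : Matrix (Fin n) (Fin n) ℝ → Matrix (Fin n) (Fin n) ℝ),
            Measurable Z → Measurable U →
            Measurable (fun q : Matrix (Fin n) (Fin d) ℝ × β => F q.1 q.2) →
            Measurable f →
            μ.map Z = gaussianMatrix n d →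
            IndepFun Z U μ →
            (∀ z u i j, F z u i j = 0 ∨ F z u i j = 1) →
            (∀ z u i j, F z u i j = F z u j i) →
            (∀ z u i, F z u i i = 0) →
            (∑ i : Fin n, ∑ j : Fin n, if i < j then ∫ ω, F (Z ω) (U ω) i j ∂μ else 0)
              = (n.choose 2 : ℝ) * p →
            (d : ℝ) ≥ c * n * Real.binEntropy p →
            D ≤ ∫ ω, lossL n d (Z ω * (Z ω)ᵀ) (f (F (Z ω) (U ω))) ∂μ := by
  intro c hc
  refine ⟨min 1 (Real.exp (-(72 * (12 * (2 + 1 / c) + 5))) / 48), by positivity, ?_⟩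
  intro n d hn hd p hp0 hp1 Ω _ μ hμ β _ Z U F f hZ hU hF hf hlaw _ h01 hs h0 hden hcd
  have hloss : ∀ ω, lossL n d (Z ω * (Z ω)ᵀ) (f (F (Z ω) (U ω))) =
      (d:ℝ) / (n * (n + 1)) * frobF (Z ω) (f (F (Z ω) (U ω))) := by
    intro ω
    simp only [lossL, frobSq, frobF, Matrix.mul_apply, Matrix.transpose_apply]
  simp_rw [hloss]
  have hA : Measurable fun ω => F (Z ω) (U ω) := hF.comp (hZ.prodMk hU)
  rcases (by omega : n = 1 ∨ 2 ≤ n) with h | h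
  · subst h
    exact (min_le_left _ _).trans (core_n_one μ d hd Z (fun ω => F (Z ω) (U ω)) f hZ hlaw (fun ω => h0 _ _))
  · exact (min_le_right _ _).trans (core_ge_two c hc μ n d h hd p hp0 hp1 Z (fun ω => F (Z ω) (U ω)) f hZ hA hf hlaw
      (fun ω => h01 _ _) (fun ω => hs _ _) (fun ω => h0 _ _) hden hcd)

end
end

section
/- For every constant c > 0 there is a constant D = D(c) > 0 with the following property. Let n, d be positive integers, p ∈ (0, 1), and let (p_{ij})_{i,j=1}^n be numbers in [0,1] with Σ_{i,j=1}^n p_{ij} = n²·p. On a probability space, let Z be a random n×d real matrix with i.i.d. N(0, 1/d) entries, let X := Z Zᵀ, let U be a random variable independent of Z, and let A := F(X, U) be a measurable function taking values in {0, 1, ∗}^{n×n} such that P(A_{ij} ≠ ∗) = p_{ij} for every (i, j) (an entry equal to ∗ represents a missing observation; entries in {0,1} are one-bit observations generated by an arbitrary model). Let X̂ := f(A) for a measurable function f valued in n×n real matrices. If d ≥ c · n · (h(p) + p), then E[L(X, X̂)] ≥ D. -/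
open MeasureTheory ProbabilityTheory Matrix

noncomputable section

/-- `{0, 1, ∗}` is encoded as `Option Bool`, with `none` playing the role of a missing
observation `∗`; it carries the discrete σ-algebra. -/
instance optionBoolMeasurableSpace : MeasurableSpace (Option Bool) := ⊤

/-- product Gaussian -/
def gm (v : NNReal) (ι : Type) [Fintype ι] : Measure (ι → ℝ) :=
  Measure.pi fun _ : ι => gaussianReal 0 v

instance (v : NNReal) (ι : Type) [Fintype ι] : IsProbabilityMeasure (gm v ι) := by
  unfold gm; infer_instance

def phi (v : NNReal) (lam : ℝ) {ι κ : Type} [Fintype ι] [Fintype κ] (b : ι → κ → ℝ) (y : κ → ℝ) : ℝ :=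
  ∫ g, Real.exp (-lam * ∑ a, (∑ j, g j * b j a - y a) ^ 2) ∂gm v ι

lemma int_of_bound_one {α : Type*} [MeasurableSpace α] {E : Type*} [NormedAddCommGroup E]
    {μ : Measure α} [IsFiniteMeasure μ]
    {f : α → E} (hf : AEStronglyMeasurable f μ) (h : ∀ x, ‖f x‖ ≤ 1) : Integrable f μ :=
  Integrable.of_bound hf 1 (Filter.Eventually.of_forall h)

lemma exp_neg_le_one {lam s : ℝ} (hl : 0 ≤ lam) (hs : 0 ≤ s) : Real.exp (-lam * s) ≤ 1 := by
  rw [Real.exp_le_one_iff]; nlinarith [mul_nonneg hl hs]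

lemma norm_exp_neg_le_one {lam s : ℝ} (hl : 0 ≤ lam) (hs : 0 ≤ s) : ‖Real.exp (-lam * s)‖ ≤ 1 := by
  rw [Real.norm_eq_abs, abs_of_pos (Real.exp_pos _)]; exact exp_neg_le_one hl hs

lemma charFun_gm (v : NNReal) {ι : Type} [Fintype ι] (x : ι → ℝ) :
    ∫ g, Complex.exp (Complex.I * ((∑ j, g j * x j : ℝ) : ℂ)) ∂gm v ι
      = ((Real.exp (-(v / 2) * ∑ j, x j ^ 2) : ℝ) : ℂ) := by
  have h1 : ∀ g : ι → ℝ, Complex.exp (Complex.I * ((∑ j, g j * x j : ℝ) : ℂ))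
      = ∏ j, Complex.exp (x j * g j * Complex.I) := by
    intro g
    rw [← Complex.exp_sum]
    congr 1
    push_cast
    rw [Finset.mul_sum]
    exact Finset.sum_congr rfl fun j _ => by ring
  simp_rw [h1, gm]
  rw [integral_fintype_prod_eq_prod (fun j (t : ℝ) => Complex.exp (x j * t * Complex.I))]
  simp_rw [← charFun_apply_real, charFun_gaussianReal]
  rw [← Complex.exp_sum]
  push_cast
  congr 1
  rw [Finset.mul_sum]
  exact Finset.sum_congr rfl fun j _ => by push_cast; ring

lemma phi_dual (v : NNReal) (hv : v ≠ 0) {lam : ℝ} (hl : 0 ≤ lam) {ι κ : Type} [Fintype ι] [Fintype κ]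
    (b : ι → κ → ℝ) (y : κ → ℝ) :
    phi v lam b y ≤ phi v lam (fun a j => b j a) 0 := by
  have hv' : (0:ℝ) < v := by positivity
  set s : ℝ := Real.sqrt (2 * lam / v) with hs
  have hs2 : s ^ 2 = 2 * lam / v := Real.sq_sqrt (by positivity)
  have key : ∀ {τ : Type} [Fintype τ] (x : τ → ℝ),
      ∫ g, Complex.exp (Complex.I * ((∑ j, g j * (s * x j) : ℝ) : ℂ)) ∂gm v τ
      = ((Real.exp (-lam * ∑ j, x j ^ 2) : ℝ) : ℂ) := by
    intro τ _ x
    rw [charFun_gm]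
    congr 2
    simp_rw [mul_pow, ← Finset.mul_sum, hs2]
    field_simp
  have hnorm : ∀ r : ℝ, ‖Complex.exp (Complex.I * (r : ℂ))‖ = 1 := by
    intro r; rw [mul_comm]; exact Complex.norm_exp_ofReal_mul_I r
  have e1 : ((phi v lam b y : ℝ) : ℂ) = ∫ g, ∫ h,
      Complex.exp (Complex.I * ((∑ a, h a * (s * (∑ j, g j * b j a - y a)) : ℝ) : ℂ)) ∂gm v κ ∂gm v ι := by
    unfold phi
    rw [← integral_complex_ofReal]
    simp_rw [key]
  have e2 : (∫ g, ∫ h,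
      Complex.exp (Complex.I * ((∑ a, h a * (s * (∑ j, g j * b j a - y a)) : ℝ) : ℂ)) ∂gm v κ ∂gm v ι)
      = ∫ h, Complex.exp (Complex.I * ((-∑ a, h a * (s * y a) : ℝ) : ℂ)) *
         ((Real.exp (-lam * ∑ j, (∑ a, h a * b j a) ^ 2) : ℝ) : ℂ) ∂gm v κ := by
    rw [integral_integral_swap]
    · congr 1
      ext h
      rw [← key, ← integral_const_mul]
      congr 1
      ext g
      rw [← Complex.exp_add, ← mul_add, ← Complex.ofReal_add]
      congr 3
      have : ∑ j, g j * (s * ∑ a, h a * b j a) = ∑ a, h a * (s * ∑ j, g j * b j a) := by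
        simp_rw [Finset.mul_sum]
        rw [Finset.sum_comm]
        exact Finset.sum_congr rfl fun _ _ => Finset.sum_congr rfl fun _ _ => by ring
      rw [this, ← Finset.sum_neg_distrib, ← Finset.sum_add_distrib]
      exact Finset.sum_congr rfl fun _ _ => by ring
    · apply int_of_bound_one
      · apply Continuous.aestronglyMeasurable
        fun_prop
      · rintro ⟨g, h⟩
        exact (hnorm _).le
  have e3 : ‖((phi v lam b y : ℝ) : ℂ)‖ ≤ phi v lam (fun a j => b j a) 0 := by
    rw [e1, e2]
    refine (norm_integral_le_integral_norm _).trans (le_of_eq ?_)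
    unfold phi
    congr 1
    ext h
    rw [norm_mul, hnorm, one_mul, Complex.norm_real, Real.norm_eq_abs, abs_of_pos (Real.exp_pos _)]
    simp
  rw [Complex.norm_real] at e3
  exact (le_abs_self _).trans e3

lemma phi_le_zero (v : NNReal) (hv : v ≠ 0) {lam : ℝ} (hl : 0 ≤ lam) {ι κ : Type} [Fintype ι] [Fintype κ]
    (b : ι → κ → ℝ) (y : κ → ℝ) : phi v lam b y ≤ phi v lam b 0 :=
  (phi_dual v hv hl b y).trans (phi_dual v hv hl (fun a j => b j a) 0)

lemma phi_nonneg (v : NNReal) {lam : ℝ} {ι κ : Type} [Fintype ι] [Fintype κ]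
    (b : ι → κ → ℝ) (y : κ → ℝ) : 0 ≤ phi v lam b y :=
  integral_nonneg fun _ => (Real.exp_pos _).le

lemma phi_le_one (v : NNReal) {lam : ℝ} (hl : 0 ≤ lam) {ι κ : Type} [Fintype ι] [Fintype κ]
    (b : ι → κ → ℝ) (y : κ → ℝ) : phi v lam b y ≤ 1 := by
  unfold phi
  calc _ ≤ ∫ g, (1:ℝ) ∂gm v ι := by
        apply integral_mono_of_nonneg (Filter.Eventually.of_forall fun _ => (Real.exp_pos _).le)
          (integrable_const _)
        exact Filter.Eventually.of_forall fun _ => exp_neg_le_one hl (by positivity)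
    _ = 1 := by simp

lemma phi_measurable (v : NNReal) {lam : ℝ} {ι κ : Type} [Fintype ι] [Fintype κ] (y : κ → ℝ) :
    StronglyMeasurable (fun b : ι → κ → ℝ => phi v lam b y) := by
  unfold phi
  apply StronglyMeasurable.integral_prod_right (ν := gm v ι)
    (f := fun (b : ι → κ → ℝ) (g : ι → ℝ) => Real.exp (-lam * ∑ a, (∑ j, g j * b j a - y a) ^ 2))
  apply Continuous.stronglyMeasurable
  fun_prop

/-- the one dimensional Laplace transform -/
def hh (v : NNReal) (x : ℝ) : ℝ := ∫ w, Real.exp (-x * w ^ 2) ∂gaussianReal 0 v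

lemma gauss_complex (v : NNReal) (hv : v ≠ 0) (z : ℂ) (hz : 0 ≤ z.re) :
    ‖∫ w : ℝ, Complex.exp (-z * w ^ 2) ∂gaussianReal 0 v‖ = ‖1 + 2 * v * z‖ ^ (-(1/2) : ℝ) := by
  have hv' : (0:ℝ) < v := by positivity
  rw [integral_gaussianReal_eq_integral_smul hv]
  have : ∀ w : ℝ, gaussianPDFReal 0 v w • Complex.exp (-z * w ^ 2)
      = ((Real.sqrt (2 * Real.pi * v))⁻¹ : ℝ) * Complex.exp (-(z + (1 / (2 * v) : ℝ)) * w ^ 2) := by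
    intro w
    rw [gaussianPDFReal]
    rw [Complex.real_smul]
    push_cast
    rw [mul_assoc, ← Complex.exp_add]
    congr 2
    field_simp
    ring
  simp_rw [this]
  rw [integral_const_mul, integral_gaussian_complex]
  · rw [norm_mul, Complex.norm_real]
    have h2 : (z + (1 / (2 * v) : ℝ)) = (1 + 2 * v * z) / ((2 * v : ℝ) : ℂ) := by
      have : (v : ℂ) ≠ 0 := by exact_mod_cast hv
      push_cast
      field_simp
      ring
    have h3 : ‖((Real.pi : ℂ) / (z + (1 / (2 * v) : ℝ))) ^ (1 / 2 : ℂ)‖ =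
        ‖((Real.pi : ℂ) / (z + (1 / (2 * v) : ℝ)))‖ ^ (1 / 2 : ℝ) := by
      have := Complex.norm_cpow_real ((Real.pi : ℂ) / (z + (1 / (2 * v) : ℝ))) (1/2)
      rw [← this]; norm_num
    rw [h3, h2, norm_div, norm_div, Complex.norm_real, Complex.norm_real]
    have hp := Real.pi_pos
    rw [Real.norm_of_nonneg hp.le, Real.norm_of_nonneg (by positivity : (0:ℝ) ≤ 2 * v),
      Real.norm_of_nonneg (by positivity), div_div_eq_mul_div, Real.sqrt_eq_rpow,
      Real.div_rpow (by positivity) (norm_nonneg _), Real.rpow_neg (norm_nonneg _)]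
    rw [show Real.pi * (2 * (v:ℝ)) = 2 * Real.pi * v by ring]
    have : (2 * Real.pi * (v:ℝ)) ^ (1/2 : ℝ) ≠ 0 := by positivity
    field_simp
  · rw [Complex.add_re, Complex.ofReal_re]
    positivity

lemma hh_eq (v : NNReal) (hv : v ≠ 0) (x : ℝ) (hx : 0 ≤ x) :
    hh v x = (1 + 2 * v * x) ^ (-(1/2) : ℝ) := by
  have h := gauss_complex v hv x (by simpa using hx)
  have e : (∫ w : ℝ, Complex.exp (-(x:ℂ) * w ^ 2) ∂gaussianReal 0 v) = ((hh v x : ℝ) : ℂ) := by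
    unfold hh
    rw [← integral_complex_ofReal]
    congr 1
    ext w
    push_cast
    rfl
  have hn : 0 ≤ hh v x := integral_nonneg fun _ => (Real.exp_pos _).le
  rw [e, Complex.norm_real, Real.norm_of_nonneg hn] at h
  rw [h]
  congr 1
  rw [show (1 + 2 * (v:ℂ) * x) = ((1 + 2 * v * x : ℝ) : ℂ) by push_cast; rfl, Complex.norm_real,
    Real.norm_of_nonneg (by positivity)]

lemma hh_nonneg (v : NNReal) (x : ℝ) : 0 ≤ hh v x := integral_nonneg fun _ => (Real.exp_pos _).le

lemma hh_anti (v : NNReal) (hv : v ≠ 0) {x y : ℝ} (hx : 0 ≤ x) (hxy : x ≤ y) : hh v y ≤ hh v x := by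
  rw [hh_eq v hv x hx, hh_eq v hv y (hx.trans hxy)]
  apply Real.rpow_le_rpow_of_nonpos (by positivity) _ (by norm_num)
  gcongr

lemma hh_le_one (v : NNReal) (hv : v ≠ 0) {x : ℝ} (hx : 0 ≤ x) : hh v x ≤ 1 := by
  rw [hh_eq v hv x hx]
  apply Real.rpow_le_one_of_one_le_of_nonpos _ (by norm_num)
  have : 0 ≤ 2 * v * x := by positivity
  linarith

lemma gm_laplace (v : NNReal) (x : ℝ) (κ : Type) [Fintype κ] :
    ∫ g, Real.exp (-x * ∑ a, g a ^ 2) ∂gm v κ = hh v x ^ Fintype.card κ := by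
  unfold gm hh
  rw [← integral_fintype_prod_eq_pow]
  congr 1
  ext g
  rw [← Real.exp_sum, Finset.mul_sum]


lemma orth_identity {κ : Type} [Fintype κ] {q : ℕ} (e : Fin q → κ → ℝ)
    (he : ∀ i i', ∑ a, e i a * e i' a = if i = i' then 1 else 0) (b0 s : κ → ℝ)
    (hs : ∀ i, ∑ a, e i a * s a = 0) (w : ℝ) :
    ∑ a, (w * b0 a + s a) ^ 2 =
      ∑ a, (s a + w * (b0 a - ∑ i, (∑ a', e i a' * b0 a') * e i a)) ^ 2
        + w ^ 2 * ∑ i, (∑ a, e i a * b0 a) ^ 2 := by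
  set c : Fin q → ℝ := fun i => ∑ a, e i a * b0 a with hc
  set P : κ → ℝ := fun a => ∑ i, c i * e i a with hP
  have hx : ∀ x : κ → ℝ, ∑ a, P a * x a = ∑ i, c i * ∑ a, e i a * x a := by
    intro x
    simp_rw [hP, Finset.sum_mul, Finset.mul_sum]
    rw [Finset.sum_comm]
    exact Finset.sum_congr rfl fun _ _ => Finset.sum_congr rfl fun _ _ => by ring
  have heP : ∀ i, ∑ a, e i a * P a = c i := by
    intro i
    simp_rw [hP, Finset.mul_sum]
    rw [Finset.sum_comm]
    have : ∀ y, ∑ x, e i x * (c y * e y x) = c y * (if i = y then 1 else 0) := by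
      intro y
      rw [← he i y, Finset.mul_sum]
      exact Finset.sum_congr rfl fun _ _ => by ring
    simp_rw [this]
    simp
  have h1 : ∑ a, P a * P a = ∑ i, c i ^ 2 := by
    rw [hx]; simp_rw [heP]; exact Finset.sum_congr rfl fun _ _ => by ring
  have h2 : ∑ a, P a * s a = 0 := by rw [hx]; simp [hs]
  have h3 : ∑ a, P a * b0 a = ∑ i, c i ^ 2 := by
    rw [hx]; exact Finset.sum_congr rfl fun _ _ => by rw [sq]
  have : ∀ a, (w * b0 a + s a) ^ 2 = (s a + w * (b0 a - P a)) ^ 2 + (2 * w * (P a * s a)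
      + 2 * w ^ 2 * (P a * b0 a) - w ^ 2 * (P a * P a)) := by intro a; ring
  simp_rw [this]
  rw [Finset.sum_add_distrib]
  congr 1
  rw [Finset.sum_sub_distrib, Finset.sum_add_distrib, ← Finset.mul_sum, ← Finset.mul_sum,
    ← Finset.mul_sum, h1, h2, h3]
  ring

lemma phi_step (v : NNReal) (hv : v ≠ 0) {lam : ℝ} (hl : 0 ≤ lam) {κ : Type} [Fintype κ] {q T : ℕ}
    (e : Fin q → κ → ℝ)
    (he : ∀ i i', ∑ a, e i a * e i' a = if i = i' then 1 else 0) (b0 : κ → ℝ) (b : Fin T → κ → ℝ)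
    (hb : ∀ i j, ∑ a, e i a * b j a = 0) :
    phi v lam (Fin.cons b0 b : Fin (T+1) → κ → ℝ) 0 ≤
      hh v (lam * ∑ i, (∑ a, e i a * b0 a) ^ 2) * phi v lam b 0 := by
  set C : ℝ := ∑ i, (∑ a, e i a * b0 a) ^ 2 with hC
  have e0 : phi v lam (Fin.cons b0 b : Fin (T+1) → κ → ℝ) 0 =
      ∫ x : ℝ × (Fin T → ℝ), Real.exp (-lam * ∑ a, (x.1 * b0 a + ∑ j, x.2 j * b j a) ^ 2)
        ∂(gaussianReal 0 v).prod (gm v (Fin T)) := by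
    unfold phi gm
    have := ((measurePreserving_piFinSuccAbove (fun _ : Fin (T+1) => gaussianReal 0 v) 0).symm)
    rw [← this.integral_comp']
    congr 1
    ext x
    congr 2
    apply Finset.sum_congr rfl
    intro a _
    rw [Fin.sum_univ_succ]
    simp [MeasurableEquiv.piFinSuccAbove]
  rw [e0, integral_prod]
  · have hb' : ∀ w : ℝ, ∫ g, Real.exp (-lam * ∑ a, (w * b0 a + ∑ j, g j * b j a) ^ 2) ∂gm v (Fin T)
        ≤ Real.exp (-(lam * C) * w ^ 2) * phi v lam b 0 := by
      intro w
      have hid : ∀ g : Fin T → ℝ, Real.exp (-lam * ∑ a, (w * b0 a + ∑ j, g j * b j a) ^ 2) =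
          Real.exp (-(lam * C) * w ^ 2) * Real.exp (-lam * ∑ a, (∑ j, g j * b j a -
            (-(w * (b0 a - ∑ i, (∑ a', e i a' * b0 a') * e i a)))) ^ 2) := by
        intro g
        rw [orth_identity e he b0 (fun a => ∑ j, g j * b j a) _ w, ← Real.exp_add]
        · congr 1
          simp_rw [sub_neg_eq_add]
          ring
        · intro i
          simp_rw [Finset.mul_sum]
          rw [Finset.sum_comm]
          apply Finset.sum_eq_zero
          intro j _
          have := hb i j
          calc _ = g j * ∑ a, e i a * b j a := by
                rw [Finset.mul_sum]; exact Finset.sum_congr rfl fun _ _ => by ring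
            _ = 0 := by rw [this, mul_zero]
      simp_rw [hid]
      rw [integral_const_mul]
      apply mul_le_mul_of_nonneg_left _ (Real.exp_pos _).le
      exact phi_le_zero v hv hl b _
    have hCn : 0 ≤ C := by positivity
    have : hh v (lam * C) * phi v lam b 0 =
        ∫ w, Real.exp (-(lam * C) * w ^ 2) * phi v lam b 0 ∂gaussianReal 0 v := by
      rw [integral_mul_const]; rfl
    rw [this]
    apply integral_mono_of_nonneg
    · exact Filter.Eventually.of_forall fun _ => integral_nonneg fun _ => (Real.exp_pos _).le
    · apply Integrable.mul_const
      apply int_of_bound_one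
      · apply Continuous.aestronglyMeasurable
        fun_prop
      · intro w; exact norm_exp_neg_le_one (by positivity) (by positivity)
    · exact Filter.Eventually.of_forall hb'
  · apply int_of_bound_one
    · apply Continuous.aestronglyMeasurable
      fun_prop
    · intro w; exact norm_exp_neg_le_one (by positivity) (by positivity)

def rho (v : NNReal) (lam τ μ : ℝ) (m q : ℕ) : ℝ :=
  hh v (lam * τ) ^ m + Real.exp (μ * τ) * hh v μ ^ q

lemma hh_measurable (v : NNReal) : StronglyMeasurable (hh v) := by
  unfold hh
  apply StronglyMeasurable.integral_prod_right (ν := gaussianReal 0 v)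
    (f := fun (x : ℝ) (w : ℝ) => Real.exp (-x * w ^ 2))
  apply Continuous.stronglyMeasurable
  fun_prop

lemma rho_bound (v : NNReal) (hv : v ≠ 0) {lam τ μ : ℝ} (hl : 0 ≤ lam) (hτ : 0 ≤ τ) (hμ : 0 ≤ μ)
    {κ : Type} [Fintype κ] {q : ℕ} (m : ℕ) (e : Fin q → κ → ℝ)
    (he : ∀ i i', ∑ a, e i a * e i' a = if i = i' then 1 else 0) :
    ∫ b0, hh v (lam * ∑ i, (∑ a, e i a * b0 a) ^ 2) ^ m ∂gm v κ ≤ rho v lam τ μ m q := by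
  have h1 : ∫ b0, Real.exp (-μ * ∑ i, (∑ a, e i a * b0 a) ^ 2) ∂gm v κ ≤ hh v μ ^ q := by
    have := phi_dual v hv hμ (fun a i => e i a) 0
    unfold phi at this
    simp only [Pi.zero_apply, sub_zero] at this
    calc _ = ∫ (g : κ → ℝ), Real.exp (-μ * ∑ a, (∑ j, g j * e a j) ^ 2) ∂gm v κ := by
            simp_rw [mul_comm]
      _ ≤ _ := this
      _ = ∫ g : Fin q → ℝ, Real.exp (-μ * ∑ a, g a ^ 2) ∂gm v (Fin q) := by
          congr 1
          ext g
          congr 2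
          have : ∀ x, (∑ j, g j * e j x) ^ 2 = ∑ i, ∑ j, g i * g j * (e i x * e j x) := by
            intro x
            rw [sq, Finset.sum_mul_sum]
            exact Finset.sum_congr rfl fun _ _ => Finset.sum_congr rfl fun _ _ => by ring
          simp_rw [this]
          rw [Finset.sum_comm]
          apply Finset.sum_congr rfl
          intro i _
          rw [Finset.sum_comm]
          simp_rw [← Finset.mul_sum, he]
          simp [sq]
      _ = _ := by rw [gm_laplace, Fintype.card_fin]
  have hpt : ∀ b0 : κ → ℝ, hh v (lam * ∑ i, (∑ a, e i a * b0 a) ^ 2) ^ m ≤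
      hh v (lam * τ) ^ m + Real.exp (μ * τ) * Real.exp (-μ * ∑ i, (∑ a, e i a * b0 a) ^ 2) := by
    intro b0
    have hC : 0 ≤ ∑ i, (∑ a, e i a * b0 a) ^ 2 := by positivity
    set C := ∑ i, (∑ a, e i a * b0 a) ^ 2
    rcases le_total τ C with h | h
    · have : hh v (lam * C) ^ m ≤ hh v (lam * τ) ^ m := by
        apply pow_le_pow_left₀ (hh_nonneg _ _)
        apply hh_anti v hv (by positivity)
        gcongr
      have := Real.exp_pos (μ * τ)
      have := Real.exp_pos (-μ * C)
      nlinarith [mul_pos (Real.exp_pos (μ * τ)) (Real.exp_pos (-μ * C))]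
    · have h1 : hh v (lam * C) ^ m ≤ 1 := pow_le_one₀ (hh_nonneg _ _) (hh_le_one v hv (by positivity))
      have h2 : 0 ≤ hh v (lam * τ) ^ m := pow_nonneg (hh_nonneg _ _) _
      have h3 : 1 ≤ Real.exp (μ * τ) * Real.exp (-μ * C) := by
        rw [← Real.exp_add, Real.one_le_exp_iff]
        nlinarith
      linarith
  have hIntg : Integrable (fun b0 : κ → ℝ => Real.exp (-μ * ∑ i, (∑ a, e i a * b0 a) ^ 2)) (gm v κ) := by
    apply int_of_bound_one
    · apply Continuous.aestronglyMeasurable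
      fun_prop
    · intro w; exact norm_exp_neg_le_one (by positivity) (by positivity)
  calc _ ≤ ∫ b0, (hh v (lam * τ) ^ m + Real.exp (μ * τ) * Real.exp (-μ * ∑ i, (∑ a, e i a * b0 a) ^ 2))
        ∂gm v κ := by
        apply integral_mono_of_nonneg (Filter.Eventually.of_forall fun _ => pow_nonneg (hh_nonneg _ _) _)
        · exact (integrable_const _).add (hIntg.const_mul _)
        · exact Filter.Eventually.of_forall hpt
    _ = hh v (lam * τ) ^ m + Real.exp (μ * τ) * ∫ b0, Real.exp (-μ * ∑ i, (∑ a, e i a * b0 a) ^ 2) ∂gm v κ := by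
        rw [integral_add (integrable_const _) (hIntg.const_mul _), integral_const_mul]
        simp
    _ ≤ _ := by
        unfold rho
        gcongr

lemma exists_orth {κ : Type} [Fintype κ] {q T : ℕ} (h : T + q ≤ Fintype.card κ) (b : Fin T → κ → ℝ) :
    ∃ e : Fin q → κ → ℝ, (∀ i i', ∑ a, e i a * e i' a = if i = i' then 1 else 0) ∧
      ∀ i j, ∑ a, e i a * b j a = 0 := by
  let b' : Fin T → EuclideanSpace ℝ κ := fun j => WithLp.toLp 2 (b j)
  let V := Submodule.span ℝ (Set.range b')
  have h1 : Module.finrank ℝ V ≤ T := by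
    have := finrank_range_le_card (R := ℝ) b'
    rw [Fintype.card_fin] at this
    exact this
  have h2 : Module.finrank ℝ V + Module.finrank ℝ Vᗮ = Fintype.card κ := by
    rw [Submodule.finrank_add_finrank_orthogonal, finrank_euclideanSpace]
  have h3 : q ≤ Module.finrank ℝ Vᗮ := by omega
  let B := stdOrthonormalBasis ℝ Vᗮ
  have inn : ∀ x y : EuclideanSpace ℝ κ, ∑ a, x a * y a = inner ℝ x y := by
    intro x y
    simp [PiLp.inner_apply, mul_comm]
  refine ⟨fun i a => (B (Fin.castLE h3 i) : EuclideanSpace ℝ κ) a, ?_, ?_⟩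
  · intro i i'
    rw [inn]
    have := orthonormal_iff_ite.mp B.orthonormal (Fin.castLE h3 i) (Fin.castLE h3 i')
    rw [Submodule.coe_inner] at this
    rw [this]
    simp
  · intro i j
    have hh := inn (B (Fin.castLE h3 i) : EuclideanSpace ℝ κ) (b' j)
    have h4 : b' j ∈ V := Submodule.subset_span ⟨j, rfl⟩
    rw [Submodule.inner_left_of_mem_orthogonal h4 (B (Fin.castLE h3 i)).2] at hh
    exact hh

def Rint (v : NNReal) (lam : ℝ) (κ : Type) [Fintype κ] (m T : ℕ) : ℝ :=
  ∫ b : Fin T → κ → ℝ, phi v lam b 0 ^ m ∂Measure.pi (fun _ : Fin T => gm v κ)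

lemma phi_pow_integrable (v : NNReal) {lam : ℝ} (hl : 0 ≤ lam) {ι κ : Type} [Fintype ι] [Fintype κ] (m : ℕ)
    (P : Measure (ι → κ → ℝ)) [IsFiniteMeasure P] :
    Integrable (fun b => phi v lam b 0 ^ m) P := by
  apply int_of_bound_one
  · exact ((phi_measurable v 0).pow m).aestronglyMeasurable
  · intro b
    rw [Real.norm_of_nonneg (pow_nonneg (phi_nonneg _ _ _) _)]
    exact pow_le_one₀ (phi_nonneg _ _ _) (phi_le_one v hl _ _)

lemma Rint_step_gen (v : NNReal) (hv : v ≠ 0) {lam : ℝ} (hl : 0 ≤ lam) {κ : Type} [Fintype κ] {q T : ℕ}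
    (h : T + q ≤ Fintype.card κ ∨ q = 0) (m : ℕ) (r : ℝ)
    (hr : ∀ e : Fin q → κ → ℝ, (∀ i i', ∑ a, e i a * e i' a = if i = i' then 1 else 0) →
      ∫ b0, hh v (lam * ∑ i, (∑ a, e i a * b0 a) ^ 2) ^ m ∂gm v κ ≤ r) :
    Rint v lam κ m (T+1) ≤ r * Rint v lam κ m T := by
  have e0 : Rint v lam κ m (T+1) = ∫ x : (κ → ℝ) × (Fin T → κ → ℝ),
      phi v lam (Fin.cons x.1 x.2 : Fin (T+1) → κ → ℝ) 0 ^ m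
        ∂(gm v κ).prod (Measure.pi fun _ : Fin T => gm v κ) := by
    unfold Rint
    have := ((measurePreserving_piFinSuccAbove (fun _ : Fin (T+1) => gm v κ) 0).symm)
    rw [← this.integral_comp']
    congr 1
    ext x
    simp [MeasurableEquiv.piFinSuccAbove]
    rfl
  have hmp : Integrable (fun x : (κ → ℝ) × (Fin T → κ → ℝ) =>
      phi v lam (Fin.cons x.1 x.2 : Fin (T+1) → κ → ℝ) 0 ^ m)
      ((gm v κ).prod (Measure.pi fun _ : Fin T => gm v κ)) := by
    apply int_of_bound_one
    · have hc : Continuous (fun x : (κ → ℝ) × (Fin T → κ → ℝ) =>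
        (Fin.cons x.1 x.2 : Fin (T+1) → κ → ℝ)) := by
        fun_prop
      exact (((phi_measurable v 0).comp_measurable hc.measurable).pow m).aestronglyMeasurable
    · intro b
      rw [Real.norm_of_nonneg (pow_nonneg (phi_nonneg _ _ _) _)]
      exact pow_le_one₀ (phi_nonneg _ _ _) (phi_le_one v hl _ _)
  rw [e0, integral_prod_symm _ hmp]
  unfold Rint
  rw [← integral_const_mul]
  apply integral_mono_of_nonneg
  · exact Filter.Eventually.of_forall fun _ => integral_nonneg fun _ => pow_nonneg (phi_nonneg _ _ _) _
  · exact (phi_pow_integrable v hl m _).const_mul _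
  · refine Filter.Eventually.of_forall fun b => ?_
    obtain ⟨e, he, hb⟩ : ∃ e : Fin q → κ → ℝ, (∀ i i', ∑ a, e i a * e i' a = if i = i' then 1 else 0) ∧
      ∀ i j, ∑ a, e i a * b j a = 0 := by
      rcases h with h | h
      · exact exists_orth h b
      · subst h
        exact ⟨fun i => i.elim0, fun i => i.elim0, fun i => i.elim0⟩
    have hm : StronglyMeasurable (fun b0 : κ → ℝ => hh v (lam * ∑ i, (∑ a, e i a * b0 a) ^ 2)) := by
      apply (hh_measurable v).comp_measurable
      fun_prop
    calc ∫ b0, phi v lam (Fin.cons b0 b : Fin (T+1) → κ → ℝ) 0 ^ m ∂gm v κ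
        ≤ ∫ b0, hh v (lam * ∑ i, (∑ a, e i a * b0 a) ^ 2) ^ m * phi v lam b 0 ^ m ∂gm v κ := by
          apply integral_mono_of_nonneg
          · exact Filter.Eventually.of_forall fun _ => pow_nonneg (phi_nonneg _ _ _) _
          · apply Integrable.mul_const
            apply int_of_bound_one (hm.pow m).aestronglyMeasurable
            intro b0
            simp only [Pi.pow_apply]
            rw [Real.norm_of_nonneg (pow_nonneg (hh_nonneg _ _) _)]
            exact pow_le_one₀ (hh_nonneg _ _) (hh_le_one v hv (by positivity))
          · refine Filter.Eventually.of_forall fun b0 => ?_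
            simp only
            rw [← mul_pow]
            exact pow_le_pow_left₀ (phi_nonneg _ _ _) (phi_step v hv hl e he b0 b hb) m
      _ ≤ r * phi v lam b 0 ^ m := by
          rw [integral_mul_const]
          exact mul_le_mul_of_nonneg_right (hr e he) (pow_nonneg (phi_nonneg _ _ _) _)

lemma Rint_le (v : NNReal) (hv : v ≠ 0) {lam τ μ : ℝ} (hl : 0 ≤ lam) (hτ : 0 ≤ τ) (hμ : 0 ≤ μ)
    {κ : Type} [Fintype κ] {q t : ℕ} (m : ℕ) (htq : t + q ≤ Fintype.card κ + 1) (T : ℕ) (hT : t ≤ T) :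
    Rint v lam κ m T ≤ rho v lam τ μ m q ^ t := by
  have hrho : 0 ≤ rho v lam τ μ m q := by
    unfold rho
    have := hh_nonneg v (lam * τ)
    have := hh_nonneg v μ
    positivity
  have base : ∀ t, t + q ≤ Fintype.card κ + 1 → Rint v lam κ m t ≤ rho v lam τ μ m q ^ t := by
    intro t
    induction t with
    | zero =>
      intro _
      unfold Rint
      calc _ ≤ ∫ b : Fin 0 → κ → ℝ, (1:ℝ) ∂Measure.pi (fun _ : Fin 0 => gm v κ) := by
            apply integral_mono (phi_pow_integrable v hl m _) (integrable_const _)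
            intro b
            exact pow_le_one₀ (phi_nonneg _ _ _) (phi_le_one v hl _ _)
        _ = _ := by simp
    | succ t ih =>
      intro h
      rw [pow_succ, mul_comm]
      refine (Rint_step_gen v hv hl (q := q) (Or.inl (by omega)) m _
        (fun e he => rho_bound v hv hl hτ hμ m e he)).trans ?_
      exact mul_le_mul_of_nonneg_left (ih (by omega)) hrho
  induction T, hT using Nat.le_induction with
  | base => exact base t htq
  | succ T hT ih =>
    refine le_trans ?_ ih
    have := Rint_step_gen v hv hl (κ := κ) (q := 0) (T := T) (Or.inr rfl) m 1 (by
      intro e he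
      calc _ ≤ ∫ b0, (1:ℝ) ∂gm v κ := by
            apply integral_mono_of_nonneg
            · exact Filter.Eventually.of_forall fun _ => pow_nonneg (hh_nonneg _ _) _
            · exact integrable_const _
            · exact Filter.Eventually.of_forall fun _ =>
                pow_le_one₀ (hh_nonneg _ _) (hh_le_one v hv (by positivity))
        _ ≤ 1 := by simp)
    linarith


lemma append_mp {α : Type} [MeasurableSpace α] (P : Measure α) [IsProbabilityMeasure P] (k m : ℕ) :
    MeasurePreserving (fun x : (Fin k → α) × (Fin m → α) => (Fin.append x.1 x.2 : Fin (k + m) → α))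
      ((Measure.pi fun _ : Fin k => P).prod (Measure.pi fun _ : Fin m => P))
      (Measure.pi fun _ : Fin (k + m) => P) := by
  have hmeas : Measurable (fun x : (Fin k → α) × (Fin m → α) => (Fin.append x.1 x.2 : Fin (k + m) → α)) := by
    rw [measurable_pi_iff]
    intro i
    refine Fin.addCases (fun i => ?_) (fun i => ?_) i
    · simp only [Fin.append_left]; fun_prop
    · simp only [Fin.append_right]; fun_prop
  refine ⟨hmeas, ?_⟩
  symm
  apply Measure.pi_eq
  intro s hs
  rw [Measure.map_apply hmeas (MeasurableSet.univ_pi hs)]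
  have : (fun x : (Fin k → α) × (Fin m → α) => (Fin.append x.1 x.2 : Fin (k + m) → α)) ⁻¹' (Set.univ.pi s)
      = (Set.univ.pi fun i => s (Fin.castAdd m i)) ×ˢ (Set.univ.pi fun i => s (Fin.natAdd k i)) := by
    ext ⟨x, y⟩
    simp only [Set.mem_preimage, Set.mem_univ_pi, Set.mem_prod]
    constructor
    · intro h
      exact ⟨fun i => by simpa using h (Fin.castAdd m i), fun i => by simpa using h (Fin.natAdd k i)⟩
    · rintro ⟨h1, h2⟩ i
      refine Fin.addCases (fun i => ?_) (fun i => ?_) i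
      · simpa using h1 i
      · simpa using h2 i
  rw [this, Measure.prod_prod, Measure.pi_pi, Measure.pi_pi, Fin.prod_univ_add]

lemma block_bound (v : NNReal) (hv : v ≠ 0) {lam : ℝ} (hl : 0 ≤ lam) {κ : Type} [Fintype κ] (k m : ℕ)
    (Y : Fin m → Fin k → ℝ) :
    ∫ Z : Fin (k + m) → κ → ℝ, Real.exp (-lam * ∑ l : Fin m, ∑ i : Fin k,
      (∑ a, Z (Fin.natAdd k l) a * Z (Fin.castAdd m i) a - Y l i) ^ 2)
        ∂Measure.pi (fun _ : Fin (k + m) => gm v κ) ≤ Rint v lam κ m k := by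
  rw [← (append_mp (gm v κ) k m).map_eq, integral_map (append_mp (gm v κ) k m).measurable.aemeasurable
    (Continuous.aestronglyMeasurable (by fun_prop))]
  simp only [Fin.append_left, Fin.append_right]
  rw [integral_prod]
  · unfold Rint
    apply integral_mono_of_nonneg
    · exact Filter.Eventually.of_forall fun _ => integral_nonneg fun _ => (Real.exp_pos _).le
    · exact phi_pow_integrable v hl m _
    · refine Filter.Eventually.of_forall fun B => ?_
      simp only
      have : ∀ W : Fin m → κ → ℝ, Real.exp (-lam * ∑ l : Fin m, ∑ i : Fin k,
          (∑ a, W l a * B i a - Y l i) ^ 2) = ∏ l, Real.exp (-lam * ∑ i : Fin k,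
          (∑ a, W l a * B i a - Y l i) ^ 2) := by
        intro W
        rw [← Real.exp_sum, Finset.mul_sum]
      simp_rw [this]
      rw [integral_fintype_prod_eq_prod (fun l (w : κ → ℝ) => Real.exp (-lam * ∑ i : Fin k,
          (∑ a, w a * B i a - Y l i) ^ 2))]
      calc _ = ∏ l, phi v lam (fun a i => B i a) (Y l) := rfl
        _ ≤ ∏ l : Fin m, phi v lam B 0 := Finset.prod_le_prod (fun _ _ => phi_nonneg _ _ _)
            (fun l _ => phi_dual v hv hl (fun a i => B i a) (Y l))
        _ = _ := by simp
  · apply int_of_bound_one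
    · apply Continuous.aestronglyMeasurable
      fun_prop
    · intro w; exact norm_exp_neg_le_one (by positivity) (by positivity)

lemma swap_mp (P : Measure ℝ) [IsProbabilityMeasure P] (k d : ℕ) :
    MeasurePreserving (fun (B : Fin k → Fin d → ℝ) (a : Fin d) (i : Fin k) => B i a)
      (Measure.pi fun _ : Fin k => Measure.pi fun _ : Fin d => P)
      (Measure.pi fun _ : Fin d => Measure.pi fun _ : Fin k => P) := by
  refine ⟨by fun_prop, ?_⟩
  have h1 : ∀ k d : ℕ, (Measure.pi fun _ : Fin k => Measure.pi fun _ : Fin d => P) =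
      (Measure.pi fun _ : Fin k × Fin d => P).map (MeasurableEquiv.curry (Fin k) (Fin d) ℝ) := by
    intro k d
    have := Measure.infinitePi_map_curry (fun (_ : Fin k) (_ : Fin d) => P)
    simp only [Measure.infinitePi_eq_pi] at this
    exact this.symm
  have h2 : (Measure.pi fun _ : Fin d × Fin k => P) =
      (Measure.pi fun _ : Fin k × Fin d => P).map (fun x p => x (p.2, p.1)) := by
    apply Measure.pi_eq
    intro s hs
    rw [Measure.map_apply (by fun_prop) (MeasurableSet.univ_pi hs)]
    have : (fun (x : Fin k × Fin d → ℝ) (p : Fin d × Fin k) => x (p.2, p.1)) ⁻¹' (Set.univ.pi s) =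
        Set.univ.pi (fun p : Fin k × Fin d => s (p.2, p.1)) := by
      ext x
      simp only [Set.mem_preimage, Set.mem_univ_pi, Prod.forall]
      exact forall_comm
    rw [this, Measure.pi_pi]
    exact (Equiv.prodComm (Fin k) (Fin d)).prod_comp (fun p => P (s p))
  rw [h1 k d, h1 d k, h2, Measure.map_map (by fun_prop) (by fun_prop),
    Measure.map_map (by fun_prop) (by fun_prop)]
  rfl

lemma Rint_swap (v : NNReal) (hv : v ≠ 0) {lam : ℝ} (hl : 0 ≤ lam) (k d m : ℕ) :
    Rint v lam (Fin d) m k ≤ Rint v lam (Fin k) m d := by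
  have hmp : MeasurePreserving _ (Measure.pi fun _ : Fin k => gm v (Fin d))
    (Measure.pi fun _ : Fin d => gm v (Fin k)) := swap_mp (gaussianReal 0 v) k d
  unfold Rint
  rw [← hmp.map_eq, integral_map hmp.measurable.aemeasurable
    (phi_pow_integrable v hl m _).aestronglyMeasurable]
  apply integral_mono (phi_pow_integrable v hl m _)
  · apply int_of_bound_one
    · exact (((phi_measurable v 0).comp_measurable hmp.measurable).pow m).aestronglyMeasurable
    · intro b
      rw [Real.norm_of_nonneg (pow_nonneg (phi_nonneg _ _ _) _)]
      exact pow_le_one₀ (phi_nonneg _ _ _) (phi_le_one v hl _ _)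
  · intro B
    exact pow_le_pow_left₀ (phi_nonneg _ _ _) (phi_dual v hv hl B 0) m

lemma rho_final (d n m q : ℕ) (hd : 0 < d) (hn : 1 ≤ n) (hm : n ≤ 2 * m) (hq : n ≤ 6 * q) (A lam : ℝ)
    (hA : 24 ≤ A) (hlam : Real.exp A ≤ 2 * lam * Real.exp (-A-1) * q / d ^ 2) (hl : 0 ≤ lam) :
    rho (d : NNReal)⁻¹ lam (Real.exp (-A-1) * q / d) (d / (2 * Real.exp (-A-1))) m q
      ≤ Real.exp (-A * n / 24) := by
  have hd' : (0:ℝ) < d := by exact_mod_cast hd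
  have hn' : (1:ℝ) ≤ n := by exact_mod_cast hn
  have hm' : (n:ℝ) ≤ 2 * m := by exact_mod_cast hm
  have hq' : (n:ℝ) ≤ 6 * q := by exact_mod_cast hq
  have hv : ((d : NNReal)⁻¹) ≠ 0 := by positivity
  have hvr : (((d : NNReal)⁻¹ : NNReal) : ℝ) = (d:ℝ)⁻¹ := by simp
  set δ := Real.exp (-A-1) with hδ
  have hδp : 0 < δ := Real.exp_pos _
  have gen : ∀ x y : ℝ, 0 ≤ x → Real.exp y ≤ 1 + 2 * (d:ℝ)⁻¹ * x → hh (d : NNReal)⁻¹ x ≤ Real.exp (-y/2) := by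
    intro x y hx h
    rw [hh_eq _ hv _ hx, hvr]
    calc _ ≤ (Real.exp y) ^ (-(1/2) : ℝ) :=
          Real.rpow_le_rpow_of_nonpos (Real.exp_pos _) h (by norm_num)
      _ = _ := by rw [← Real.exp_mul]; congr 1; ring
  have h1 : hh (d : NNReal)⁻¹ (lam * (δ * q / d)) ≤ Real.exp (-A/2) := by
    apply gen _ _ (by positivity)
    calc _ ≤ _ := hlam
      _ = 2 * (d:ℝ)⁻¹ * (lam * (δ * q / d)) := by field_simp
      _ ≤ _ := by linarith
  have h2 : hh (d : NNReal)⁻¹ (d / (2 * δ)) ≤ Real.exp (-(A+1)/2) := by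
    apply gen _ _ (by positivity)
    have : 2 * (d:ℝ)⁻¹ * (d / (2 * δ)) = Real.exp (A + 1) := by
      rw [show A + 1 = -(-A-1) by ring, Real.exp_neg, ← hδ]
      field_simp
    rw [this]; linarith
  have h3 : hh (d : NNReal)⁻¹ (lam * (δ * q / d)) ^ m ≤ Real.exp (-A * n / 12) := by
    calc _ ≤ Real.exp (-A/2) ^ m := pow_le_pow_left₀ (hh_nonneg _ _) h1 m
      _ = Real.exp (m * (-A/2)) := by rw [Real.exp_nat_mul]
      _ ≤ _ := by
        apply Real.exp_le_exp.mpr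
        nlinarith
  have h4 : Real.exp (d / (2 * δ) * (δ * q / d)) * hh (d : NNReal)⁻¹ (d / (2 * δ)) ^ q ≤
      Real.exp (-A * n / 12) := by
    calc _ ≤ Real.exp (d / (2 * δ) * (δ * q / d)) * Real.exp (-(A+1)/2) ^ q := by
          gcongr
          exact hh_nonneg _ _
      _ = Real.exp (d / (2 * δ) * (δ * q / d) + q * (-(A+1)/2)) := by
          rw [← Real.exp_nat_mul, ← Real.exp_add]
      _ ≤ _ := by
        apply Real.exp_le_exp.mpr
        have : d / (2 * δ) * (δ * q / d) = (q:ℝ)/2 := by field_simp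
        rw [this]
        nlinarith
  unfold rho
  have h5 : Real.exp (-A * n / 24) * (2 * Real.exp (-A * n / 24)) ≤ Real.exp (-A * n / 24) := by
    have : 2 * Real.exp (-A * n / 24) ≤ 1 := by
      have : Real.exp (-A * n / 24) ≤ Real.exp (-1) := by
        apply Real.exp_le_exp.mpr
        nlinarith
      have h2 : Real.exp (-1) ≤ 1/2 := by
        rw [Real.exp_neg]
        have := Real.add_one_le_exp (1:ℝ)
        rw [inv_le_comm₀ (Real.exp_pos _) (by norm_num)]
        norm_num at this ⊢
        exact this
      linarith
    nlinarith [Real.exp_pos (-A * n / 24)]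
  have h6 : Real.exp (-A * n / 12) = Real.exp (-A * n / 24) * Real.exp (-A * n / 24) := by
    rw [← Real.exp_add]; congr 1; ring
  nlinarith

/-- Bound for the Gaussian functional in the case `n ≥ 2`. -/
lemma block_final (n d : ℕ) (hn : 2 ≤ n) (hd : 0 < d) (A : ℝ) (hA : 24 ≤ A) :
    Rint (d : NNReal)⁻¹ (3 * Real.exp (2 * A + 1) * d * (min n d : ℕ) / n) (Fin d) (n - n / 2) (n / 2)
      ≤ Real.exp (-A * (n * (min n d : ℕ)) / 96) := by
  have hd' : (0:ℝ) < d := by exact_mod_cast hd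
  have hn0 : (0:ℝ) < n := by exact_mod_cast (by omega : 0 < n)
  have hv : ((d : NNReal)⁻¹) ≠ 0 := by positivity
  set lam : ℝ := 3 * Real.exp (2 * A + 1) * d * (min n d : ℕ) / n with hlam
  have hl : 0 ≤ lam := by positivity
  have he : Real.exp (2 * A + 1) * Real.exp (-A-1) = Real.exp A := by
    rw [← Real.exp_add]; congr 1; ring
  have hfin : ∀ t q : ℕ, n ≤ 6 * q → min n d ≤ 4 * t → 
      Real.exp A ≤ 2 * lam * Real.exp (-A-1) * q / d ^ 2 →
      rho (d : NNReal)⁻¹ lam (Real.exp (-A-1) * q / d) (d / (2 * Real.exp (-A-1))) (n - n/2) q ^ t ≤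
        Real.exp (-A * (n * (min n d : ℕ)) / 96) := by
    intro t q hq ht hh1
    have hr := rho_final d n (n - n/2) q hd (by omega) (by omega) hq A lam hA hh1 hl
    have hr0 : 0 ≤ rho (d : NNReal)⁻¹ lam (Real.exp (-A-1) * q / d) (d / (2 * Real.exp (-A-1))) (n - n/2) q := by
      unfold rho
      have := hh_nonneg (d : NNReal)⁻¹ (lam * (Real.exp (-A-1) * q / d))
      have := hh_nonneg (d : NNReal)⁻¹ (d / (2 * Real.exp (-A-1)))
      positivity
    calc _ ≤ Real.exp (-A * n / 24) ^ t := pow_le_pow_left₀ hr0 hr t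
      _ = Real.exp (t * (-A * n / 24)) := by rw [Real.exp_nat_mul]
      _ ≤ _ := by
        apply Real.exp_le_exp.mpr
        have ht' : ((min n d : ℕ) : ℝ) ≤ 4 * t := by exact_mod_cast ht
        have : 0 ≤ A * n := by positivity
        nlinarith
  have hkey : ∀ q : ℕ, 2 * lam * Real.exp (-A-1) * q / d ^ 2 = Real.exp A * (6 * (min n d : ℕ) * q / (n * d)) := by
    intro q
    rw [← he, hlam]; field_simp; ring
  rcases le_or_gt n d with h | h
  · have hmin : min n d = n := min_eq_left h
    have hq : d ≤ 2 * (d - n/2 + 1) := by omega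
    have hq' : (d:ℝ) ≤ 2 * (d - n/2 + 1 : ℕ) := by exact_mod_cast hq
    refine (Rint_le _ hv hl (τ := Real.exp (-A-1) * (d - n/2 + 1 : ℕ) / d)
      (μ := d / (2 * Real.exp (-A-1))) (by positivity) (by positivity)
      (q := d - n/2 + 1) (t := n/2) (n - n/2) (by rw [Fintype.card_fin]; omega) _ le_rfl).trans ?_
    apply hfin _ _ (by omega) (by omega)
    rw [hkey, hmin]
    apply le_mul_of_one_le_right (Real.exp_pos _).le
    rw [one_le_div (by positivity)]
    nlinarith
  · have hmin : min n d = d := min_eq_right h.le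
    refine (Rint_swap _ hv hl _ _ _).trans ?_
    have hq : n ≤ 6 * (n/2 - n/2/2) := by omega
    have hq' : (n:ℝ) ≤ 6 * (n/2 - n/2/2 : ℕ) := by exact_mod_cast hq
    refine (Rint_le _ hv hl (τ := Real.exp (-A-1) * (n/2 - n/2/2 : ℕ) / d)
      (μ := d / (2 * Real.exp (-A-1))) (by positivity) (by positivity)
      (q := n/2 - n/2/2) (t := min d (n/2/2+1)) (n - n/2) (by rw [Fintype.card_fin]; omega) _
      (min_le_left _ _)).trans ?_
    apply hfin _ _ (by omega) (by omega)
    rw [hkey, hmin]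
    apply le_mul_of_one_le_right (Real.exp_pos _).le
    rw [one_le_div (by positivity)]
    nlinarith


lemma gaussianMatrix_eq (n d : ℕ) : gaussianMatrix n d =
    (Measure.pi fun _ : Fin n => gm (d : NNReal)⁻¹ (Fin d)) := rfl

instance (n d : ℕ) : IsProbabilityMeasure (gaussianMatrix n d) := by
  have : IsProbabilityMeasure (Measure.pi fun _ : Fin n => gm (d : NNReal)⁻¹ (Fin d)) := inferInstance
  exact this

/-- Chernoff-type bound. -/
lemma chernoff {α : Type*} [MeasurableSpace α] (P : Measure α) [IsFiniteMeasure P] (f : α → ℝ)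
    (hf : Integrable f P) (hf0 : ∀ x, 0 ≤ f x) (S : Set α) (r : ℝ) (hS : ∀ x ∈ S, Real.exp (-r) ≤ f x) :
    P.real S ≤ Real.exp r * ∫ x, f x ∂P := by
  have h1 := mul_meas_ge_le_integral_of_nonneg (Filter.Eventually.of_forall hf0) hf (Real.exp (-r))
  have h2 : P.real S ≤ P.real {x | Real.exp (-r) ≤ f x} := measureReal_mono hS
  calc _ ≤ P.real {x | Real.exp (-r) ≤ f x} := h2
    _ = Real.exp r * (Real.exp (-r) * P.real {x | Real.exp (-r) ≤ f x}) := by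
      rw [← mul_assoc, ← Real.exp_add]; simp
    _ ≤ _ := mul_le_mul_of_nonneg_left h1 (Real.exp_pos _).le

lemma sb_block (k m d : ℕ) (hn : 2 ≤ k + m) (hk : (k + m) / 2 = k) (hd : 0 < d) (A D : ℝ) (hA : 24 ≤ A)
    (hD : D ≤ 1 / (6 * Real.exp (2 * A + 1))) (Y : Matrix (Fin (k + m)) (Fin (k + m)) ℝ) :
    (gaussianMatrix (k + m) d).real {Z | lossL (k + m) d (Z * Zᵀ) Y ≤ D} ≤
      Real.exp ((1 - A / 96) * ((k + m : ℕ) * (min (k + m) d : ℕ))) := by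
  have hd' : (0:ℝ) < d := by exact_mod_cast hd
  have hn0 : (2:ℝ) ≤ (k + m : ℕ) := by exact_mod_cast hn
  have hv : ((d : NNReal)⁻¹) ≠ 0 := by positivity
  have h1 := block_final (k + m) d hn hd A hA
  have e2 : k + m - (k + m) / 2 = m := by omega
  rw [e2, hk] at h1
  set lam : ℝ := 3 * Real.exp (2 * A + 1) * d * (min (k + m) d : ℕ) / (k + m : ℕ) with hlam
  have hl : 0 ≤ lam := by positivity
  have h2 := block_bound (d : NNReal)⁻¹ hv hl (κ := Fin d) k m
    (fun l i => Y (Fin.natAdd k l) (Fin.castAdd m i))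
  rw [gaussianMatrix_eq]
  refine (chernoff (Measure.pi fun _ : Fin (k + m) => gm (d : NNReal)⁻¹ (Fin d))
    (fun Z => Real.exp (-lam * ∑ l : Fin m, ∑ i : Fin k,
      (∑ a, Z (Fin.natAdd k l) a * Z (Fin.castAdd m i) a - Y (Fin.natAdd k l) (Fin.castAdd m i)) ^ 2)) ?_
      (fun _ => (Real.exp_pos _).le) _ ((k + m : ℕ) * (min (k + m) d : ℕ)) ?_).trans ?_
  · apply int_of_bound_one
    · apply Continuous.aestronglyMeasurable
      fun_prop
    · intro w; exact norm_exp_neg_le_one (by positivity) (by positivity)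
  · intro Z hZ
    apply Real.exp_le_exp.mpr
    have hZ' : lossL (k + m) d (Matrix.of Z * (Matrix.of Z)ᵀ) Y ≤ D := hZ
    have hb : ∑ l : Fin m, ∑ i : Fin k,
      (∑ a, Z (Fin.natAdd k l) a * Z (Fin.castAdd m i) a - Y (Fin.natAdd k l) (Fin.castAdd m i)) ^ 2
      ≤ frobSq (Matrix.of Z * (Matrix.of Z)ᵀ) Y := by
      unfold frobSq
      rw [Fin.sum_univ_add]
      have : ∀ l : Fin m, ∑ i : Fin k,
        (∑ a, Z (Fin.natAdd k l) a * Z (Fin.castAdd m i) a - Y (Fin.natAdd k l) (Fin.castAdd m i)) ^ 2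
        ≤ ∑ j, ((Matrix.of Z * (Matrix.of Z)ᵀ) (Fin.natAdd k l) j - Y (Fin.natAdd k l) j) ^ 2 := by
        intro l
        rw [Fin.sum_univ_add]
        simp only [Matrix.mul_apply, Matrix.transpose_apply, Matrix.of_apply]
        have : 0 ≤ ∑ i : Fin m, (∑ j, Z (Fin.natAdd k l) j * Z (Fin.natAdd k i) j - Y (Fin.natAdd k l) (Fin.natAdd k i)) ^ 2 := by
          positivity
        linarith
      have h3 := Finset.sum_le_sum (s := Finset.univ) fun l _ => this l
      have h4 : 0 ≤ ∑ i : Fin k, ∑ j, ((Matrix.of Z * (Matrix.of Z)ᵀ) (Fin.castAdd m i) j - Y (Fin.castAdd m i) j) ^ 2 := by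
        positivity
      linarith
    have hf0 : 0 ≤ frobSq (Matrix.of Z * (Matrix.of Z)ᵀ) Y := by unfold frobSq; positivity
    set fr := frobSq (Matrix.of Z * (Matrix.of Z)ᵀ) Y with hfr
    unfold lossL at hZ'
    rw [← hfr] at hZ'
    have h5 : lam * fr ≤ (k + m : ℕ) * (min (k + m) d : ℕ) := by
      have hc : lam * fr = 3 * Real.exp (2 * A + 1) * (min (k + m) d : ℕ) * ((k + m : ℕ) + 1) *
          ((d / ((k + m : ℕ) * ((k + m : ℕ) + 1))) * fr) := by
        rw [hlam]; field_simp
      rw [hc]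
      calc _ ≤ 3 * Real.exp (2 * A + 1) * (min (k + m) d : ℕ) * ((k + m : ℕ) + 1) *
            (1 / (6 * Real.exp (2 * A + 1))) := by
              apply mul_le_mul_of_nonneg_left (hZ'.trans hD) (by positivity)
        _ = (min (k + m) d : ℕ) * (((k + m : ℕ) + 1) / 2) := by field_simp; norm_num
        _ ≤ (min (k + m) d : ℕ) * ((k + m : ℕ)) := by gcongr; linarith
        _ = _ := mul_comm _ _
    have h6 := mul_le_mul_of_nonneg_left hb hl
    linarith
  · calc _ ≤ Real.exp ((k + m : ℕ) * (min (k + m) d : ℕ)) *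
          Real.exp (-A * ((k + m : ℕ) * (min (k + m) d : ℕ)) / 96) := by
          apply mul_le_mul_of_nonneg_left (h2.trans h1) (Real.exp_pos _).le
      _ = _ := by rw [← Real.exp_add]; congr 1; ring

lemma sb_ge_two (n d : ℕ) (hn : 2 ≤ n) (hd : 0 < d) (A D : ℝ) (hA : 24 ≤ A)
    (hD : D ≤ 1 / (6 * Real.exp (2 * A + 1))) (Y : Matrix (Fin n) (Fin n) ℝ) :
    (gaussianMatrix n d).real {Z | lossL n d (Z * Zᵀ) Y ≤ D} ≤
      Real.exp ((1 - A / 96) * (n * (min n d : ℕ))) := by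
  obtain ⟨k, m, rfl, hk⟩ : ∃ k m, n = k + m ∧ (k + m) / 2 = k :=
    ⟨n / 2, n - n / 2, by omega, by omega⟩
  exact sb_block k m d hn hk hd A D hA hD Y

/-- one dimensional quadratic form -/
lemma one_bound (v : NNReal) (hv : v ≠ 0) {lam : ℝ} (hl : 0 ≤ lam) {κ : Type} [Fintype κ] (y : ℝ) :
    ∫ z : κ → ℝ, Real.exp (-lam * (∑ a, z a ^ 2 - y) ^ 2) ∂gm v κ ≤
      ∫ g, ((1 + 8 * lam * v ^ 2 * g ^ 2) ^ (-(1/4) : ℝ)) ^ (Fintype.card κ) ∂gaussianReal 0 1 := by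
  set s : ℝ := Real.sqrt (2 * lam) with hs
  have hs2 : s ^ 2 = 2 * lam := Real.sq_sqrt (by positivity)
  have key : ∀ x : ℝ, ∫ g : ℝ, Complex.exp (Complex.I * ((g * (s * x) : ℝ) : ℂ)) ∂gaussianReal 0 1
      = ((Real.exp (-lam * x ^ 2) : ℝ) : ℂ) := by
    intro x
    have := charFun_gaussianReal (μ := 0) (v := 1) (s * x)
    rw [charFun_apply_real] at this
    calc _ = ∫ g : ℝ, Complex.exp ((s * x : ℝ) * g * Complex.I) ∂gaussianReal 0 1 := by
          congr 1; ext g; congr 1; push_cast; ring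
      _ = _ := this
      _ = _ := by
        have h : (s : ℂ) ^ 2 = 2 * lam := by exact_mod_cast hs2
        push_cast
        congr 1
        rw [mul_pow, h]; simp; ring
  have hnorm : ∀ r : ℝ, ‖Complex.exp (Complex.I * (r : ℂ))‖ = 1 := by
    intro r; rw [mul_comm]; exact Complex.norm_exp_ofReal_mul_I r
  have e1 : ((∫ z : κ → ℝ, Real.exp (-lam * (∑ a, z a ^ 2 - y) ^ 2) ∂gm v κ : ℝ) : ℂ) = ∫ z, ∫ g : ℝ,
      Complex.exp (Complex.I * ((g * (s * (∑ a, z a ^ 2 - y)) : ℝ) : ℂ)) ∂gaussianReal 0 1 ∂gm v κ := by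
    rw [← integral_complex_ofReal]
    simp_rw [key]
  have e2 : (∫ z : κ → ℝ, ∫ g : ℝ,
      Complex.exp (Complex.I * ((g * (s * (∑ a, z a ^ 2 - y)) : ℝ) : ℂ)) ∂gaussianReal 0 1 ∂gm v κ)
      = ∫ g : ℝ, Complex.exp (Complex.I * ((-(g * (s * y)) : ℝ) : ℂ)) *
         (∫ w : ℝ, Complex.exp (-(-(Complex.I * (g * s : ℝ))) * w ^ 2) ∂gaussianReal 0 v) ^ (Fintype.card κ)
          ∂gaussianReal 0 1 := by
    rw [integral_integral_swap]
    · congr 1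
      ext g
      rw [← integral_fintype_prod_eq_pow]
      unfold gm
      rw [← integral_const_mul]
      congr 1
      ext z
      rw [← Complex.exp_sum, ← Complex.exp_add]
      congr 1
      push_cast
      rw [← Finset.mul_sum]
      ring
    · apply int_of_bound_one
      · apply Continuous.aestronglyMeasurable
        fun_prop
      · rintro ⟨g, h⟩
        exact (hnorm _).le
  have e3 : ‖((∫ z : κ → ℝ, Real.exp (-lam * (∑ a, z a ^ 2 - y) ^ 2) ∂gm v κ : ℝ) : ℂ)‖ ≤
      ∫ g, ((1 + 8 * lam * v ^ 2 * g ^ 2) ^ (-(1/4) : ℝ)) ^ (Fintype.card κ) ∂gaussianReal 0 1 := by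
    rw [e1, e2]
    refine (norm_integral_le_integral_norm _).trans (le_of_eq ?_)
    congr 1
    ext g
    rw [norm_mul, hnorm, one_mul, norm_pow, gauss_complex v hv _ (by simp)]
    congr 1
    have h1 : ‖1 + 2 * (v:ℂ) * -(Complex.I * (g * s : ℝ))‖ ^ 2 = 1 + 8 * lam * v ^ 2 * g ^ 2 := by
      rw [← Complex.normSq_eq_norm_sq, Complex.normSq_apply]
      simp
      linear_combination 4 * (v:ℝ) ^ 2 * g ^ 2 * hs2
    rw [← h1, ← Real.rpow_natCast, ← Real.rpow_mul (norm_nonneg _)]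
    norm_num
  rw [Complex.norm_real] at e3
  exact (le_abs_self _).trans e3

lemma one_tail {B τ : ℝ} (hB : 0 ≤ B) (hτ : 0 < τ) :
    ∫ g : ℝ, (1 + B * g ^ 2) ^ (-(1/4) : ℝ) ∂gaussianReal 0 1 ≤
      (1 + B * τ) ^ (-(1/4) : ℝ) + Real.exp 1 * τ ^ (1/2 : ℝ) := by
  have hpt : ∀ g : ℝ, (1 + B * g ^ 2) ^ (-(1/4) : ℝ) ≤
      (1 + B * τ) ^ (-(1/4) : ℝ) + Real.exp 1 * Real.exp (-τ⁻¹ * g ^ 2) := by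
    intro g
    rcases le_total τ (g ^ 2) with h | h
    · have : (1 + B * g ^ 2) ^ (-(1/4) : ℝ) ≤ (1 + B * τ) ^ (-(1/4) : ℝ) := by
        apply Real.rpow_le_rpow_of_nonpos (by positivity) _ (by norm_num)
        gcongr
      have : 0 < Real.exp 1 * Real.exp (-τ⁻¹ * g ^ 2) := by positivity
      linarith
    · have h1 : (1 + B * g ^ 2) ^ (-(1/4) : ℝ) ≤ 1 := by
        apply Real.rpow_le_one_of_one_le_of_nonpos _ (by norm_num)
        have : 0 ≤ B * g ^ 2 := by positivity
        linarith
      have h2 : 1 ≤ Real.exp 1 * Real.exp (-τ⁻¹ * g ^ 2) := by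
        rw [← Real.exp_add, Real.one_le_exp_iff]
        have : τ⁻¹ * g ^ 2 ≤ 1 := by rw [inv_mul_le_iff₀ hτ]; linarith
        linarith
      have : 0 ≤ (1 + B * τ) ^ (-(1/4) : ℝ) := by positivity
      linarith
  have hIntg : Integrable (fun g : ℝ => Real.exp (-τ⁻¹ * g ^ 2)) (gaussianReal 0 1) := by
    apply int_of_bound_one
    · apply Continuous.aestronglyMeasurable
      fun_prop
    · intro w; exact norm_exp_neg_le_one (by positivity) (by positivity)
  calc _ ≤ ∫ g : ℝ, ((1 + B * τ) ^ (-(1/4) : ℝ) + Real.exp 1 * Real.exp (-τ⁻¹ * g ^ 2)) ∂gaussianReal 0 1 := by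
        apply integral_mono_of_nonneg
        · exact Filter.Eventually.of_forall fun g => by simp only [Pi.zero_apply]; positivity
        · exact (integrable_const _).add (hIntg.const_mul _)
        · exact Filter.Eventually.of_forall hpt
    _ = (1 + B * τ) ^ (-(1/4) : ℝ) + Real.exp 1 * hh 1 τ⁻¹ := by
        rw [integral_add (integrable_const _) (hIntg.const_mul _), integral_const_mul]
        simp [hh]
    _ ≤ _ := by
        gcongr
        rw [hh_eq 1 one_ne_zero _ (by positivity)]
        calc _ ≤ (τ⁻¹) ^ (-(1/2) : ℝ) := by
              apply Real.rpow_le_rpow_of_nonpos (by positivity) _ (by norm_num)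
              have : 0 < τ⁻¹ := by positivity
              push_cast
              linarith
          _ = _ := by rw [Real.inv_rpow hτ.le, Real.rpow_neg hτ.le, inv_inv]

lemma sb_one (d : ℕ) (hd : 0 < d) (K D : ℝ) (hD0 : 0 < D)
    (hD : D ≤ 4 * Real.exp (-2 * (K + 3)) * Real.exp (-4 * (K + 2))) (Y : Matrix (Fin 1) (Fin 1) ℝ) :
    (gaussianMatrix 1 d).real {Z | lossL 1 d (Z * Zᵀ) Y ≤ D} ≤ Real.exp (-K) := by
  have hd' : (0:ℝ) < d := by exact_mod_cast hd
  have hv : ((d : NNReal)⁻¹) ≠ 0 := by positivity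
  set lam : ℝ := d / (2 * D) with hlam
  have hl : 0 ≤ lam := by positivity
  have hev : MeasurePreserving (fun Z : Fin 1 → Fin d → ℝ => Z 0)
    (Measure.pi fun _ : Fin 1 => gm (d : NNReal)⁻¹ (Fin d)) (gm (d : NNReal)⁻¹ (Fin d)) :=
    measurePreserving_eval (fun _ : Fin 1 => gm (d : NNReal)⁻¹ (Fin d)) 0
  rw [gaussianMatrix_eq]
  refine (chernoff (Measure.pi fun _ : Fin 1 => gm (d : NNReal)⁻¹ (Fin d))
    (fun Z => Real.exp (-lam * (∑ a, Z 0 a ^ 2 - Y 0 0) ^ 2)) ?_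
      (fun _ => (Real.exp_pos _).le) _ 1 ?_).trans ?_
  · apply int_of_bound_one
    · apply Continuous.aestronglyMeasurable
      fun_prop
    · intro w; exact norm_exp_neg_le_one (by positivity) (by positivity)
  · intro Z hZ
    apply Real.exp_le_exp.mpr
    have hZ' : lossL 1 d (Matrix.of Z * (Matrix.of Z)ᵀ) Y ≤ D := hZ
    simp only [lossL, frobSq, Finset.univ_unique, Finset.sum_singleton, Matrix.mul_apply,
      Matrix.transpose_apply, Matrix.of_apply, Fin.default_eq_zero] at hZ'
    simp_rw [← sq] at hZ'
    set S := (∑ a, Z 0 a ^ 2 - Y 0 0) ^ 2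
    have : lam * S ≤ 1 := by
      rw [hlam, div_mul_eq_mul_div, div_le_one (by positivity)]
      norm_num at hZ'
      linarith
    linarith
  · have h1 : ∫ Z : Fin 1 → Fin d → ℝ, Real.exp (-lam * (∑ a, Z 0 a ^ 2 - Y 0 0) ^ 2)
        ∂(Measure.pi fun _ : Fin 1 => gm (d : NNReal)⁻¹ (Fin d)) =
        ∫ z : Fin d → ℝ, Real.exp (-lam * (∑ a, z a ^ 2 - Y 0 0) ^ 2) ∂gm (d : NNReal)⁻¹ (Fin d) := by
      conv_rhs => rw [← hev.map_eq]
      rw [integral_map hev.measurable.aemeasurable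
        (Continuous.aestronglyMeasurable (by fun_prop))]
    rw [h1]
    have h2 := one_bound (d : NNReal)⁻¹ hv hl (κ := Fin d) (Y 0 0)
    have hmeas : ∀ B : ℝ, Measurable (fun g : ℝ => (1 + B * g ^ 2) ^ (-(1/4) : ℝ)) := by
      intro B; fun_prop
    have h3 : ∫ g : ℝ, ((1 + 8 * lam * (((d : NNReal)⁻¹ : NNReal) : ℝ) ^ 2 * g ^ 2) ^ (-(1/4) : ℝ)) ^ (Fintype.card (Fin d))
        ∂gaussianReal 0 1 ≤ ∫ g : ℝ, (1 + (4 / D) * g ^ 2) ^ (-(1/4) : ℝ) ∂gaussianReal 0 1 := by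
      apply integral_mono_of_nonneg
      · exact Filter.Eventually.of_forall fun g => by simp only [Pi.zero_apply]; positivity
      · apply int_of_bound_one (hmeas _).aestronglyMeasurable
        intro g
        rw [Real.norm_of_nonneg (by positivity)]
        apply Real.rpow_le_one_of_one_le_of_nonpos _ (by norm_num)
        have : 0 ≤ (4 / D) * g ^ 2 := by positivity
        linarith
      · refine Filter.Eventually.of_forall fun g => ?_
        simp only [Fintype.card_fin]
        have h0 : 0 ≤ (4 / D) * g ^ 2 := by positivity
        have e : 1 + 8 * lam * (((d : NNReal)⁻¹ : NNReal) : ℝ) ^ 2 * g ^ 2 = 1 + (4 / D) * g ^ 2 / d := by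
          rw [hlam]; push_cast; field_simp; ring
        rw [e, ← Real.rpow_natCast, ← Real.rpow_mul (by positivity), mul_comm (-(1/4) : ℝ),
          Real.rpow_mul (by positivity), Real.rpow_natCast]
        apply Real.rpow_le_rpow_of_nonpos (by positivity) _ (by norm_num)
        have := one_add_mul_le_pow (a := (4 / D) * g ^ 2 / d) (by
          have : 0 ≤ (4 / D) * g ^ 2 / d := by positivity
          linarith) d
        calc _ = 1 + (d:ℝ) * ((4 / D) * g ^ 2 / d) := by field_simp
          _ ≤ _ := this
    set τ := Real.exp (-2 * (K + 3)) with hτ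
    have hτp : 0 < τ := Real.exp_pos _
    have h4 := one_tail (B := 4 / D) (τ := τ) (by positivity) hτp
    have h5 : (1 + 4 / D * τ) ^ (-(1/4) : ℝ) ≤ Real.exp (-(K + 2)) := by
      calc _ ≤ (Real.exp (4 * (K + 2))) ^ (-(1/4) : ℝ) := by
            apply Real.rpow_le_rpow_of_nonpos (Real.exp_pos _) _ (by norm_num)
            have : Real.exp (4 * (K + 2)) ≤ 4 / D * τ := by
              rw [div_mul_eq_mul_div, le_div_iff₀ hD0]
              calc _ ≤ Real.exp (4 * (K + 2)) * (4 * τ * Real.exp (-4 * (K + 2))) := by gcongr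
                _ = 4 * τ * (Real.exp (4 * (K + 2)) * Real.exp (-4 * (K + 2))) := by ring
                _ = _ := by rw [← Real.exp_add]; ring_nf; simp
            linarith
        _ = _ := by rw [← Real.exp_mul]; congr 1; ring
    have h6 : Real.exp 1 * τ ^ (1/2 : ℝ) = Real.exp (-(K + 2)) := by
      rw [hτ, ← Real.exp_mul, ← Real.exp_add]; congr 1; ring
    have h7 : Real.exp 1 * (2 * Real.exp (-(K + 2))) ≤ Real.exp (-K) := by
      have e : Real.exp (-K) = Real.exp 1 * (Real.exp 1 * Real.exp (-(K+2))) := by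
        rw [← Real.exp_add, ← Real.exp_add]; congr 1; ring
      rw [e]
      have := Real.add_one_le_exp (1:ℝ)
      gcongr
      linarith
    refine le_trans ?_ h7
    gcongr
    linarith

lemma small_ball (K : ℝ) (hK : 0 ≤ K) : ∃ D : ℝ, 0 < D ∧ ∀ n d : ℕ, 0 < n → 0 < d →
    ∀ Y : Matrix (Fin n) (Fin n) ℝ,
      (gaussianMatrix n d).real {Z | lossL n d (Z * Zᵀ) Y ≤ D} ≤
        Real.exp (-K * (n * (min n d : ℕ))) := by
  refine ⟨min (1 / (6 * Real.exp (2 * (96 * (K + 1)) + 1)))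
    (4 * Real.exp (-2 * (K + 3)) * Real.exp (-4 * (K + 2))), by positivity, ?_⟩
  intro n d hn hd Y
  rcases Nat.lt_or_ge 1 n with h | h
  · refine (sb_ge_two n d h hd (96 * (K + 1)) _ (by linarith) (min_le_left _ _) Y).trans (le_of_eq ?_)
    congr 1
    ring
  · obtain rfl : n = 1 := by omega
    refine (sb_one d hd K _ (by positivity) (min_le_right _ _) Y).trans (le_of_eq ?_)
    have : min 1 d = 1 := by omega
    rw [this]; simp


/-- Number of observed entries. -/
def obsCount {n : ℕ} (a : Matrix (Fin n) (Fin n) (Option Bool)) : ℕ :=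
  ∑ i, ∑ j, if a i j ≠ none then 1 else 0

lemma weight_sum (n : ℕ) (p : ℝ) :
    ∑ a : Fin n → Fin n → Option Bool, p ^ (obsCount (n := n) a) = (1 + 2 * p) ^ (n ^ 2) := by
  have h : ∀ a : Fin n → Fin n → Option Bool, p ^ (obsCount (n := n) a)
      = ∏ i, ∏ j, p ^ (if a i j ≠ none then 1 else 0) := by
    intro a
    unfold obsCount
    simp_rw [Finset.prod_pow_eq_pow_sum]
  simp_rw [h]
  have h1 : ∀ n : ℕ, ∑ b : Fin n → Option Bool, ∏ j, p ^ (if b j ≠ none then 1 else 0)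
      = (1 + 2 * p) ^ n := by
    intro n
    rw [← Fintype.prod_sum (fun (_ : Fin n) (x : Option Bool) => p ^ (if x ≠ none then 1 else 0))]
    simp [Fintype.sum_option]
  rw [← Fintype.prod_sum (fun (_ : Fin n) (b : Fin n → Option Bool) =>
    ∏ j, p ^ (if b j ≠ none then 1 else 0))]
  rw [h1]
  simp [← pow_mul, sq]

lemma card_bound (n : ℕ) (p : ℝ) (hp : 0 < p) (hp1 : p < 1) (S : Finset (Fin n → Fin n → Option Bool))
    (hS : ∀ a ∈ S, (obsCount (n := n) a : ℝ) < 2 * (n : ℝ) ^ 2 * p) :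
    (S.card : ℝ) ≤ Real.exp (2 * (n : ℝ) ^ 2 * (Real.binEntropy p + p)) := by
  have hlog : Real.log p ≤ 0 := Real.log_nonpos hp.le hp1.le
  have h1 : ∀ a ∈ S, Real.exp (2 * (n : ℝ) ^ 2 * p * Real.log p) ≤ p ^ (obsCount (n := n) a) := by
    intro a ha
    have : p ^ (obsCount (n := n) a) = Real.exp (obsCount (n := n) a * Real.log p) := by
      rw [← Real.rpow_natCast, Real.rpow_def_of_pos hp, mul_comm]
    rw [this]
    apply Real.exp_le_exp.mpr
    exact mul_le_mul_of_nonpos_right (hS a ha).le hlog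
  have h2 : (S.card : ℝ) * Real.exp (2 * (n : ℝ) ^ 2 * p * Real.log p) ≤ (1 + 2 * p) ^ (n ^ 2) := by
    rw [← weight_sum, ← nsmul_eq_mul, ← Finset.sum_const]
    refine (Finset.sum_le_sum h1).trans ?_
    exact Finset.sum_le_univ_sum_of_nonneg (fun a => by positivity)
  have h3 : (1 + 2 * p) ^ (n ^ 2) ≤ Real.exp (2 * (n : ℝ) ^ 2 * p) := by
    have := Real.add_one_le_exp (2 * p)
    calc (1 + 2 * p) ^ (n ^ 2) ≤ (Real.exp (2 * p)) ^ (n ^ 2) := by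
          apply pow_le_pow_left₀ (by positivity); linarith
      _ = _ := by rw [← Real.exp_nat_mul]; congr 1; push_cast; ring
  have h4 : -(p * Real.log p) ≤ Real.binEntropy p := by
    rw [Real.binEntropy_eq_negMulLog_add_negMulLog_one_sub]
    have := Real.negMulLog_nonneg (x := 1 - p) (by linarith) (by linarith)
    simp only [Real.negMulLog] at *
    linarith
  have h5 : (S.card : ℝ) ≤ Real.exp (2 * (n : ℝ) ^ 2 * p) * Real.exp (-(2 * (n : ℝ) ^ 2 * p * Real.log p)) := by
    rw [Real.exp_neg, ← div_eq_mul_inv, le_div_iff₀ (Real.exp_pos _)]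
    exact h2.trans h3
  refine h5.trans ?_
  rw [← Real.exp_add]
  apply Real.exp_le_exp.mpr
  have : 0 ≤ 2 * (n : ℝ) ^ 2 := by positivity
  nlinarith [mul_le_mul_of_nonneg_left h4 this]

lemma card_bound2 (c : ℝ) (hc : 0 < c) (n d : ℕ) (hn : 0 < n) (p : ℝ) (hp : 0 < p) (hp1 : p < 1)
    (hd : (d : ℝ) ≥ c * n * (Real.binEntropy p + p)) :
    2 * (n : ℝ) ^ 2 * (Real.binEntropy p + p) ≤ max (2 / c) 4 * (n * (min n d : ℕ)) := by
  have hn' : (0 : ℝ) < n := by exact_mod_cast hn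
  have hb : Real.binEntropy p + p ≤ 2 := by
    have := Real.binEntropy_le_log_two (p := p)
    have := Real.log_two_lt_d9
    linarith
  have hb0 : Real.binEntropy p + p ≤ d / (c * n) := by
    rw [le_div_iff₀ (by positivity)]; linarith
  rcases le_total n d with h | h
  · rw [min_eq_left h]
    calc 2 * (n : ℝ) ^ 2 * (Real.binEntropy p + p) ≤ 2 * (n : ℝ) ^ 2 * 2 := by gcongr
      _ = 4 * ((n : ℝ) * n) := by ring
      _ ≤ _ := by gcongr; exact le_max_right _ _
  · rw [min_eq_right h]
    calc 2 * (n : ℝ) ^ 2 * (Real.binEntropy p + p) ≤ 2 * (n : ℝ) ^ 2 * (d / (c * n)) := by gcongr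
      _ = 2 / c * (n * d) := by field_simp
      _ ≤ _ := by gcongr; exact le_max_left _ _

/-- Markov bound on the number of observed entries. -/
lemma obs_markov {Ω : Type} [MeasurableSpace Ω] (μ : Measure Ω) [IsProbabilityMeasure μ] {n : ℕ}
    (hn : 0 < n) (p : ℝ) (hp : 0 < p) (pm : Fin n → Fin n → ℝ) (h0 : ∀ i j, 0 ≤ pm i j)
    (hsum : (∑ i : Fin n, ∑ j : Fin n, pm i j) = (n : ℝ) ^ 2 * p)
    (A : Ω → Matrix (Fin n) (Fin n) (Option Bool)) (hA : Measurable A)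
    (hobs : ∀ i j, μ {ω | A ω i j ≠ none} = ENNReal.ofReal (pm i j)) :
    μ.real {ω | 2 * (n : ℝ) ^ 2 * p ≤ obsCount (A ω)} ≤ 1 / 2 := by
  have hn' : (0 : ℝ) < n := by exact_mod_cast hn
  have hset : ∀ i j, MeasurableSet {ω | A ω i j ≠ none} := by
    intro i j
    have hij : Measurable (fun ω => A ω i j) :=
      (measurable_pi_apply j).comp ((measurable_pi_apply i).comp hA)
    exact hij (t := {x | x ≠ none}) trivial
  have hcast : ∀ ω, (obsCount (A ω) : ℝ) =
      ∑ i, ∑ j, ({ω | A ω i j ≠ none} : Set Ω).indicator (fun _ => (1 : ℝ)) ω := by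
    intro ω
    simp [obsCount, Set.indicator_apply]
  have hIntg : ∀ i j, Integrable (({ω | A ω i j ≠ none} : Set Ω).indicator (fun _ => (1 : ℝ))) μ :=
    fun i j => (integrable_const 1).indicator (hset i j)
  have hI : ∫ ω, (obsCount (A ω) : ℝ) ∂μ = (n : ℝ) ^ 2 * p := by
    simp_rw [hcast]
    rw [integral_finsetSum _ (fun i _ => integrable_finsetSum _ (fun j _ => hIntg i j)), ← hsum]
    refine Finset.sum_congr rfl fun i _ => ?_
    rw [integral_finsetSum _ (fun j _ => hIntg i j)]
    refine Finset.sum_congr rfl fun j _ => ?_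
    rw [integral_indicator_const _ (hset i j)]
    simp [Measure.real, hobs, h0]
  have hii : Integrable (fun ω => (obsCount (A ω) : ℝ)) μ := by
    simp_rw [hcast]
    exact integrable_finsetSum _ (fun i _ => integrable_finsetSum _ (fun j _ => hIntg i j))
  have := mul_meas_ge_le_integral_of_nonneg (μ := μ) (f := fun ω => (obsCount (A ω) : ℝ))
    (Filter.Eventually.of_forall fun ω => by simp) hii (2 * (n : ℝ) ^ 2 * p)
  rw [hI] at this
  have hpos : 0 < (n : ℝ) ^ 2 * p := by positivity
  nlinarith

lemma entry_memLp {Ω : Type} [MeasurableSpace Ω] (μ : Measure Ω) [IsProbabilityMeasure μ] {n d : ℕ}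
    (Z : Ω → Matrix (Fin n) (Fin d) ℝ) (hZ : Measurable Z) (hmap : μ.map Z = gaussianMatrix n d)
    (i : Fin n) (a : Fin d) : MemLp (fun ω => Z ω i a) 4 μ := by
  have m0 : MeasurePreserving Z μ (gaussianMatrix n d) := ⟨hZ, hmap⟩
  have m1 : MeasurePreserving (fun z : Matrix (Fin n) (Fin d) ℝ => z i) (gaussianMatrix n d)
      (gm (d : NNReal)⁻¹ (Fin d)) :=
    measurePreserving_eval (fun _ : Fin n => gm (d : NNReal)⁻¹ (Fin d)) i
  have m2 : MeasurePreserving (fun z : Fin d → ℝ => z a) (gm (d : NNReal)⁻¹ (Fin d))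
      (gaussianReal 0 (d : NNReal)⁻¹) :=
    measurePreserving_eval (fun _ : Fin d => gaussianReal 0 (d : NNReal)⁻¹) a
  have m := m2.comp (m1.comp m0)
  have h := memLp_id_gaussianReal' (μ := 0) (v := (d : NNReal)⁻¹) 4 (by norm_num)
  exact h.comp_measurePreserving m

lemma loss_integrable {Ω : Type} [MeasurableSpace Ω] (μ : Measure Ω) [IsProbabilityMeasure μ] {n d : ℕ}
    (Z : Ω → Matrix (Fin n) (Fin d) ℝ) (hZ : Measurable Z) (hmap : μ.map Z = gaussianMatrix n d)
    (A : Ω → Matrix (Fin n) (Fin n) (Option Bool)) (hA : Measurable A)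
    (f : Matrix (Fin n) (Fin n) (Option Bool) → Matrix (Fin n) (Fin n) ℝ) (hf : Measurable f) :
    Integrable (fun ω => lossL n d (Z ω * (Z ω)ᵀ) (f (A ω))) μ := by
  unfold lossL frobSq
  apply Integrable.const_mul
  refine integrable_finsetSum _ fun i _ => integrable_finsetSum _ fun j _ => ?_
  apply MemLp.integrable_sq
  apply MemLp.sub
  · simp only [Matrix.mul_apply, Matrix.transpose_apply]
    refine memLp_finsetSum _ fun a _ => ?_
    have : ENNReal.HolderTriple 4 4 2 := ⟨by
      rw [← two_mul, show (4 : ENNReal) = 2 * 2 by norm_num,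
        ENNReal.mul_inv (by simp) (by simp), ← mul_assoc,
        ENNReal.mul_inv_cancel (by simp) (by simp), one_mul]⟩
    exact (entry_memLp μ Z hZ hmap j a).mul (entry_memLp μ Z hZ hmap i a)
  · have hm : Measurable (fun ω => f (A ω) i j) :=
      (measurable_pi_apply j).comp ((measurable_pi_apply i).comp (hf.comp hA))
    have : Finite (Matrix (Fin n) (Fin n) (Option Bool)) :=
      inferInstanceAs (Finite (Fin n → Fin n → Option Bool))
    obtain ⟨C, hC⟩ := (Set.finite_range (fun a => ‖f a i j‖)).bddAbove
    refine MemLp.of_bound hm.aestronglyMeasurable C (Filter.Eventually.of_forall fun ω => ?_)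
    exact hC ⟨A ω, rfl⟩

lemma lossL_nonneg (n d : ℕ) (X Y : Matrix (Fin n) (Fin n) ℝ) : 0 ≤ lossL n d X Y := by
  unfold lossL frobSq
  positivity

/-- The set where the estimation error is small has probability at most `3/4`. -/
lemma small_loss_prob {Ω : Type} [MeasurableSpace Ω] (μ : Measure Ω) [IsProbabilityMeasure μ] {n d : ℕ}
    (hn : 0 < n) (hd0 : 0 < d) (c p D C : ℝ) (hc : 0 < c) (hp : 0 < p) (hp1 : p < 1)
    (hd : (d : ℝ) ≥ c * n * (Real.binEntropy p + p)) (hC : C = max (2 / c) 4)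
    (hD : ∀ Y : Matrix (Fin n) (Fin n) ℝ, (gaussianMatrix n d).real {Z | lossL n d (Z * Zᵀ) Y ≤ D}
      ≤ Real.exp (-(C + 2) * (n * (min n d : ℕ))))
    (Z : Ω → Matrix (Fin n) (Fin d) ℝ) (hZ : Measurable Z) (hmap : μ.map Z = gaussianMatrix n d)
    (A : Ω → Matrix (Fin n) (Fin n) (Option Bool))
    (hA : μ.real {ω | 2 * (n : ℝ) ^ 2 * p ≤ obsCount (A ω)} ≤ 1 / 2)
    (f : Matrix (Fin n) (Fin n) (Option Bool) → Matrix (Fin n) (Fin n) ℝ) :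
    μ.real {ω | lossL n d (Z ω * (Z ω)ᵀ) (f (A ω)) ≤ D} ≤ 3 / 4 := by
  classical
  let S : Finset (Fin n → Fin n → Option Bool) :=
    Finset.univ.filter (fun a => (obsCount (n := n) a : ℝ) < 2 * (n : ℝ) ^ 2 * p)
  have hSc := card_bound n p hp hp1 S (fun a ha => (Finset.mem_filter.mp ha).2)
  have hsub : {ω | lossL n d (Z ω * (Z ω)ᵀ) (f (A ω)) ≤ D} ⊆
      {ω | 2 * (n : ℝ) ^ 2 * p ≤ obsCount (A ω)} ∪
        ⋃ a ∈ S, {ω | lossL n d (Z ω * (Z ω)ᵀ) (f a) ≤ D} := by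
    intro ω hω
    by_cases h : 2 * (n : ℝ) ^ 2 * p ≤ obsCount (A ω)
    · exact Or.inl h
    · right
      refine Set.mem_biUnion (x := A ω) ?_ hω
      exact Finset.mem_coe.mpr (Finset.mem_filter.mpr ⟨Finset.mem_univ _, not_le.mp h⟩)
  have hone : ∀ a : Fin n → Fin n → Option Bool, μ.real {ω | lossL n d (Z ω * (Z ω)ᵀ) (f a) ≤ D}
      ≤ Real.exp (-(C + 2) * (n * (min n d : ℕ))) := by
    intro a
    refine le_trans ?_ (hD (f a))
    rw [← hmap]
    unfold Measure.real
    apply ENNReal.toReal_mono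
    · have := Measure.isProbabilityMeasure_map (μ := μ) hZ.aemeasurable
      exact measure_ne_top _ _
    · exact Measure.le_map_apply hZ.aemeasurable {Z | lossL n d (Z * Zᵀ) (f a) ≤ D}
  have hsum : ∑ a ∈ S, μ.real {ω | lossL n d (Z ω * (Z ω)ᵀ) (f a) ≤ D} ≤ 1 / 4 := by
    have h1 := Finset.sum_le_card_nsmul S _ _ (fun a _ => hone a)
    refine h1.trans ?_
    rw [nsmul_eq_mul]
    have h2 := card_bound2 c hc n d hn p hp hp1 hd
    rw [← hC] at h2
    have hns : (1 : ℝ) ≤ n * (min n d : ℕ) := by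
      have : 1 ≤ n * min n d := Nat.mul_pos hn (lt_min hn hd0)
      exact_mod_cast this
    calc (S.card : ℝ) * Real.exp (-(C + 2) * (n * (min n d : ℕ)))
        ≤ Real.exp (C * (n * (min n d : ℕ))) * Real.exp (-(C + 2) * (n * (min n d : ℕ))) := by
          gcongr
          exact hSc.trans (Real.exp_le_exp.mpr h2)
      _ = Real.exp (-2 * (n * (min n d : ℕ))) := by rw [← Real.exp_add]; congr 1; ring
      _ ≤ Real.exp (-2) := by apply Real.exp_le_exp.mpr; linarith
      _ ≤ 1 / 4 := by
          rw [Real.exp_neg, one_div]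
          apply inv_anti₀ (by norm_num)
          have h := Real.add_one_le_exp (1 : ℝ)
          have e : Real.exp 2 = Real.exp 1 * Real.exp 1 := by rw [← Real.exp_add]; norm_num
          rw [e]; nlinarith
  calc _ ≤ _ := measureReal_mono hsub
    _ ≤ _ := measureReal_union_le _ _
    _ ≤ 1 / 2 + 1 / 4 := by
        gcongr
        exact (measureReal_biUnion_finset_le _ _).trans hsum
    _ = 3 / 4 := by norm_num

/-- **Impossibility for one-bit matrix completion with a Wishart prior.**
For every `c > 0` there is `D = D(c) > 0` such that: for all positive `n, d`,
`p ∈ (0,1)` and observation probabilities `pm i j ∈ [0,1]` with `Σ_{i,j} pm i j = n² p`,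
any probability space `(Ω, μ)`, any `Z : Ω → ℝ^{n×d}` with i.i.d. `N(0,1/d)` entries
(so `X = Z Zᵀ` has the Wishart prior), any randomness `U` independent of `Z`, any
observation `A = F(X, U)` valued in `{0,1,∗}^{n×n}` with `P(A_{ij} ≠ ∗) = pm i j` for
all `i, j`, and any estimator `X̂ = f(A)`: if `d ≥ c · n · (h(p) + p)` then
`E[L(X, X̂)] ≥ D`. -/
theorem one_bit_matrix_completion_impossible :
    ∀ c : ℝ, 0 < c → ∃ D : ℝ, 0 < D ∧
      ∀ (n d : ℕ), 0 < n → 0 < d → ∀ p : ℝ, 0 < p → p < 1 →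
        ∀ pm : Fin n → Fin n → ℝ, (∀ i j, 0 ≤ pm i j) → (∀ i j, pm i j ≤ 1) →
          (∑ i : Fin n, ∑ j : Fin n, pm i j) = (n : ℝ) ^ 2 * p →
          ∀ (Ω : Type) (_ : MeasurableSpace Ω) (μ : Measure Ω), IsProbabilityMeasure μ →
            ∀ (β : Type) (_ : MeasurableSpace β)
              (Z : Ω → Matrix (Fin n) (Fin d) ℝ) (U : Ω → β)
              (F : Matrix (Fin n) (Fin n) ℝ → β → Matrix (Fin n) (Fin n) (Option Bool))
              (f : Matrix (Fin n) (Fin n) (Option Bool) → Matrix (Fin n) (Fin n) ℝ),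
              Measurable Z → Measurable U →
              Measurable (fun q : Matrix (Fin n) (Fin n) ℝ × β => F q.1 q.2) →
              Measurable f →
              μ.map Z = gaussianMatrix n d →
              IndepFun Z U μ →
              (∀ i j, μ {ω | F (Z ω * (Z ω)ᵀ) (U ω) i j ≠ none} = ENNReal.ofReal (pm i j)) →
              (d : ℝ) ≥ c * n * (Real.binEntropy p + p) →
              D ≤ ∫ ω, lossL n d (Z ω * (Z ω)ᵀ) (f (F (Z ω * (Z ω)ᵀ) (U ω))) ∂μ := by
  intro c hc
  obtain ⟨D, hD0, hD⟩ := small_ball (max (2 / c) 4 + 2) (by positivity)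
  refine ⟨D / 4, by positivity, ?_⟩
  intro n d hn hd0 p hp hp1 pm h0 _ hsum Ω _ μ hμ β _ Z U F f hZ hU hF hf hmap _ hobs hd
  have hX : Measurable (fun ω => Z ω * (Z ω)ᵀ) := by
    refine measurable_pi_lambda _ fun i => measurable_pi_lambda _ fun j => ?_
    simp only [Matrix.mul_apply, Matrix.transpose_apply]
    have hz : ∀ i a, Measurable (fun ω => Z ω i a) := fun i a =>
      (measurable_pi_apply a).comp ((measurable_pi_apply i).comp hZ)
    exact Finset.measurable_sum _ fun a _ => (hz i a).mul (hz j a)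
  have hA : Measurable (fun ω => F (Z ω * (Z ω)ᵀ) (U ω)) := hF.comp (hX.prodMk hU)
  have hm := obs_markov μ hn p hp pm h0 hsum _ hA hobs
  have hsl := small_loss_prob μ hn hd0 c p D _ hc hp hp1 hd rfl (hD n d hn hd0) Z hZ hmap _ hm f
  have hIntg := loss_integrable μ Z hZ hmap _ hA f hf
  have hmk := mul_meas_ge_le_integral_of_nonneg
    (Filter.Eventually.of_forall fun ω => lossL_nonneg n d _ _) hIntg D
  have hcov : (1 : ℝ) ≤ μ.real {ω | lossL n d (Z ω * (Z ω)ᵀ) (f (F (Z ω * (Z ω)ᵀ) (U ω))) ≤ D} +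
      μ.real {ω | D ≤ lossL n d (Z ω * (Z ω)ᵀ) (f (F (Z ω * (Z ω)ᵀ) (U ω)))} := by
    refine le_trans ?_ (measureReal_union_le _ _)
    rw [← probReal_univ (μ := μ)]
    refine measureReal_mono ?_ (measure_ne_top _ _)
    intro ω _
    exact le_total (lossL n d (Z ω * (Z ω)ᵀ) (f (F (Z ω * (Z ω)ᵀ) (U ω)))) D
  nlinarith

end
end

section
/- For every positive integer d: d − 2·(Γ((d+1)/2) / Γ(d/2))² ≤ 1/2, where Γ is the real Gamma function. Equivalently, if w is a random vector in ℝ^d with i.i.d. N(0, 1/d) coordinates, then the variance of the Euclidean norm ‖w‖₂ equals (1/d)·(d − 2 Γ((d+1)/2)² / Γ(d/2)²) and is at most 1/(2d). -/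
open MeasureTheory ProbabilityTheory

noncomputable section

/-- Law of a random vector in `ℝ^d` with i.i.d. `N(0, 1/d)` coordinates. -/
def gaussianVec (d : ℕ) : Measure (Fin d → ℝ) :=
  Measure.pi fun _ : Fin d => gaussianReal 0 (d : NNReal)⁻¹

lemma gamma_half_sq_le {a : ℝ} (ha : 0 < a) :
    Real.Gamma (a + 1 / 2) ^ 2 ≤ a * Real.Gamma a ^ 2 := by
  have h := Real.Gamma_mul_add_mul_le_rpow_Gamma_mul_rpow_Gamma (s := a) (t := a + 1)
    (a := 1 / 2) (b := 1 / 2) ha (by linarith) (by norm_num) (by norm_num) (by norm_num)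
  have e : (1 / 2 : ℝ) * a + 1 / 2 * (a + 1) = a + 1 / 2 := by ring
  have p1 : 0 < Real.Gamma a := Real.Gamma_pos_of_pos ha
  have p2 : 0 < Real.Gamma (a + 1 / 2) := Real.Gamma_pos_of_pos (by linarith)
  rw [e, Real.Gamma_add_one ha.ne', ← Real.mul_rpow p1.le (by positivity),
    ← Real.sqrt_eq_rpow] at h
  have h2 : Real.Gamma (a + 1 / 2) ^ 2 ≤ (√(Real.Gamma a * (a * Real.Gamma a))) ^ 2 := by
    gcongr
  rw [Real.sq_sqrt (by positivity)] at h2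
  linarith

def ratioG (x : ℝ) : ℝ := (Real.Gamma (x + 1 / 2) / Real.Gamma x) ^ 2 / (x - 1 / 4)

lemma ratioG_step {x : ℝ} (hx : 1 / 2 ≤ x) : ratioG (x + 1) ≤ ratioG x := by
  have p1 : 0 < Real.Gamma x := Real.Gamma_pos_of_pos (by linarith)
  have p2 : 0 < Real.Gamma (x + 1 / 2) := Real.Gamma_pos_of_pos (by linarith)
  unfold ratioG
  rw [show x + 1 + 1 / 2 = (x + 1 / 2) + 1 by ring, Real.Gamma_add_one (by linarith),
    Real.Gamma_add_one (by linarith), mul_div_mul_comm, mul_pow]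
  set r := (Real.Gamma (x + 1 / 2) / Real.Gamma x) ^ 2 with hr
  have hr0 : 0 ≤ r := by positivity
  rw [div_le_div_iff₀ (by linarith) (by linarith)]
  have hx0 : 0 < x := by linarith
  have key : ((x + 1 / 2) / x) ^ 2 * (x - 1 / 4) ≤ x + 1 - 1 / 4 := by
    rw [div_pow, div_mul_eq_mul_div, div_le_iff₀ (by positivity)]
    nlinarith
  nlinarith

lemma ratioG_lower {x : ℝ} (hx : 1 / 2 < x) : 1 - 1 / 4 / (x - 1 / 4) ≤ ratioG x := by
  have p1 : 0 < Real.Gamma x := Real.Gamma_pos_of_pos (by linarith)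
  have p0 : 0 < Real.Gamma (x - 1 / 2) := Real.Gamma_pos_of_pos (by linarith)
  have h := gamma_half_sq_le (a := x - 1 / 2) (by linarith)
  have e : Real.Gamma (x + 1 / 2) = (x - 1 / 2) * Real.Gamma (x - 1 / 2) := by
    rw [← Real.Gamma_add_one (by linarith)]; congr 1; ring
  rw [sub_add_cancel] at h
  unfold ratioG
  have hq : 0 < x - 1 / 4 := by linarith
  rw [show 1 - 1 / 4 / (x - 1 / 4) = (x - 1 / 2) / (x - 1 / 4) by
    rw [eq_div_iff hq.ne', sub_mul, div_mul_cancel₀ _ hq.ne']; ring]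
  gcongr
  rw [div_pow, le_div_iff₀ (by positivity), e]
  have : 0 < x - 1 / 2 := by linarith
  nlinarith

lemma one_le_ratioG {x : ℝ} (hx : 1 / 2 ≤ x) : 1 ≤ ratioG x := by
  have hs : ∀ n : ℕ, ratioG (x + n) ≤ ratioG x := by
    intro n
    induction n with
    | zero => simp
    | succ k ih =>
      refine le_trans ?_ ih
      have := ratioG_step (x := x + k) (by have : (0 : ℝ) ≤ k := by positivity
                                           linarith)
      push_cast
      rwa [← add_assoc]
  have ht : Filter.Tendsto (fun n : ℕ => 1 - 1 / 4 / (x + n - 1 / 4)) Filter.atTop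
      (nhds (1 - 0)) := by
    refine tendsto_const_nhds.sub (Filter.Tendsto.div_atTop tendsto_const_nhds ?_)
    have : Filter.Tendsto (fun n : ℕ => (x - 1 / 4) + (n : ℝ)) Filter.atTop Filter.atTop :=
      Filter.tendsto_atTop_add_const_left _ _ tendsto_natCast_atTop_atTop
    exact this.congr (fun n => by ring)
  rw [sub_zero] at ht
  refine le_of_tendsto ht ?_
  filter_upwards [Filter.eventually_ge_atTop 1] with n hn
  have : (1 : ℝ) ≤ n := by exact_mod_cast hn
  exact (ratioG_lower (by linarith)).trans (hs n)

lemma gamma_bound (d : ℕ) (hd : 0 < d) :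
    (d : ℝ) - 2 * (Real.Gamma (((d : ℝ) + 1) / 2) / Real.Gamma ((d : ℝ) / 2)) ^ 2 ≤ 1 / 2 := by
  have h1 : (1 : ℝ) ≤ d := by exact_mod_cast hd
  have h := one_le_ratioG (x := (d : ℝ) / 2) (by linarith)
  unfold ratioG at h
  rw [one_le_div (by linarith), show (d : ℝ) / 2 + 1 / 2 = ((d : ℝ) + 1) / 2 by ring] at h
  linarith

lemma gaussianVec_eq (d : ℕ) (hd : 0 < d) :
    gaussianVec d = (volume : Measure (Fin d → ℝ)).withDensity
      (fun w => ENNReal.ofReal (∏ i, gaussianPDFReal 0 (d : NNReal)⁻¹ (w i))) := by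
  have hv : (d : NNReal)⁻¹ ≠ 0 := by
    have : (d : NNReal) ≠ 0 := by exact_mod_cast hd.ne'
    exact inv_ne_zero this
  unfold gaussianVec
  refine Measure.pi_eq ?_
  intro s hs
  rw [withDensity_apply _ (MeasurableSet.univ_pi hs), volume_pi, Measure.restrict_pi_pi,
    ← ofReal_integral_eq_lintegral_ofReal]
  · rw [integral_fintype_prod_eq_prod, ENNReal.ofReal_prod_of_nonneg]
    · refine Finset.prod_congr rfl fun i _ => ?_
      rw [gaussianReal_apply_eq_integral _ hv]
    · intro i _
      exact integral_nonneg fun x => gaussianPDFReal_nonneg _ _ _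
  · exact Integrable.fintype_prod_dep fun i =>
      (integrable_gaussianPDFReal 0 (d : NNReal)⁻¹).restrict
  · exact Filter.Eventually.of_forall fun w =>
      Finset.prod_nonneg fun i _ => gaussianPDFReal_nonneg _ _ _

lemma radial (d : ℕ) (hd : 0 < d) : ∃ K : ℝ, ∀ f : ℝ → ℝ,
    ∫ w, f (Real.sqrt (∑ j, w j ^ 2)) ∂(gaussianVec d) =
      K * ∫ y in Set.Ioi (0 : ℝ), y ^ (d - 1) * (Real.exp (-(d / 2 : ℝ) * y ^ (2 : ℝ)) * f y) := by
  have hdr : (0 : ℝ) < d := by exact_mod_cast hd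
  have : Nonempty (Fin d) := ⟨⟨0, hd⟩⟩
  set C : ℝ := (√(2 * Real.pi * ((d : NNReal)⁻¹ : NNReal)))⁻¹ ^ d with hC
  refine ⟨C * (d * (volume : Measure (EuclideanSpace ℝ (Fin d))).real (Metric.ball 0 1)), ?_⟩
  intro f
  have hdens : ∀ w : Fin d → ℝ, ∏ i, gaussianPDFReal 0 (d : NNReal)⁻¹ (w i) =
      C * Real.exp (-(d / 2 : ℝ) * (√(∑ j, w j ^ 2)) ^ (2 : ℝ)) := by
    intro w
    simp only [gaussianPDFReal]
    rw [Finset.prod_mul_distrib, ← Real.exp_sum, Finset.prod_const, Finset.card_univ,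
      Fintype.card_fin, Real.rpow_two, Real.sq_sqrt (Finset.sum_nonneg fun i _ => sq_nonneg _),
      Finset.mul_sum]
    congr 2
    refine Finset.sum_congr rfl fun i _ => ?_
    push_cast
    field_simp
    ring
  rw [gaussianVec_eq d hd, integral_withDensity_eq_integral_toReal_smul]
  · have h1 : ∀ w : Fin d → ℝ,
      (ENNReal.ofReal (∏ i, gaussianPDFReal 0 (d : NNReal)⁻¹ (w i))).toReal •
        f (√(∑ j, w j ^ 2)) = (fun y => C * (Real.exp (-(d / 2 : ℝ) * y ^ (2 : ℝ)) * f y))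
          ‖(WithLp.toLp 2 w : EuclideanSpace ℝ (Fin d))‖ := by
      intro w
      rw [ENNReal.toReal_ofReal (Finset.prod_nonneg fun i _ => gaussianPDFReal_nonneg _ _ _),
        hdens, EuclideanSpace.norm_eq]
      simp [mul_assoc]
    simp_rw [h1]
    rw [(PiLp.volume_preserving_toLp (Fin d)).integral_comp
      (MeasurableEquiv.toLp 2 (Fin d → ℝ)).measurableEmbedding
      (fun x => C * (Real.exp (-(d / 2 : ℝ) * ‖x‖ ^ (2 : ℝ)) * f ‖x‖))]
    rw [integral_const_mul, integral_fun_norm_addHaar volume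
      (fun y => Real.exp (-(d / 2 : ℝ) * y ^ (2 : ℝ)) * f y)]
    simp only [finrank_euclideanSpace, Fintype.card_fin, smul_eq_mul, nsmul_eq_mul]
    ring
  · refine Measurable.ennreal_ofReal (Finset.measurable_prod _ fun i _ => ?_)
    exact (measurable_gaussianPDFReal _ _).comp (measurable_pi_apply i)
  · exact Filter.Eventually.of_forall fun _ => ENNReal.ofReal_lt_top

instance (d : ℕ) : IsProbabilityMeasure (gaussianVec d) := by
  unfold gaussianVec; infer_instance

lemma mean_norm (d : ℕ) (hd : 0 < d) :
    ∫ w, Real.sqrt (∑ j, w j ^ 2) ∂(gaussianVec d) =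
      √(2 / d) * (Real.Gamma (((d : ℝ) + 1) / 2) / Real.Gamma ((d : ℝ) / 2)) := by
  have hdr : (0 : ℝ) < d := by exact_mod_cast hd
  obtain ⟨K, hK⟩ := radial d hd
  have p1 : 0 < Real.Gamma ((d : ℝ) / 2) := Real.Gamma_pos_of_pos (by linarith)
  have h0 := hK (fun _ => 1)
  have h1 := hK (fun y => y)
  have hb : (0 : ℝ) < d / 2 := by positivity
  have i0 := integral_rpow_mul_exp_neg_mul_rpow (p := 2) (q := (d : ℝ) - 1) (b := d / 2)
    two_pos (by linarith) hb
  have i1 := integral_rpow_mul_exp_neg_mul_rpow (p := 2) (q := (d : ℝ)) (b := d / 2)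
    two_pos (by linarith) hb
  have e0 : ∫ y in Set.Ioi (0 : ℝ), y ^ (d - 1) *
      (Real.exp (-(d / 2 : ℝ) * y ^ (2 : ℝ)) * (1 : ℝ)) =
      ∫ x in Set.Ioi (0 : ℝ), x ^ ((d : ℝ) - 1) * Real.exp (-(d / 2 : ℝ) * x ^ (2 : ℝ)) := by
    refine setIntegral_congr_fun measurableSet_Ioi fun y hy => ?_
    simp only [mul_one]
    rw [← Real.rpow_natCast, Nat.cast_sub hd, Nat.cast_one]
  have e1 : ∫ y in Set.Ioi (0 : ℝ), y ^ (d - 1) *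
      (Real.exp (-(d / 2 : ℝ) * y ^ (2 : ℝ)) * y) =
      ∫ x in Set.Ioi (0 : ℝ), x ^ (d : ℝ) * Real.exp (-(d / 2 : ℝ) * x ^ (2 : ℝ)) := by
    refine setIntegral_congr_fun measurableSet_Ioi fun y hy => ?_
    rw [Real.rpow_natCast]
    have hp : y ^ d = y ^ (d - 1) * y := by
      rw [← pow_succ, Nat.sub_add_cancel hd]
    rw [hp]; ring
  rw [h1, e1, i1]
  rw [e0, i0] at h0
  simp only [integral_const, probReal_univ, smul_eq_mul, mul_one, sub_add_cancel] at h0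
  have hsplit : ((d : ℝ) / 2) ^ (-((d : ℝ) + 1) / 2) = (d / 2 : ℝ) ^ (-(d : ℝ) / 2) * √(2 / d) := by
    rw [Real.sqrt_eq_rpow, show (2 / d : ℝ) = (d / 2 : ℝ)⁻¹ by rw [inv_div],
      Real.inv_rpow hb.le, ← Real.rpow_neg hb.le, ← Real.rpow_add hb]
    congr 1; ring
  rw [hsplit]
  set G := Real.Gamma ((d : ℝ) / 2)
  set H := Real.Gamma (((d : ℝ) + 1) / 2)
  set B := (d / 2 : ℝ) ^ (-(d : ℝ) / 2)
  calc _ = (K * (B * (1 / 2) * G)) * (√(2 / d) * (H / G)) := by field_simp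
    _ = _ := by rw [← h0, one_mul]

lemma int_sq (v : NNReal) : Integrable (fun x : ℝ => x ^ 2) (gaussianReal 0 v) :=
  (memLp_id_gaussianReal 2).integrable_sq

lemma var_norm (d : ℕ) (hd : 0 < d) :
    variance (fun w : Fin d → ℝ => Real.sqrt (∑ j, w j ^ 2)) (gaussianVec d)
      = (1 / d) * ((d : ℝ)
          - 2 * (Real.Gamma (((d : ℝ) + 1) / 2)) ^ 2 / (Real.Gamma ((d : ℝ) / 2)) ^ 2) := by
  have hdr : (0 : ℝ) < d := by exact_mod_cast hd
  have hsq : ∀ w : Fin d → ℝ, √(∑ j, w j ^ 2) ^ 2 = ∑ j, w j ^ 2 := fun w =>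
    Real.sq_sqrt (Finset.sum_nonneg fun i _ => sq_nonneg _)
  have hi : ∀ j : Fin d, Integrable (fun w : Fin d → ℝ => w j ^ 2) (gaussianVec d) := by
    intro j
    exact integrable_comp_eval (μ := fun _ : Fin d => gaussianReal 0 (d : NNReal)⁻¹)
      (f := fun x : ℝ => x ^ 2) (int_sq _)
  have hm : MemLp (fun w : Fin d → ℝ => √(∑ j, w j ^ 2)) 2 (gaussianVec d) := by
    rw [memLp_two_iff_integrable_sq]
    · simp_rw [hsq]
      exact integrable_finsetSum _ fun j _ => hi j
    · exact Measurable.aestronglyMeasurable (by fun_prop)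
  have h2 : ∀ j : Fin d, ∫ w, w j ^ 2 ∂(gaussianVec d) = (d : ℝ)⁻¹ := by
    intro j
    have := integral_comp_eval (μ := fun _ : Fin d => gaussianReal 0 (d : NNReal)⁻¹) (i := j)
      (f := fun x : ℝ => x ^ 2) (int_sq _).aestronglyMeasurable
    unfold gaussianVec
    rw [this]
    have hv := variance_id_gaussianReal (μ := 0) (v := (d : NNReal)⁻¹)
    rw [variance_eq_sub (memLp_id_gaussianReal 2)] at hv
    simpa using hv
  rw [variance_eq_sub hm, mean_norm d hd]
  simp only [Pi.pow_apply]
  simp_rw [hsq]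
  rw [integral_finsetSum _ fun j _ => hi j]
  simp_rw [h2]
  rw [mul_pow, Real.sq_sqrt (by positivity)]
  simp
  field_simp

/-- **Variance bound for the norm of a Gaussian vector.**
For every positive integer `d`, `d − 2 (Γ((d+1)/2)/Γ(d/2))² ≤ 1/2`; equivalently,
if `w ∈ ℝ^d` has i.i.d. `N(0, 1/d)` coordinates, then
`Var(‖w‖₂) = (1/d)(d − 2 Γ((d+1)/2)²/Γ(d/2)²) ≤ 1/(2d)`. -/
theorem gaussian_norm_variance_bound (d : ℕ) (hd : 0 < d) :
    (d : ℝ) - 2 * (Real.Gamma (((d : ℝ) + 1) / 2) / Real.Gamma ((d : ℝ) / 2)) ^ 2 ≤ 1 / 2 ∧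
    variance (fun w : Fin d → ℝ => Real.sqrt (∑ j, w j ^ 2)) (gaussianVec d)
      = (1 / d) * ((d : ℝ)
          - 2 * (Real.Gamma (((d : ℝ) + 1) / 2)) ^ 2 / (Real.Gamma ((d : ℝ) / 2)) ^ 2) ∧
    variance (fun w : Fin d → ℝ => Real.sqrt (∑ j, w j ^ 2)) (gaussianVec d)
      ≤ 1 / (2 * d) := by
  have hb := gamma_bound d hd
  refine ⟨hb, var_norm d hd, ?_⟩
  rw [var_norm d hd]
  rw [div_pow, ← mul_div_assoc] at hb
  calc _ ≤ 1 / (d : ℝ) * (1 / 2) := by gcongr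
    _ = _ := by rw [one_div_mul_one_div, mul_comm]

end
end
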